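/- arXiv:cs/0606062 — 2 statements merged into one kernel-verified Lean document; each statement's English description precedes it below -/
import Mathlib

section
/- Over unordered unranked Σ-trees, MSO and the counting μ-calculus C_μ over the single binary relation ≺_ch (child) have precisely the same expressive power with respect to Boolean queries. -/
/-!
The two directions are proved separately.

From `C_μ` to MSO, `CMu.tr` is the standard translation; a least fixed point becomes a universal
set quantifier over subsets of the domain. Nodes outside the domain are harmless because the value
of a formula on a child-closed set depends only on the valuation there (`CMu.sem_local`).

From MSO to `C_μ`, the intermediate notion is a recognizer (`Rcg`): a bottom-up automaton whose
states form a finite aperiodic commutative monoid, the state of a node being a function of its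
label, of the set parameters containing it, and of the sum of the states of its children.
Recognizable properties are closed under negation, conjunction (product monoid, `Recog.and`) and
existential quantification of a set parameter (powerset monoid, `Recog.ex`). The point of the last
closure is that the powerset of a finite aperiodic commutative monoid is again aperiodic
(`Aper.pset`): in a long sum some summand occurs so often that repeating it once more changes
nothing. The atoms are all instances of "some `p`-node has a `q`-node below or at it"
(`Recog.desc`), and first-order quantifiers reduce to set quantifiers over singletons
(`Recog.singleton`). Hence every MSO formula is recognizable (`recog_of_mso`).

By aperiodicity, the sum of the states of the children depends only on how many children carry
each state, counted up to a threshold `N`, and this is expressible with counting modalities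
positively in the state predicates (`bodyF`, `mem_bodyF`). The resulting system of mutually
recursive equations, one per state, is turned into nested single fixed points (`solF`). As the
recursion is guarded and trees are well-founded, the state predicates are the only fixed point, so
each nested formula denotes its state (`mem_solF`).
-/

namespace UnrankedTrees

/-! ### Unranked trees: tree domains and ordered unranked Σ-trees.
Nodes are finite strings over ℕ; a tree domain is a finite prefix-closed set
of nodes such that `s ++ [i] ∈ D` implies `s ++ [j] ∈ D` for all `j < i`. -/

abbrev Node : Type := List ℕ

/-- An ordered unranked tree over alphabet `A`: a tree domain with a labeling. -/
structure UTree (A : Type) where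
  dom : Finset Node
  nil_mem : ([] : Node) ∈ dom
  prefix_closed : ∀ ⦃s t : Node⦄, s ∈ dom → t <+: s → t ∈ dom
  sib_closed : ∀ ⦃s : Node⦄ ⦃i j : ℕ⦄, s ++ [i] ∈ dom → j < i → s ++ [j] ∈ dom
  label : Node → A

namespace UTree

variable {A : Type}

/-- The child relation `≺_ch`. -/
def childR (T : UTree A) (s t : Node) : Prop :=
  s ∈ T.dom ∧ t ∈ T.dom ∧ ∃ i : ℕ, t = s ++ [i]

/-- The descendant-or-self relation `≺*_ch` (the prefix relation). -/
def descR (T : UTree A) (s t : Node) : Prop :=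
  s ∈ T.dom ∧ t ∈ T.dom ∧ s <+: t

/-- The next-sibling relation `≺_ns`. -/
def nsR (T : UTree A) (s t : Node) : Prop :=
  s ∈ T.dom ∧ t ∈ T.dom ∧ ∃ (u : Node) (i : ℕ), s = u ++ [i] ∧ t = u ++ [i + 1]

/-- The sibling ordering `≺*_ns` (reflexive-transitive closure of next-sibling). -/
def sibR (T : UTree A) (s t : Node) : Prop :=
  s ∈ T.dom ∧ t ∈ T.dom ∧ ∃ (u : Node) (i j : ℕ), s = u ++ [i] ∧ t = u ++ [j] ∧ i ≤ j

/-- The first-child relation `≺_fc`. -/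
def firstChildR (T : UTree A) (s t : Node) : Prop :=
  s ∈ T.dom ∧ t ∈ T.dom ∧ t = s ++ [0]

/-- The number of children of a node. -/
noncomputable def childCount (T : UTree A) (s : Node) : ℕ :=
  Set.ncard {i : ℕ | s ++ [i] ∈ T.dom}

/-- The list of children of a node `s`, in sibling order: `s·0, …, s·(n-1)`. -/
noncomputable def childrenList (T : UTree A) (s : Node) : List Node :=
  (List.range (T.childCount s)).map fun i => s ++ [i]

/-- `s` is a leaf of `T`. -/
def isLeaf (T : UTree A) (s : Node) : Prop :=
  s ∈ T.dom ∧ ∀ i : ℕ, s ++ [i] ∉ T.dom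

/-- `s` has no next sibling in `T` (the root also counts as "last"). -/
def isLast (T : UTree A) (s : Node) : Prop :=
  s = [] ∨ ∃ (u : Node) (i : ℕ), s = u ++ [i] ∧ u ++ [i + 1] ∉ T.dom

end UTree

/-! ### MSO over *unordered* unranked trees (no sibling order in the
vocabulary: atoms are x = y, x ≺*_ch y, P_a(x), X(x)). -/

inductive MSOu (A : Type) : Type where
  | eq : ℕ → ℕ → MSOu A
  | desc : ℕ → ℕ → MSOu A
  | lab : A → ℕ → MSOu A
  | mem : ℕ → ℕ → MSOu A
  | not : MSOu A → MSOu A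
  | and : MSOu A → MSOu A → MSOu A
  | exFO : ℕ → MSOu A → MSOu A
  | exSO : ℕ → MSOu A → MSOu A

namespace MSOu

variable {A : Type}

def Sat (T : UTree A) (v : ℕ → Node) (V : ℕ → Set Node) : MSOu A → Prop
  | .eq x y => v x = v y
  | .desc x y => T.descR (v x) (v y)
  | .lab a x => v x ∈ T.dom ∧ T.label (v x) = a
  | .mem X x => v x ∈ V X
  | .not φ => ¬ Sat T v V φ
  | .and φ ψ => Sat T v V φ ∧ Sat T v V ψ
  | .exFO n φ => ∃ s ∈ T.dom, Sat T (Function.update v n s) V φ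
  | .exSO n φ => ∃ S : Set Node, S ⊆ ↑T.dom ∧ Sat T v (Function.update V n S) φ

def DefinesB (φ : MSOu A) (L : Set (UTree A)) : Prop :=
  ∀ (T : UTree A) (v : ℕ → Node) (V : ℕ → Set Node), T ∈ L ↔ Sat T v V φ

def DefinesU (φ : MSOu A) (Q : UTree A → Set Node) : Prop :=
  ∀ (T : UTree A) (v : ℕ → Node) (V : ℕ → Set Node) (s : Node), s ∈ T.dom →
    (s ∈ Q T ↔ Sat T (Function.update v 0 s) V φ)

end MSOu

/-! ### The counting μ-calculus over the child relation. -/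

inductive CMu (A : Type) : Type where
  | lab : A → CMu A
  | var : ℕ → CMu A
  | or : CMu A → CMu A → CMu A
  | not : CMu A → CMu A
  | dia : CMu A → CMu A                  -- ◇(≺_ch) φ
  | diaGe : ℕ → CMu A → CMu A            -- ◇^{≥ k+1}(≺_ch) φ  (so k+1 ≥ 1)
  | mu : ℕ → CMu A → CMu A

namespace CMu

variable {A : Type}

def pol (n : ℕ) : CMu A → Bool → Prop
  | .lab _, _ => True
  | .var k, b => b = true ∨ k ≠ n
  | .or φ ψ, b => pol n φ b ∧ pol n ψ b
  | .not φ, b => pol n φ (!b)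
  | .dia φ, b => pol n φ b
  | .diaGe _ φ, b => pol n φ b
  | .mu k φ, b => k = n ∨ pol n φ b

def WF : CMu A → Prop
  | .lab _ => True
  | .var _ => True
  | .or φ ψ => WF φ ∧ WF ψ
  | .not φ => WF φ
  | .dia φ => WF φ
  | .diaGe _ φ => WF φ
  | .mu k φ => pol k φ true ∧ WF φ

/-- Semantics; `◇^{≥k}φ` holds at `s` iff there are at least `k` distinct
children of `s` satisfying `φ`. -/
def sem (T : UTree A) (V : ℕ → Set Node) : CMu A → Set Node
  | .lab a => {s | s ∈ T.dom ∧ T.label s = a}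
  | .var n => V n
  | .or φ ψ => sem T V φ ∪ sem T V ψ
  | .not φ => {s | s ∈ T.dom ∧ s ∉ sem T V φ}
  | .dia φ => {s | s ∈ T.dom ∧ ∃ t : Node, T.childR s t ∧ t ∈ sem T V φ}
  | .diaGe k φ =>
      {s | s ∈ T.dom ∧ k + 1 ≤ Set.ncard {t : Node | T.childR s t ∧ t ∈ sem T V φ}}
  | .mu n φ =>
      {s | ∀ P : Set Node, sem T (Function.update V n P) φ ⊆ P → s ∈ P}

end CMu

/-! ### From the counting μ-calculus to MSO -/

section MuToMSO

variable {A : Type}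

/-- The value of a formula on a child-closed set `D` depends only on the valuation within `D`. -/
theorem CMu.sem_local (T : UTree A) (D : Set Node)
    (hD : ∀ s ∈ D, ∀ t, T.childR s t → t ∈ D) (φ : CMu A) :
    ∀ V V' : ℕ → Set Node, (∀ n, ∀ s ∈ D, s ∈ V n ↔ s ∈ V' n) →
      ∀ s ∈ D, s ∈ φ.sem T V ↔ s ∈ φ.sem T V' := by
  induction φ with
  | lab a => intro V V' h s hs; rfl
  | var n => intro V V' h s hs; exact h n s hs
  | or φ ψ ihφ ihψ =>
    intro V V' h s hs
    simp only [CMu.sem, Set.mem_union, ihφ V V' h s hs, ihψ V V' h s hs]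
  | not φ ih =>
    intro V V' h s hs
    simp only [CMu.sem, Set.mem_ofPred_eq, ih V V' h s hs]
  | dia φ ih =>
    intro V V' h s hs
    simp only [CMu.sem, Set.mem_ofPred_eq]
    refine and_congr_right fun _ => exists_congr fun t => and_congr_right fun ht => ?_
    exact ih V V' h t (hD s hs t ht)
  | diaGe k φ ih =>
    intro V V' h s hs
    simp only [CMu.sem, Set.mem_ofPred_eq]
    have : {t | T.childR s t ∧ t ∈ φ.sem T V} = {t | T.childR s t ∧ t ∈ φ.sem T V'} := by
      ext t
      exact and_congr_right fun ht => ih V V' h t (hD s hs t ht)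
    rw [this]
  | mu n φ ih =>
    have key : ∀ V V' : ℕ → Set Node, (∀ n, ∀ s ∈ D, s ∈ V n ↔ s ∈ V' n) →
        ∀ s ∈ D, s ∈ (CMu.mu n φ).sem T V → s ∈ (CMu.mu n φ).sem T V' := by
      intro V V' h s hs hV P hP
      -- a prefixed point for `V'` becomes one for `V` once everything outside `D` is added
      have := hV (P ∪ Dᶜ) ?_
      · rcases this with h1 | h1
        · exact h1
        · exact absurd hs h1
      · intro u hu
        by_cases huD : u ∈ D
        · left
          apply hP
          refine (ih _ _ ?_ u huD).1 hu
          intro m w hw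
          by_cases hm : m = n
          · subst hm
            simp [hw]
          · simp [hm, h m w hw]
        · right; exact huD
    intro V V' h s hs
    exact ⟨key V V' h s hs, key V' V (fun n s hs => (h n s hs).symm) s hs⟩

namespace MSOu

/-- `y` is a child of `x`. The auxiliary variable `x + y + 1` is distinct from both. -/
def childF (x y : ℕ) : MSOu A :=
  .and (.desc x y) (.and (.not (.eq x y))
    (.not (.exFO (x + y + 1) (.and (.and (.desc x (x + y + 1)) (.desc (x + y + 1) y))
      (.and (.not (.eq x (x + y + 1))) (.not (.eq (x + y + 1) y)))))))

/-- `y` differs from each of the `d` variables `x + 1, …, x + d`. -/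
def freshF (x y : ℕ) : ℕ → MSOu A
  | 0 => .eq x x
  | d + 1 => .and (.not (.eq (x + 1 + d) y)) (freshF x y d)

/-- At least `k` children of `x`, none among the variables `x + 1, …, x + d`, satisfy `ψ`. -/
def geF (x : ℕ) (ψ : ℕ → MSOu A) : ℕ → ℕ → MSOu A
  | 0, _ => .eq x x
  | k + 1, d => .exFO (x + 1 + d) (.and (.and (childF x (x + 1 + d)) (ψ (x + 1 + d)))
      (.and (freshF x (x + 1 + d) d) (geF x ψ k (d + 1))))

theorem sat_childF {T : UTree A} {v V} {x y : ℕ} :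
    Sat T v V (childF x y) ↔ T.childR (v x) (v y) := by
  have hx : x ≠ x + y + 1 := by omega
  have hy : y ≠ x + y + 1 := by omega
  simp only [childF, Sat, Function.update_self, Function.update_of_ne hx, Function.update_of_ne hy,
    UTree.descR, UTree.childR]
  constructor
  · rintro ⟨⟨h1, h2, r, hr⟩, hne, h3⟩
    refine ⟨h1, h2, ?_⟩
    cases r with
    | nil => simp at hr; exact absurd hr hne
    | cons i r =>
      cases r with
      | nil => exact ⟨i, hr.symm⟩
      | cons j r =>
        exfalso
        apply h3
        have hp : v x ++ [i] <+: v y := ⟨j :: r, by simp [← hr]⟩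
        have hd := T.prefix_closed h2 hp
        refine ⟨v x ++ [i], hd, ⟨⟨h1, hd, by simp⟩, hd, h2, hp⟩, by simp, ?_⟩
        rw [← hr]; simp
  · rintro ⟨h1, h2, i, hi⟩
    refine ⟨⟨h1, h2, by simp [hi]⟩, by simp [hi], ?_⟩
    rintro ⟨s, hs, ⟨⟨-, -, h4⟩, -, -, h5⟩, h6, h7⟩
    have l1 := h4.length_le
    have l2 := h5.length_le
    have l3 : (v y).length = (v x).length + 1 := by simp [hi]
    by_cases hl : s.length = (v x).length
    · exact h6 (h4.eq_of_length hl.symm)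
    · exact h7 (h5.eq_of_length (by omega))

theorem sat_freshF {T : UTree A} {v V} {x y d : ℕ} :
    Sat T v V (freshF x y d) ↔ v y ∉ {s | ∃ i < d, v (x + 1 + i) = s} := by
  induction d with
  | zero => simp [freshF, Sat]
  | succ d ih =>
    simp only [freshF, Sat, ih, Set.mem_ofPred_eq, Nat.lt_succ_iff_lt_or_eq]
    constructor
    · rintro ⟨h1, h2⟩ ⟨i, hi | rfl, h⟩
      · exact h2 ⟨i, hi, h⟩
      · exact h1 h
    · intro h
      exact ⟨fun h' => h ⟨d, Or.inr rfl, h'⟩, fun ⟨i, hi, h'⟩ => h ⟨i, Or.inl hi, h'⟩⟩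

theorem sat_geF {T : UTree A} {V} {x : ℕ} {ψ : ℕ → MSOu A} {X : Set Node}
    (hψ : ∀ (v : ℕ → Node) (y : ℕ), v y ∈ T.dom → (Sat T v V (ψ y) ↔ v y ∈ X)) (k : ℕ) :
    ∀ (d : ℕ) (v : ℕ → Node), Sat T v V (geF x ψ k d) ↔
      k ≤ Set.ncard ({t | T.childR (v x) t ∧ t ∈ X} \ {s | ∃ i < d, v (x + 1 + i) = s}) := by
  induction k with
  | zero => intro d v; simp [geF, Sat]
  | succ k ih =>
    intro d v
    have hx : x ≠ x + 1 + d := by omega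
    simp only [geF, Sat]
    have hset : ∀ s, {u | ∃ i < d, Function.update v (x + 1 + d) s (x + 1 + i) = u}
        = {u | ∃ i < d, v (x + 1 + i) = u} := by
      intro s; ext u
      refine exists_congr fun i => and_congr_right fun hi => ?_
      rw [Function.update_of_ne (by omega)]
    have hset2 : ∀ s, {u | ∃ i < d + 1, Function.update v (x + 1 + d) s (x + 1 + i) = u}
        = insert s {u | ∃ i < d, v (x + 1 + i) = u} := by
      intro s
      rw [← hset s]
      ext u
      simp only [Set.mem_ofPred_eq, Set.mem_insert_iff, Nat.lt_succ_iff_lt_or_eq]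
      constructor
      · rintro ⟨i, hi | rfl, h⟩
        · exact Or.inr ⟨i, hi, h⟩
        · left; simpa using h.symm
      · rintro (rfl | ⟨i, hi, h⟩)
        · exact ⟨d, Or.inr rfl, by simp⟩
        · exact ⟨i, Or.inl hi, h⟩
    set E := {u | ∃ i < d, v (x + 1 + i) = u} with hE
    set C := {t | T.childR (v x) t ∧ t ∈ X} with hC
    have hfin : (C \ E).Finite :=
      (T.dom.finite_toSet.subset (fun t ht => ht.1.2.1)).subset Set.sdiff_subset
    have hins : ∀ s, C \ insert s E = (C \ E) \ {s} := by
      intro s; ext u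
      simp only [Set.mem_sdiff, Set.mem_insert_iff, Set.mem_singleton_iff]; tauto
    constructor
    · rintro ⟨s, hs, ⟨h1, h2⟩, h3, h4⟩
      rw [ih, hset2, Function.update_of_ne hx, hins] at h4
      rw [hψ _ _ (by simpa using hs), Function.update_self] at h2
      rw [sat_childF, Function.update_self, Function.update_of_ne hx] at h1
      rw [sat_freshF, hset, Function.update_self] at h3
      have := Set.ncard_sdiff_singleton_add_one (s := C \ E) (a := s) ⟨⟨h1, h2⟩, h3⟩ hfin
      omega
    · intro h
      obtain ⟨s, hs⟩ : (C \ E).Nonempty := by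
        by_contra hne
        rw [Set.not_nonempty_iff_eq_empty] at hne
        simp [hne] at h
      have := Set.ncard_sdiff_singleton_add_one hs hfin
      have hsd : s ∈ T.dom := hs.1.1.2.1
      refine ⟨s, hsd, ⟨?_, ?_⟩, ?_, ?_⟩
      · rw [sat_childF, Function.update_self, Function.update_of_ne hx]; exact hs.1.1
      · rw [hψ _ _ (by simpa using hsd), Function.update_self]; exact hs.1.2
      · rw [sat_freshF, hset, Function.update_self]; exact hs.2
      · rw [ih, hset2, Function.update_of_ne hx]
        change _ ≤ Set.ncard (C \ insert s E)
        rw [hins]; omega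

end MSOu

/-- The standard translation: `tr φ x` says that `φ` holds at the node `x`. -/
def CMu.tr : CMu A → ℕ → MSOu A
  | .lab a, x => .lab a x
  | .var n, x => .mem n x
  | .or φ ψ, x => .not (.and (.not (tr φ x)) (.not (tr ψ x)))
  | .not φ, x => .not (tr φ x)
  | .dia φ, x => MSOu.geF x (tr φ) 1 0
  | .diaGe k φ, x => MSOu.geF x (tr φ) (k + 1) 0
  | .mu n φ, x => .not (.exSO n (.and
      (.not (.exFO (x + 1) (.and (tr φ (x + 1)) (.not (.mem n (x + 1)))))) (.not (.mem n x))))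

theorem CMu.sat_tr (T : UTree A) (φ : CMu A) : ∀ (V V' : ℕ → Set Node),
    (∀ n, ∀ s ∈ T.dom, s ∈ V n ↔ s ∈ V' n) → ∀ (v : ℕ → Node) (x : ℕ), v x ∈ T.dom →
      (MSOu.Sat T v V' (φ.tr x) ↔ v x ∈ φ.sem T V) := by
  induction φ with
  | lab a => intro V V' h v x hx; rfl
  | var n => intro V V' h v x hx; exact (h n _ hx).symm
  | or φ ψ ihφ ihψ =>
    intro V V' h v x hx
    simp only [CMu.tr, MSOu.Sat, CMu.sem, Set.mem_union, ihφ V V' h v x hx, ihψ V V' h v x hx]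
    tauto
  | not φ ih =>
    intro V V' h v x hx
    simp only [CMu.tr, MSOu.Sat, CMu.sem, Set.mem_ofPred_eq, ih V V' h v x hx, hx, true_and]
  | dia φ ih =>
    intro V V' h v x hx
    rw [CMu.tr, MSOu.sat_geF (fun w y hy => ih V V' h w y hy)]
    simp only [CMu.sem, Set.mem_ofPred_eq, hx, true_and]
    have hfin : {t | T.childR (v x) t ∧ t ∈ φ.sem T V}.Finite :=
      T.dom.finite_toSet.subset (fun t ht => ht.1.2.1)
    simp only [Nat.not_lt_zero, false_and, exists_false, Set.ofPred_false, Set.sdiff_empty]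
    rw [Nat.one_le_iff_ne_zero, ← Nat.pos_iff_ne_zero, Set.ncard_pos hfin]
    rfl
  | diaGe k φ ih =>
    intro V V' h v x hx
    rw [CMu.tr, MSOu.sat_geF (fun w y hy => ih V V' h w y hy)]
    simp only [CMu.sem, Set.mem_ofPred_eq, hx, true_and]
    simp only [Nat.not_lt_zero, false_and, exists_false, Set.ofPred_false, Set.sdiff_empty]
  | mu n φ ih =>
    intro V V' h v x hx
    have hne : x ≠ x + 1 := by omega
    simp only [CMu.tr, MSOu.Sat, CMu.sem, Set.mem_ofPred_eq, Function.update_self]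
    have hag : ∀ P S : Set Node, (∀ s ∈ T.dom, s ∈ P ↔ s ∈ S) → ∀ m, ∀ s ∈ T.dom,
        s ∈ Function.update V n P m ↔ s ∈ Function.update V' n S m := by
      intro P S hPS m s hs
      by_cases hm : m = n
      · subst hm; simpa using hPS s hs
      · simpa [hm] using h m s hs
    constructor
    · intro hS P hP
      by_contra hxP
      refine hS ⟨P ∩ T.dom, Set.inter_subset_right, ?_, fun hh => hxP hh.1⟩
      rintro ⟨s, hs, h1, h2⟩
      rw [ih _ _ (hag P (P ∩ T.dom) (fun s hs => by simp [hs])) _ _ (by simpa using hs),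
        Function.update_self] at h1
      exact h2 ⟨hP h1, hs⟩
    · rintro hP ⟨S, hS, h1, h2⟩
      -- outside the domain the translation is silent, so those nodes are added to `S`
      have hmem := hP (S ∪ (↑T.dom : Set Node)ᶜ) ?_
      · rcases hmem with h3 | h3
        · exact h2 h3
        · exact h3 hx
      · intro u hu
        by_cases hud : u ∈ T.dom
        · left
          by_contra huS
          refine h1 ⟨u, hud, ?_, huS⟩
          rw [ih _ _ (hag (S ∪ (↑T.dom : Set Node)ᶜ) S (fun s hs => by simp [hs])) _ _
            (by simpa using hud), Function.update_self]
          exact hu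
        · right; simpa using hud

theorem exists_mso_of_mu (L : Set (UTree A)) (φ : CMu A)
    (hφ : ∀ (T : UTree A) (V : ℕ → Set Node), T ∈ L ↔ ([] : Node) ∈ φ.sem T V) :
    ∃ ψ : MSOu A, ψ.DefinesB L := by
  refine ⟨.exFO 0 (.and (.not (.exFO 1 (.not (.desc 0 1)))) (φ.tr 0)), fun T v V => ?_⟩
  rw [hφ T V]
  simp only [MSOu.Sat]
  constructor
  · intro h
    refine ⟨[], T.nil_mem, ?_, ?_⟩
    · rintro ⟨t, ht, h2⟩
      exact h2 ⟨T.nil_mem, by simpa using ht, by simp⟩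
    · rw [CMu.sat_tr T φ V V (fun _ _ _ => Iff.rfl) _ _ (by simpa using T.nil_mem)]
      simpa using h
  · rintro ⟨s, hs, h1, h2⟩
    have : s = [] := by
      by_contra hne
      apply h1
      refine ⟨[], T.nil_mem, ?_⟩
      rintro ⟨-, -, h3⟩
      simp at h3
      exact hne h3
    subst this
    rw [CMu.sat_tr T φ V V (fun _ _ _ => Iff.rfl) _ _ (by simpa using hs)] at h2
    simpa using h2

end MuToMSO

/-! ### Finite aperiodic recognizers and their values on trees -/

section Recognizers

open Classical in
/-- The finite set of children of `s`. -/
noncomputable def UTree.ch {A : Type} (T : UTree A) (s : Node) : Finset Node :=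
  T.dom.filter fun t => ∃ i : ℕ, t = s ++ [i]

/-- Names of set parameters: `inl x` for a first-order variable (coded by the singleton of its
value), `inr X` for a set variable. -/
abbrev Key : Type := ℕ ⊕ ℕ

/-- A commutative monoid is aperiodic if the multiples of each element are eventually constant. -/
def Aper (M : Type) [AddCommMonoid M] : Prop := ∀ m : M, ∃ n : ℕ, (n + 1) • m = n • m

/-- A bottom-up tree automaton whose states form a finite aperiodic commutative monoid: the state
of a node is computed from its label, the set of parameters it belongs to, and the *sum* of the
states of its children. -/
structure Rcg (A : Type) where
  M : Type
  acm : AddCommMonoid M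
  fin : Finite M
  aper : Aper M
  δ : A → Set Key → M → M

attribute [instance] Rcg.acm Rcg.fin

variable {A : Type}

theorem UTree.mem_ch {T : UTree A} {s t : Node} :
    t ∈ T.ch s ↔ t ∈ T.dom ∧ ∃ i : ℕ, t = s ++ [i] := by
  simp [UTree.ch]

theorem UTree.childR_iff {T : UTree A} {s t : Node} :
    T.childR s t ↔ s ∈ T.dom ∧ t ∈ T.ch s := by
  rw [UTree.mem_ch]; rfl

theorem UTree.prefix_of_mem_ch {T : UTree A} {s t : Node} (h : t ∈ T.ch s) : s <+: t := by
  obtain ⟨-, i, rfl⟩ := UTree.mem_ch.1 h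
  simp

theorem UTree.length_of_mem_ch {T : UTree A} {s t : Node} (h : t ∈ T.ch s) :
    t.length = s.length + 1 := by
  obtain ⟨-, i, rfl⟩ := UTree.mem_ch.1 h
  simp

theorem UTree.ch_wf (T : UTree A) : WellFounded (fun t s => t ∈ T.ch s) := by
  refine Subrelation.wf (r := InvImage (· < ·) fun s => (T.dom.sup List.length + 1) - s.length)
    ?_ (InvImage.wf _ Nat.lt_wfRel.wf)
  intro t s h
  have h1 := UTree.length_of_mem_ch h
  have h2 : t.length ≤ T.dom.sup List.length :=
    Finset.le_sup (f := List.length) (UTree.mem_ch.1 h).1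
  simp only [InvImage]
  omega

/-- Every node of the subtree at `s` is `s` itself or lies in the subtree of a child of `s`. -/
theorem UTree.prefix_cases {T : UTree A} {s u : Node} (hu : u ∈ T.dom) (h : s <+: u) :
    u = s ∨ ∃ t ∈ T.ch s, t <+: u := by
  obtain ⟨r, rfl⟩ := h
  cases r with
  | nil => left; simp
  | cons i r =>
    right
    have hp : s ++ [i] <+: s ++ i :: r := ⟨r, by simp⟩
    exact ⟨s ++ [i], UTree.mem_ch.2 ⟨T.prefix_closed hu hp, i, rfl⟩, hp⟩

/-- The subtrees at distinct children of `s` are disjoint. -/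
theorem UTree.ch_unique {T : UTree A} {s t t' u : Node} (ht : t ∈ T.ch s) (ht' : t' ∈ T.ch s)
    (h : t <+: u) (h' : t' <+: u) : t = t' := by
  have := List.prefix_of_prefix_length_le h h'
    (by rw [UTree.length_of_mem_ch ht, UTree.length_of_mem_ch ht'])
  exact this.eq_of_length (by rw [UTree.length_of_mem_ch ht, UTree.length_of_mem_ch ht'])

/-- The state reached at node `s`. -/
noncomputable def Rcg.val (R : Rcg A) (T : UTree A) (W : Key → Set Node) : Node → R.M :=
  T.ch_wf.fix fun s rec =>
    R.δ (T.label s) {k | s ∈ W k} (∑ t ∈ (T.ch s).attach, rec t.1 t.2)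

theorem Rcg.val_eq (R : Rcg A) (T : UTree A) (W : Key → Set Node) (s : Node) :
    R.val T W s = R.δ (T.label s) {k | s ∈ W k} (∑ t ∈ T.ch s, R.val T W t) := by
  rw [Rcg.val, WellFounded.fix_eq]
  congr 1
  exact Finset.sum_attach (T.ch s) (fun t => R.val T W t)

/-- The state at `s` depends only on the parameters within the subtree at `s`. -/
theorem Rcg.val_congr (R : Rcg A) (T : UTree A) (W W' : Key → Set Node) (s : Node) :
    s ∈ T.dom → (∀ u ∈ T.dom, s <+: u → ∀ k, u ∈ W k ↔ u ∈ W' k) →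
      R.val T W s = R.val T W' s := by
  induction s using T.ch_wf.induction with
  | _ s ih =>
    intro hs h
    rw [Rcg.val_eq, Rcg.val_eq]
    congr 1
    · ext k; exact h s hs (List.prefix_refl s) k
    · refine Finset.sum_congr rfl fun t ht => ?_
      exact ih t ht (UTree.mem_ch.1 ht).1 fun u hu htu =>
        h u hu ((UTree.prefix_of_mem_ch ht).trans htu)

/-- A property of trees with set parameters is recognizable if it can be read off from the root
state of some recognizer. -/
def Recog (P : UTree A → (Key → Set Node) → Prop) : Prop :=
  ∃ (R : Rcg A) (F : Set R.M), ∀ T W, P T W ↔ R.val T W [] ∈ F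

theorem Recog.congr {P Q : UTree A → (Key → Set Node) → Prop} (hP : Recog P)
    (h : ∀ T W, Q T W ↔ P T W) : Recog Q := by
  obtain ⟨R, F, hR⟩ := hP
  exact ⟨R, F, fun T W => (h T W).trans (hR T W)⟩

theorem Recog.not {P : UTree A → (Key → Set Node) → Prop} (hP : Recog P) :
    Recog fun T W => ¬ P T W := by
  obtain ⟨R, F, hR⟩ := hP
  exact ⟨R, Fᶜ, fun T W => not_congr (hR T W)⟩

/-- In a finite aperiodic monoid the multiples of all elements stabilize simultaneously. -/
theorem Aper.uniform {M : Type} [AddCommMonoid M] [Finite M] (h : Aper M) :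
    ∃ N : ℕ, ∀ m : M, ∀ c, N ≤ c → c • m = N • m := by
  have := Fintype.ofFinite M
  choose n hn using h
  refine ⟨Finset.univ.sup n, fun m c hc => ?_⟩
  have stab : ∀ d, n m ≤ d → d • m = n m • m := by
    intro d hd
    induction d, hd using Nat.le_induction with
    | base => rfl
    | succ d _ ih => rw [succ_nsmul, ih, ← succ_nsmul, hn]
  have h1 : n m ≤ Finset.univ.sup n := Finset.le_sup (Finset.mem_univ m)
  rw [stab c (h1.trans hc), stab _ h1]

theorem Aper.prod {M M' : Type} [AddCommMonoid M] [Finite M] [AddCommMonoid M'] [Finite M']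
    (h : Aper M) (h' : Aper M') : Aper (M × M') := by
  obtain ⟨N, hN⟩ := h.uniform
  obtain ⟨N', hN'⟩ := h'.uniform
  rintro ⟨m, m'⟩
  refine ⟨max N N', ?_⟩
  ext
  · simp only [Prod.smul_fst]
    rw [hN m _ (by omega), hN m (max N N') (by omega)]
  · simp only [Prod.smul_snd]
    rw [hN' m' _ (by omega), hN' m' (max N N') (by omega)]

/-- The product of two recognizers. -/
def Rcg.prod (R R' : Rcg A) : Rcg A where
  M := R.M × R'.M
  acm := inferInstance
  fin := inferInstance
  aper := R.aper.prod R'.aper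
  δ a K m := (R.δ a K m.1, R'.δ a K m.2)

theorem Rcg.prod_val (R R' : Rcg A) (T : UTree A) (W : Key → Set Node) (s : Node) :
    (R.prod R').val T W s = (R.val T W s, R'.val T W s) := by
  induction s using T.ch_wf.induction with
  | _ s ih =>
    rw [Rcg.val_eq, Rcg.val_eq R, Rcg.val_eq R', Finset.sum_congr rfl ih]
    have h1 : (∑ t ∈ T.ch s, ((R.val T W t, R'.val T W t) : R.M × R'.M)).1
        = ∑ t ∈ T.ch s, R.val T W t := Prod.fst_sum
    have h2 : (∑ t ∈ T.ch s, ((R.val T W t, R'.val T W t) : R.M × R'.M)).2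
        = ∑ t ∈ T.ch s, R'.val T W t := Prod.snd_sum
    rw [← h1, ← h2]
    rfl

theorem Recog.and {P Q : UTree A → (Key → Set Node) → Prop} (hP : Recog P) (hQ : Recog Q) :
    Recog fun T W => P T W ∧ Q T W := by
  obtain ⟨R, F, hR⟩ := hP
  obtain ⟨R', F', hR'⟩ := hQ
  refine ⟨R.prod R', {m : R.M × R'.M | m.1 ∈ F ∧ m.2 ∈ F'}, fun T W => ?_⟩
  rw [Rcg.prod_val]
  exact and_congr (hR T W) (hR' T W)

/-- `Prop` as a monoid under disjunction. -/
def OrP : Type := Prop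

/-- The proposition underlying an element of `OrP`. -/
def OrP.Holds (p : OrP) : Prop := p

instance : AddCommMonoid OrP where
  add p q := (p.Holds ∨ q.Holds : Prop)
  zero := (False : Prop)
  add_assoc _ _ _ := propext or_assoc
  zero_add p := false_or p.Holds
  add_zero p := or_false p.Holds
  add_comm _ _ := propext or_comm
  nsmul := @nsmulRec OrP ⟨(False : Prop)⟩ ⟨fun p q => (p.Holds ∨ q.Holds : Prop)⟩

instance : Finite OrP := inferInstanceAs (Finite Prop)

theorem OrP.sum_iff {ι : Type} (s : Finset ι) (f : ι → OrP) :
    OrP.Holds (∑ i ∈ s, f i) ↔ ∃ i ∈ s, OrP.Holds (f i) := by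
  classical
  induction s using Finset.induction_on with
  | empty =>
    simp only [Finset.notMem_empty, false_and, exists_false, iff_false]
    exact id
  | insert a s ha ih =>
    rw [Finset.sum_insert ha, Finset.exists_mem_insert, ← ih]
    exact Iff.rfl

theorem OrP.aper : Aper OrP := by
  intro m
  refine ⟨1, ?_⟩
  rw [succ_nsmul, one_nsmul]
  exact propext (or_self_iff (a := m))

/-- Detects a node satisfying `p` with a descendant-or-self satisfying `q`. The first component of
the state says that the subtree contains a `q`-node, the second that it contains such a pair. -/
def descRcg (p q : A → Set Key → Prop) : Rcg A where
  M := OrP × OrP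
  acm := inferInstance
  fin := inferInstance
  aper := OrP.aper.prod OrP.aper
  δ a K m := ((q a K ∨ m.1.Holds : Prop), (p a K ∧ (q a K ∨ m.1.Holds) ∨ m.2.Holds : Prop))

theorem descRcg_val (p q : A → Set Key → Prop) (T : UTree A) (W : Key → Set Node) (s : Node) :
    s ∈ T.dom → ((descRcg p q).val T W s : OrP × OrP) =
      ((∃ u ∈ T.dom, s <+: u ∧ q (T.label u) {k | u ∈ W k} : Prop),
       (∃ u ∈ T.dom, ∃ w ∈ T.dom, s <+: u ∧ u <+: w ∧ p (T.label u) {k | u ∈ W k} ∧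
          q (T.label w) {k | w ∈ W k} : Prop)) := by
  induction s using T.ch_wf.induction with
  | _ s ih =>
    intro hs
    rw [Rcg.val_eq, Finset.sum_congr rfl fun t ht => ih t ht (UTree.mem_ch.1 ht).1]
    have split : ∀ Q : Node → Prop, (∃ u ∈ T.dom, s <+: u ∧ Q u) ↔
        Q s ∨ ∃ t ∈ T.ch s, ∃ u ∈ T.dom, t <+: u ∧ Q u := by
      intro Q
      constructor
      · rintro ⟨u, hu, hsu, hQ⟩
        rcases UTree.prefix_cases hu hsu with rfl | ⟨t, ht, htu⟩
        · exact Or.inl hQ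
        · exact Or.inr ⟨t, ht, u, hu, htu, hQ⟩
      · rintro (hQ | ⟨t, ht, u, hu, htu, hQ⟩)
        · exact ⟨s, hs, List.prefix_refl s, hQ⟩
        · exact ⟨u, hu, (UTree.prefix_of_mem_ch ht).trans htu, hQ⟩
    set f : Node → OrP := fun t =>
      (∃ u ∈ T.dom, t <+: u ∧ q (T.label u) {k | u ∈ W k} : Prop) with hf
    set g : Node → OrP := fun t =>
      (∃ u ∈ T.dom, ∃ w ∈ T.dom, t <+: u ∧ u <+: w ∧ p (T.label u) {k | u ∈ W k} ∧
          q (T.label w) {k | w ∈ W k} : Prop) with hg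
    have h1 : (∑ t ∈ T.ch s, ((f t, g t) : OrP × OrP)).1 = ∑ t ∈ T.ch s, f t := Prod.fst_sum
    have h2 : (∑ t ∈ T.ch s, ((f t, g t) : OrP × OrP)).2 = ∑ t ∈ T.ch s, g t := Prod.snd_sum
    have e1 : OrP.Holds (f s) ↔ q (T.label s) {k | s ∈ W k} ∨
        ∃ t ∈ T.ch s, OrP.Holds (f t) := split _
    have e2 : OrP.Holds (g s) ↔ (p (T.label s) {k | s ∈ W k} ∧ OrP.Holds (f s)) ∨
        ∃ t ∈ T.ch s, OrP.Holds (g t) := by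
      have := split fun u => ∃ w ∈ T.dom, u <+: w ∧ p (T.label u) {k | u ∈ W k} ∧
          q (T.label w) {k | w ∈ W k}
      have r : ∀ t, OrP.Holds (g t) ↔ ∃ u ∈ T.dom, t <+: u ∧ ∃ w ∈ T.dom, u <+: w ∧
          p (T.label u) {k | u ∈ W k} ∧ q (T.label w) {k | w ∈ W k} := by
        intro t
        constructor
        · rintro ⟨u, hu, w, hw, a, b⟩; exact ⟨u, hu, a, w, hw, b⟩
        · rintro ⟨u, hu, a, w, hw, b⟩; exact ⟨u, hu, w, hw, a, b⟩
      rw [r s, this]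
      refine or_congr ?_ (exists_congr fun t => and_congr_right fun _ => (r t).symm)
      constructor
      · rintro ⟨w, hw, a, b, c⟩; exact ⟨b, w, hw, a, c⟩
      · rintro ⟨b, w, hw, a, c⟩; exact ⟨w, hw, a, b, c⟩
    refine Prod.ext ?_ ?_
    · change (q _ _ ∨ (∑ t ∈ T.ch s, ((f t, g t) : OrP × OrP)).1 : Prop) = f s
      rw [h1]
      exact propext ((or_congr_right (OrP.sum_iff _ f)).trans e1.symm)
    · change (p _ _ ∧ (q _ _ ∨ (∑ t ∈ T.ch s, ((f t, g t) : OrP × OrP)).1) ∨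
        (∑ t ∈ T.ch s, ((f t, g t) : OrP × OrP)).2 : Prop) = g s
      rw [h1, h2]
      refine propext (Iff.trans (or_congr (and_congr_right fun _ => ?_) (OrP.sum_iff _ g)) e2.symm)
      exact (or_congr_right (OrP.sum_iff _ f)).trans e1.symm

theorem Recog.desc (p q : A → Set Key → Prop) :
    Recog fun (T : UTree A) W => ∃ u ∈ T.dom, ∃ w ∈ T.dom, u <+: w ∧
      p (T.label u) {k | u ∈ W k} ∧ q (T.label w) {k | w ∈ W k} := by
  refine ⟨descRcg p q, {m : OrP × OrP | m.2.Holds}, fun T W => ?_⟩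
  have h := congrArg Prod.snd (descRcg_val p q T W [] T.nil_mem)
  change _ ↔ OrP.Holds (((descRcg p q).val T W [] : OrP × OrP).2)
  rw [h]
  simp only [List.nil_prefix, true_and]
  rfl

theorem Recog.exNode (p : A → Set Key → Prop) :
    Recog fun (T : UTree A) W => ∃ u ∈ T.dom, p (T.label u) {k | u ∈ W k} :=
  (Recog.desc p fun _ _ => True).congr fun _ _ =>
    ⟨fun ⟨u, hu, h⟩ => ⟨u, hu, u, hu, List.prefix_refl u, h, trivial⟩,
     fun ⟨u, hu, _, _, _, h, _⟩ => ⟨u, hu, h⟩⟩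

end Recognizers

/-! ### Projection by the powerset construction -/

section Projection

open Pointwise

variable {A : Type}

/-- Subsets of a monoid under elementwise addition. (A type synonym, so that `n • S` is the
`n`-fold sum and not the dilation.) -/
def PSet (M : Type) : Type := Set M

/-- The set underlying an element of `PSet M`. -/
def PSet.toSet {M : Type} (S : PSet M) : Set M := S

instance (M : Type) [AddCommMonoid M] : AddCommMonoid (PSet M) :=
  inferInstanceAs (AddCommMonoid (Set M))

instance (M : Type) [Finite M] : Finite (PSet M) := inferInstanceAs (Finite (Set M))

theorem PSet.mem_sum {M ι : Type} [AddCommMonoid M] (s : Finset ι) (f : ι → PSet M) (a : M) :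
    a ∈ PSet.toSet (∑ i ∈ s, f i) ↔
      ∃ g : ι → M, (∀ i ∈ s, g i ∈ (f i).toSet) ∧ ∑ i ∈ s, g i = a := by
  have := Set.mem_finsetSum s f a
  refine Iff.trans this ?_
  constructor
  · rintro ⟨g, hg, h⟩; exact ⟨g, fun i hi => hg hi, h⟩
  · rintro ⟨g, hg, h⟩; exact ⟨g, fun {i} hi => hg i hi, h⟩

/-- In a sum of many elements of `S` some element `y` occurs so often that one further copy of `y`
changes nothing; hence `n • S ⊆ (n + 1) • S` for large `n`, and finiteness makes this increasing
chain stabilize. -/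
theorem Aper.pset {M : Type} [AddCommMonoid M] [Finite M] (h : Aper M) : Aper (PSet M) := by
  classical
  have := Fintype.ofFinite M
  obtain ⟨N, hN⟩ := h.uniform
  intro S
  have key : ∀ n, Fintype.card M * N < n →
      PSet.toSet (n • S) ⊆ PSet.toSet ((n + 1) • S) := by
    intro n hn x hx
    have e : n • S = ∑ i ∈ Finset.range n, S := by simp
    have hx' := hx
    rw [e, PSet.mem_sum] at hx
    obtain ⟨g, hg, rfl⟩ := hx
    obtain ⟨y, -, hy⟩ := Finset.exists_lt_card_fiber_of_mul_lt_card_of_maps_to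
      (s := Finset.range n) (t := Finset.univ) (f := g) (n := N) (fun _ _ => Finset.mem_univ _)
      (by simpa using hn)
    have hyS : y ∈ PSet.toSet (S) := by
      obtain ⟨i, hi⟩ := Finset.card_pos.1 (lt_of_le_of_lt (Nat.zero_le N) hy)
      obtain ⟨h1, h2⟩ := Finset.mem_filter.1 hi
      rw [← h2]; exact hg i h1
    have hsum : y + ∑ i ∈ Finset.range n, g i = ∑ i ∈ Finset.range n, g i := by
      rw [← Finset.sum_filter_add_sum_filter_not (Finset.range n) (fun i => g i = y), ← add_assoc]
      congr 1
      rw [Finset.sum_congr rfl (g := fun _ => y) (fun i hi => (Finset.mem_filter.1 hi).2),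
        Finset.sum_const, ← succ_nsmul', hN y _ (by omega), hN y _ hy.le]
    rw [succ_nsmul']
    refine Set.mem_add.2 ⟨y, hyS, _, hx', hsum⟩
  let K := Fintype.card M * N + 1
  have mono : Monotone (fun k => PSet.toSet ((K + k) • S)) :=
    monotone_nat_of_le_succ fun k => key (K + k) (by omega)
  obtain ⟨k, hk⟩ := WellFoundedGT.monotone_chain_condition ⟨_, mono⟩
  exact ⟨K + k, (hk (k + 1) (by omega)).symm⟩

/-- The powerset recognizer: it collects all states reachable by guessing membership in the
parameter `k` at every node. -/
def Rcg.proj (R : Rcg A) (k : Key) : Rcg A where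
  M := PSet R.M
  acm := inferInstance
  fin := inferInstance
  aper := R.aper.pset
  δ a K S := {m | ∃ m' ∈ PSet.toSet (S), m = R.δ a (insert k K) m' ∨ m = R.δ a (K \ {k}) m'}

theorem setOf_update (W : Key → Set Node) (k : Key) (S : Set Node) (s : Node) :
    {j | s ∈ Function.update W k S j} =
      {j | (j = k ∧ s ∈ S) ∨ (j ≠ k ∧ s ∈ W j)} := by
  ext j
  by_cases hj : j = k
  · subst hj; simp
  · simp [hj]

theorem Rcg.proj_val (R : Rcg A) (k : Key) (T : UTree A) (W : Key → Set Node) (s : Node) :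
    s ∈ T.dom → PSet.toSet ((R.proj k).val T W s) =
      {m | ∃ S : Set Node, S ⊆ T.dom ∧ R.val T (Function.update W k S) s = m} := by
  induction s using T.ch_wf.induction with
  | _ s ih =>
    intro hs
    have ins : ∀ S : Set Node, s ∈ S →
        {j | s ∈ Function.update W k S j} = insert k {j | s ∈ W j} := by
      intro S hS
      rw [setOf_update]; ext j
      simp only [Set.mem_ofPred_eq, Set.mem_insert_iff, hS, and_true]; tauto
    have del : ∀ S : Set Node, s ∉ S →
        {j | s ∈ Function.update W k S j} = {j | s ∈ W j} \ {k} := by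
      intro S hS
      rw [setOf_update]; ext j
      simp only [Set.mem_ofPred_eq, Set.mem_sdiff, Set.mem_singleton_iff, hS]; tauto
    have hsum : ∀ m' : R.M,
        m' ∈ PSet.toSet (∑ t ∈ T.ch s, (R.proj k).val T W t) ↔
        ∃ g : Node → R.M, (∀ t ∈ T.ch s, ∃ S : Set Node, S ⊆ T.dom ∧
          R.val T (Function.update W k S) t = g t) ∧ ∑ t ∈ T.ch s, g t = m' := by
      intro m'
      refine (PSet.mem_sum (T.ch s) (fun t => (R.proj k).val T W t) m').trans ?_
      refine exists_congr fun g => and_congr_left fun _ => ?_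
      refine forall_congr' fun t => forall_congr' fun ht => ?_
      exact Iff.of_eq (congrArg (g t ∈ ·) (ih t ht (UTree.mem_ch.1 ht).1))
    rw [Rcg.val_eq]
    ext m
    change (∃ m' ∈ PSet.toSet (∑ t ∈ T.ch s, (R.proj k).val T W t), _) ↔ _
    constructor
    · rintro ⟨m', hm', hm⟩
      obtain ⟨g, hg, rfl⟩ := (hsum m').1 hm'
      choose! S hSd hS using hg
      -- glue the guesses for the subtrees of the children with the guess `b` at `s`
      let U : Prop → Set Node := fun b =>
        {u | u ∈ T.dom ∧ ((u = s ∧ b) ∨ ∃ t ∈ T.ch s, t <+: u ∧ u ∈ S t)}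
      have hUs : ∀ b, s ∈ U b ↔ b := by
        intro b
        constructor
        · rintro ⟨-, ⟨-, hb⟩ | ⟨t, ht, h1, -⟩⟩
          · exact hb
          · have := h1.length_le
            rw [UTree.length_of_mem_ch ht] at this
            omega
        · intro hb; exact ⟨hs, Or.inl ⟨rfl, hb⟩⟩
      have hUt : ∀ b, ∀ t ∈ T.ch s, R.val T (Function.update W k (U b)) t = g t := by
        intro b t ht
        rw [← hS t ht]
        refine Rcg.val_congr _ _ _ _ _ (UTree.mem_ch.1 ht).1 fun u hu htu j => ?_
        by_cases hj : j = k
        · subst hj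
          simp only [Function.update_self]
          constructor
          · rintro ⟨-, ⟨rfl, -⟩ | ⟨t', ht', h1, h2⟩⟩
            · have := htu.length_le
              rw [UTree.length_of_mem_ch ht] at this
              omega
            · rwa [UTree.ch_unique ht ht' htu h1]
          · intro h; exact ⟨hu, Or.inr ⟨t, ht, htu, h⟩⟩
        · simp [hj]
      rcases hm with rfl | rfl
      · refine ⟨U True, fun u hu => hu.1, ?_⟩
        rw [Rcg.val_eq, Finset.sum_congr rfl (hUt True), ins _ ((hUs True).2 trivial)]
      · refine ⟨U False, fun u hu => hu.1, ?_⟩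
        rw [Rcg.val_eq, Finset.sum_congr rfl (hUt False), del _ (fun h => (hUs False).1 h)]
    · rintro ⟨S, hS, rfl⟩
      refine ⟨∑ t ∈ T.ch s, R.val T (Function.update W k S) t,
        (hsum _).2 ⟨_, fun t _ => ⟨S, hS, rfl⟩, rfl⟩, ?_⟩
      rw [Rcg.val_eq]
      by_cases hb : s ∈ S
      · left; rw [ins S hb]
      · right; rw [del S hb]

theorem Recog.ex {P : UTree A → (Key → Set Node) → Prop} (hP : Recog P) (k : Key) :
    Recog fun T W => ∃ S : Set Node, S ⊆ T.dom ∧ P T (Function.update W k S) := by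
  obtain ⟨R, F, hR⟩ := hP
  refine ⟨R.proj k, {X : PSet R.M | ∃ m ∈ PSet.toSet (X), m ∈ F}, fun T W => ?_⟩
  have h := R.proj_val k T W [] T.nil_mem
  change _ ↔ ∃ m ∈ PSet.toSet ((R.proj k).val T W []), m ∈ F
  rw [h]
  constructor
  · rintro ⟨S, hS, h⟩
    exact ⟨_, ⟨S, hS, rfl⟩, (hR _ _).1 h⟩
  · rintro ⟨_, ⟨S, hS, rfl⟩, h⟩
    exact ⟨S, hS, (hR _ _).2 h⟩

end Projection

/-! ### Every MSO formula is recognizable -/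

section MSOToRecognizer

variable {A : Type}

/-- First-order and set valuations as a single family of set parameters. -/
def code (v : ℕ → Node) (V : ℕ → Set Node) : Key → Set Node := Sum.elim (fun x => {v x}) V

theorem code_update_left (v : ℕ → Node) (V : ℕ → Set Node) (n : ℕ) (s : Node) :
    code (Function.update v n s) V = Function.update (code v V) (Sum.inl n) {s} := by
  funext k
  rcases k with m | m
  · by_cases hm : m = n
    · subst hm; simp [code]
    · simp [code, hm]
  · simp [code]

theorem code_update_right (v : ℕ → Node) (V : ℕ → Set Node) (n : ℕ) (S : Set Node) :
    code v (Function.update V n S) = Function.update (code v V) (Sum.inr n) S := by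
  funext k
  rcases k with m | m
  · simp [code]
  · by_cases hm : m = n
    · subst hm; simp [code]
    · simp [code, hm]

/-- "The parameter `inl n` has exactly one node in the tree" is recognizable: it is nonempty, and
no nonempty subset of it (guessed as the parameter `inr 0`) is proper. -/
theorem Recog.singleton (n : ℕ) :
    Recog fun (T : UTree A) W => ∃ s, W (Sum.inl n) ∩ T.dom = {s} := by
  let k : Key := Sum.inl n
  let k' : Key := Sum.inr 0
  have hk : k ≠ k' := Sum.inl_ne_inr
  have h1 := Recog.exNode (A := A) fun _ K => k ∈ K
  have h2 := Recog.exNode (A := A) fun _ K => k' ∈ K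
  have h3 := Recog.exNode (A := A) fun _ K => k' ∈ K ∧ k ∉ K
  have h4 := Recog.exNode (A := A) fun _ K => k ∈ K ∧ k' ∉ K
  refine (h1.and ((h2.and (h3.not.and h4)).ex k').not).congr fun T W => ?_
  simp only [Set.mem_ofPred_eq, Function.update_self, Function.update_of_ne hk]
  constructor
  · rintro ⟨s, hs⟩
    have hs' : s ∈ W k ∩ T.dom := by rw [hs]; rfl
    have huniq : ∀ u ∈ T.dom, u ∈ W k → u = s := fun u hu hk => by
      have : u ∈ W k ∩ T.dom := ⟨hk, hu⟩
      rw [hs] at this; exact this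
    refine ⟨⟨s, hs'.2, hs'.1⟩, ?_⟩
    rintro ⟨S, hS, ⟨u, hu, huS⟩, hsub, ⟨w, hw, hwk, hwS⟩⟩
    have hus : u ∈ W k := by
      by_contra hc; exact hsub ⟨u, hu, huS, hc⟩
    rw [huniq w hw hwk] at hwS
    rw [huniq u hu hus] at huS
    exact hwS huS
  · rintro ⟨⟨s, hs, hsk⟩, h⟩
    refine ⟨s, Set.eq_singleton_iff_unique_mem.2 ⟨⟨hsk, hs⟩, fun u hu => ?_⟩⟩
    by_contra hne
    refine h ⟨{s}, by simpa using hs, ⟨s, hs, rfl⟩, ?_, ⟨u, hu.2, hu.1, hne⟩⟩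
    rintro ⟨w, -, hw, hw'⟩
    rw [Set.mem_singleton_iff] at hw
    exact hw' (hw ▸ hsk)

/-- Free first-order variables are allowed to take one common value `s₀` outside the tree; this
makes equality of two variables readable from the coded valuation. -/
theorem recog_of_mso (φ : MSOu A) : ∃ P : UTree A → (Key → Set Node) → Prop, Recog P ∧
    ∀ (T : UTree A) (s₀ : Node), s₀ ∉ T.dom → ∀ (v : ℕ → Node) (V : ℕ → Set Node),
      (∀ x, v x ∈ T.dom ∨ v x = s₀) → (∀ X, V X ⊆ T.dom) →
        (MSOu.Sat T v V φ ↔ P T (code v V)) := by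
  induction φ with
  | eq x y =>
    refine ⟨_, ((Recog.exNode fun _ K => Sum.inl x ∈ K ∧ Sum.inl y ∈ K).not.and
      (Recog.exNode fun _ K => Sum.inl x ∈ K ∨ Sum.inl y ∈ K)).not, ?_⟩
    intro T s₀ hs₀ v V hv hV
    simp only [MSOu.Sat, code, Set.mem_ofPred_eq, Sum.elim_inl, Set.mem_singleton_iff]
    constructor
    · rintro h ⟨h1, u, hu, h2⟩
      rw [← h, or_self] at h2
      exact h1 ⟨u, hu, h2, h ▸ h2⟩
    · intro h
      by_contra hne
      refine h ⟨?_, ?_⟩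
      · rintro ⟨u, hu, h1, h2⟩; exact hne (h1.symm.trans h2)
      · rcases hv x with hx | hx
        · exact ⟨_, hx, Or.inl rfl⟩
        · rcases hv y with hy | hy
          · exact ⟨_, hy, Or.inr rfl⟩
          · exact absurd (hx.trans hy.symm) hne
  | desc x y =>
    refine ⟨_, Recog.desc (fun _ K => Sum.inl x ∈ K) (fun _ K => Sum.inl y ∈ K), ?_⟩
    intro T s₀ hs₀ v V hv hV
    simp only [MSOu.Sat, code, Set.mem_ofPred_eq, Sum.elim_inl, Set.mem_singleton_iff]
    constructor
    · rintro ⟨h1, h2, h3⟩; exact ⟨_, h1, _, h2, h3, rfl, rfl⟩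
    · rintro ⟨_, h1, _, h2, h3, rfl, rfl⟩; exact ⟨h1, h2, h3⟩
  | lab a x =>
    refine ⟨_, Recog.exNode (fun b K => b = a ∧ Sum.inl x ∈ K), ?_⟩
    intro T s₀ hs₀ v V hv hV
    simp only [MSOu.Sat, code, Set.mem_ofPred_eq, Sum.elim_inl, Set.mem_singleton_iff]
    constructor
    · rintro ⟨h1, h2⟩; exact ⟨_, h1, h2, rfl⟩
    · rintro ⟨_, h1, h2, rfl⟩; exact ⟨h1, h2⟩
  | mem X x =>
    refine ⟨_, Recog.exNode (fun _ K => Sum.inr X ∈ K ∧ Sum.inl x ∈ K), ?_⟩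
    intro T s₀ hs₀ v V hv hV
    simp only [MSOu.Sat, code, Set.mem_ofPred_eq, Sum.elim_inl, Sum.elim_inr,
      Set.mem_singleton_iff]
    constructor
    · intro h; exact ⟨_, hV X h, h, rfl⟩
    · rintro ⟨_, h1, h2, rfl⟩; exact h2
  | not φ ih =>
    obtain ⟨P, hP, h⟩ := ih
    refine ⟨_, hP.not, fun T s₀ hs₀ v V hv hV => not_congr (h T s₀ hs₀ v V hv hV)⟩
  | and φ ψ ihφ ihψ =>
    obtain ⟨P, hP, h⟩ := ihφ
    obtain ⟨Q, hQ, h'⟩ := ihψ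
    refine ⟨_, hP.and hQ, fun T s₀ hs₀ v V hv hV =>
      and_congr (h T s₀ hs₀ v V hv hV) (h' T s₀ hs₀ v V hv hV)⟩
  | exFO n φ ih =>
    obtain ⟨P, hP, h⟩ := ih
    refine ⟨_, ((Recog.singleton n).and hP).ex (Sum.inl n), ?_⟩
    intro T s₀ hs₀ v V hv hV
    have hv' : ∀ s ∈ T.dom, ∀ x, Function.update v n s x ∈ T.dom ∨
        Function.update v n s x = s₀ := by
      intro s hs x
      by_cases hx : x = n
      · subst hx; left; simpa using hs
      · simpa [hx] using hv x
    simp only [MSOu.Sat, Function.update_self]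
    constructor
    · rintro ⟨s, hs, hsat⟩
      refine ⟨{s}, by simpa using hs, ⟨s, by simpa using hs⟩, ?_⟩
      rw [← code_update_left]
      exact (h T s₀ hs₀ _ V (hv' s hs) hV).1 hsat
    · rintro ⟨S, hS, ⟨s, hs⟩, hsat⟩
      rw [Set.inter_eq_left.2 hS] at hs
      subst hs
      have hsd : s ∈ T.dom := by simpa using hS
      rw [← code_update_left] at hsat
      exact ⟨s, hsd, (h T s₀ hs₀ _ V (hv' s hsd) hV).2 hsat⟩
  | exSO n φ ih =>
    obtain ⟨P, hP, h⟩ := ih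
    refine ⟨_, hP.ex (Sum.inr n), ?_⟩
    intro T s₀ hs₀ v V hv hV
    simp only [MSOu.Sat]
    refine exists_congr fun S => and_congr_right fun hS => ?_
    rw [← code_update_right]
    refine h T s₀ hs₀ v _ hv fun X => ?_
    by_cases hX : X = n
    · subst hX; simpa using hS
    · simpa [hX] using hV X

end MSOToRecognizer

/-! ### From recognizers to the counting μ-calculus -/

section RecognizerToMu

namespace CMu

variable {A : Type}

theorem sem_mono (T : UTree A) (n : ℕ) {P P' : Set Node} (hPP : P ⊆ P') (φ : CMu A) :
    ∀ (V : ℕ → Set Node),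
      (pol n φ true → φ.sem T (Function.update V n P) ⊆ φ.sem T (Function.update V n P')) ∧
      (pol n φ false → φ.sem T (Function.update V n P') ⊆ φ.sem T (Function.update V n P)) := by
  have hfin : ∀ (s : Node) (X : Set Node), {t | T.childR s t ∧ t ∈ X}.Finite :=
    fun s X => T.dom.finite_toSet.subset (fun t ht => ht.1.2.1)
  induction φ with
  | lab a => intro V; exact ⟨fun _ => subset_rfl, fun _ => subset_rfl⟩
  | var k =>
    intro V
    by_cases hk : k = n
    · subst hk
      exact ⟨fun _ => by simpa [sem] using hPP, fun h => by simp [pol] at h⟩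
    · simp [sem, hk]
  | or φ ψ ihφ ihψ =>
    intro V
    exact ⟨fun h => Set.union_subset_union ((ihφ V).1 h.1) ((ihψ V).1 h.2),
      fun h => Set.union_subset_union ((ihφ V).2 h.1) ((ihψ V).2 h.2)⟩
  | not φ ih =>
    intro V
    exact ⟨fun h s hs => ⟨hs.1, fun h' => hs.2 ((ih V).2 h h')⟩,
      fun h s hs => ⟨hs.1, fun h' => hs.2 ((ih V).1 h h')⟩⟩
  | dia φ ih =>
    intro V
    exact ⟨fun h s ⟨h1, t, h2, h3⟩ => ⟨h1, t, h2, (ih V).1 h h3⟩,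
      fun h s ⟨h1, t, h2, h3⟩ => ⟨h1, t, h2, (ih V).2 h h3⟩⟩
  | diaGe k φ ih =>
    intro V
    refine ⟨fun h s hs => ⟨hs.1, hs.2.trans ?_⟩, fun h s hs => ⟨hs.1, hs.2.trans ?_⟩⟩
    · exact Set.ncard_le_ncard (fun t ht => ⟨ht.1, (ih V).1 h ht.2⟩) (hfin _ _)
    · exact Set.ncard_le_ncard (fun t ht => ⟨ht.1, (ih V).2 h ht.2⟩) (hfin _ _)
  | mu k φ ih =>
    intro V
    by_cases hk : k = n
    · subst hk
      simp [sem]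
    · constructor
      · rintro (h | h) s hs Q hQ
        · exact absurd h hk
        · refine hs Q (subset_trans ?_ hQ)
          rw [Function.update_comm (Ne.symm hk), Function.update_comm (Ne.symm hk)]
          exact (ih _).1 h
      · rintro (h | h) s hs Q hQ
        · exact absurd h hk
        · refine hs Q (subset_trans ?_ hQ)
          rw [Function.update_comm (Ne.symm hk), Function.update_comm (Ne.symm hk)]
          exact (ih _).2 h

/-- Falsity, as `μX.X`. -/
def botF : CMu A := .mu 0 (.var 0)

/-- Truth. -/
def topF : CMu A := .not botF

/-- Conjunction. -/
def andF (φ ψ : CMu A) : CMu A := .not (.or (.not φ) (.not ψ))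

/-- Finite disjunction. -/
def bigOr (l : List (CMu A)) : CMu A := l.foldr .or botF

/-- Finite conjunction. -/
def bigAnd (l : List (CMu A)) : CMu A := l.foldr andF topF

/-- At least `c` children satisfy `φ`, where `c = 0` is allowed. -/
def geF : ℕ → CMu A → CMu A
  | 0, _ => topF
  | c + 1, φ => .diaGe c φ

variable {T : UTree A} {V : ℕ → Set Node} {s : Node}

theorem not_mem_botF : s ∉ botF.sem T V := fun h => by
  have := h ∅ (by simp [sem])
  exact this

theorem mem_topF : s ∈ topF.sem T V ↔ s ∈ T.dom :=
  ⟨fun h => h.1, fun h => ⟨h, not_mem_botF⟩⟩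

theorem mem_andF {φ ψ : CMu A} :
    s ∈ (andF φ ψ).sem T V ↔ s ∈ T.dom ∧ s ∈ φ.sem T V ∧ s ∈ ψ.sem T V := by
  simp only [andF, sem, Set.mem_ofPred_eq, Set.mem_union]
  tauto

theorem mem_bigOr {l : List (CMu A)} : s ∈ (bigOr l).sem T V ↔ ∃ φ ∈ l, s ∈ φ.sem T V := by
  induction l with
  | nil => simpa [bigOr] using not_mem_botF
  | cons φ l ih =>
    have : s ∈ (bigOr (φ :: l)).sem T V ↔ s ∈ φ.sem T V ∨ s ∈ (bigOr l).sem T V := Iff.rfl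
    rw [this, ih]; simp

theorem mem_bigAnd {l : List (CMu A)} (hs : s ∈ T.dom) :
    s ∈ (bigAnd l).sem T V ↔ ∀ φ ∈ l, s ∈ φ.sem T V := by
  induction l with
  | nil => simpa [bigAnd] using mem_topF.2 hs
  | cons φ l ih =>
    have : bigAnd (φ :: l) = andF φ (bigAnd l) := rfl
    rw [this, mem_andF, ih]; simp [hs]

theorem mem_geF {c : ℕ} {φ : CMu A} (hs : s ∈ T.dom) :
    s ∈ (geF c φ).sem T V ↔ c ≤ Set.ncard {t | T.childR s t ∧ t ∈ φ.sem T V} := by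
  cases c with
  | zero => simpa [geF] using mem_topF.2 hs
  | succ c => simp [geF, sem, hs]

theorem pol_botF (m : ℕ) (b : Bool) : pol m (botF : CMu A) b := by
  by_cases h : 0 = m
  · exact Or.inl h
  · exact Or.inr (Or.inr h)

theorem wf_botF : WF (botF : CMu A) := ⟨Or.inl rfl, trivial⟩

theorem pol_bigOr {m : ℕ} {b : Bool} {l : List (CMu A)} (h : ∀ φ ∈ l, pol m φ b) :
    pol m (bigOr l) b := by
  induction l with
  | nil => exact pol_botF m b
  | cons φ l ih =>
    exact ⟨h φ (by simp), ih fun ψ hψ => h ψ (by simp [hψ])⟩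

theorem wf_bigOr {l : List (CMu A)} (h : ∀ φ ∈ l, WF φ) : WF (bigOr l) := by
  induction l with
  | nil => exact wf_botF
  | cons φ l ih =>
    exact ⟨h φ (by simp), ih fun ψ hψ => h ψ (by simp [hψ])⟩

theorem pol_andF {m : ℕ} {b : Bool} {φ ψ : CMu A} (h : pol m φ b) (h' : pol m ψ b) :
    pol m (andF φ ψ) b := by
  simp only [andF, pol, Bool.not_not]; exact ⟨h, h'⟩

theorem pol_bigAnd {m : ℕ} {b : Bool} {l : List (CMu A)} (h : ∀ φ ∈ l, pol m φ b) :
    pol m (bigAnd l) b := by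
  induction l with
  | nil => exact pol_botF m _
  | cons φ l ih =>
    exact pol_andF (h φ (by simp)) (ih fun ψ hψ => h ψ (by simp [hψ]))

theorem wf_bigAnd {l : List (CMu A)} (h : ∀ φ ∈ l, WF φ) : WF (bigAnd l) := by
  induction l with
  | nil => exact wf_botF
  | cons φ l ih =>
    exact ⟨h φ (by simp), ih fun ψ hψ => h ψ (by simp [hψ])⟩

theorem pol_geF {m : ℕ} {b : Bool} {c : ℕ} {φ : CMu A} (h : pol m φ b) : pol m (geF c φ) b := by
  cases c with
  | zero => exact pol_botF m _
  | succ c => exact h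

theorem wf_geF {c : ℕ} {φ : CMu A} (h : WF φ) : WF (geF c φ) := by
  cases c with
  | zero => exact wf_botF
  | succ c => exact h

end CMu

open CMu

open Classical in
/-- Under the assumption that every child satisfies `f q` for exactly one state `q`: the number of
children satisfying `f q`, truncated at `N`, is `c`. The upper bound is phrased through the
negation of the other `f q'`, so that all `f q` occur positively. -/
noncomputable def countF {A M : Type} [Fintype M] (N : ℕ) (f : M → CMu A) (q : M) (c : ℕ) :
    CMu A :=
  andF (geF c (f q))
    (if c < N then
      .not (geF (c + 1) (.not (bigOr (((Finset.univ : Finset M).erase q).toList.map f))))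
    else topF)

open Classical in
/-- One unfolding of the recognizer: the node has state `i`, provided that `f q` defines the
state `q` at its children. The disjunction ranges over all labels and all vectors of truncated
counts that lead to the state `i`. -/
noncomputable def bodyF {A : Type} [Fintype A] (R : Rcg A) [Fintype R.M] (N : ℕ)
    (f : R.M → CMu A) (i : R.M) : CMu A :=
  bigOr (((Finset.univ : Finset (A × (R.M → Fin (N + 1)))).filter
      fun p => R.δ p.1 ∅ (∑ q, (p.2 q : ℕ) • q) = i).toList.map fun p =>
    andF (.lab p.1) (bigAnd ((Finset.univ : Finset R.M).toList.map fun q => countF N f q (p.2 q))))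

section

variable {A : Type}

theorem pol_countF {M : Type} [Fintype M] {N : ℕ} {f : M → CMu A} {q : M} {c m : ℕ}
    (h : ∀ q, pol m (f q) true) : pol m (countF N f q c) true := by
  refine pol_andF (pol_geF (h q)) ?_
  split_ifs
  · refine pol_geF (b := false) (φ := CMu.not _) (pol_bigOr (b := true) ?_)
    intro φ hφ
    obtain ⟨q', -, rfl⟩ := List.mem_map.1 hφ
    exact h q'
  · exact pol_botF m _

theorem wf_countF {M : Type} [Fintype M] {N : ℕ} {f : M → CMu A} {q : M} {c : ℕ}
    (h : ∀ q, WF (f q)) : WF (countF N f q c) := by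
  refine ⟨wf_geF (h q), ?_⟩
  split_ifs
  · refine wf_geF (φ := CMu.not _) (wf_bigOr ?_)
    intro φ hφ
    obtain ⟨q', -, rfl⟩ := List.mem_map.1 hφ
    exact h q'
  · exact wf_botF

theorem mem_countF {M : Type} [Fintype M] [DecidableEq M] {N : ℕ} {f : M → CMu A} {q : M} {c : ℕ}
    {T : UTree A} {V : ℕ → Set Node} {s : Node} (hs : s ∈ T.dom) (val : Node → M)
    (hf : ∀ t ∈ T.ch s, ∀ q, t ∈ (f q).sem T V ↔ val t = q) (hc : c ≤ N) :
    s ∈ (countF N f q c).sem T V ↔ c = min ((T.ch s).filter fun t => val t = q).card N := by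
  have e1 : {t | T.childR s t ∧ t ∈ (f q).sem T V}
      = (((T.ch s).filter fun t => val t = q : Finset Node) : Set Node) := by
    ext t
    rw [Finset.coe_filter]
    simp only [UTree.childR_iff, hs, true_and, Set.mem_ofPred_eq]
    exact and_congr_right fun ht => hf t ht q
  have e2 : {t | T.childR s t ∧
      t ∈ (CMu.not (bigOr (((Finset.univ : Finset M).erase q).toList.map f))).sem T V}
      = (((T.ch s).filter fun t => val t = q : Finset Node) : Set Node) := by
    ext t
    rw [Finset.coe_filter]
    simp only [UTree.childR_iff, hs, true_and, Set.mem_ofPred_eq]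
    refine and_congr_right fun ht => ?_
    have htd : t ∈ T.dom := (UTree.mem_ch.1 ht).1
    simp only [sem, Set.mem_ofPred_eq, htd, true_and, mem_bigOr]
    constructor
    · intro h
      by_contra hne
      refine h ⟨f (val t), List.mem_map.2 ⟨val t, by simp [hne], rfl⟩, (hf t ht _).2 rfl⟩
    · rintro hq ⟨φ, hφ, hmem⟩
      obtain ⟨q', hq', rfl⟩ := List.mem_map.1 hφ
      rw [hf t ht] at hmem
      simp at hq'
      exact hq' (hmem.symm.trans hq)
  have key : s ∈ (countF N f q c).sem T V ↔
      c ≤ ((T.ch s).filter fun t => val t = q).card ∧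
        (c < N → ¬ c + 1 ≤ ((T.ch s).filter fun t => val t = q).card) := by
    rw [countF, mem_andF, mem_geF hs, e1, Set.ncard_coe_finset]
    simp only [hs, true_and]
    refine and_congr_right fun _ => ?_
    split_ifs with hcN
    · have : ∀ φ : CMu A, s ∈ (CMu.not φ).sem T V ↔ ¬ s ∈ φ.sem T V := fun φ => by
        simp [sem, hs]
      rw [this, mem_geF hs]
      simp only [hcN, true_imp_iff]
      convert not_congr (Iff.of_eq (congrArg (c + 1 ≤ ·) ?_)) using 2
      rw [← Set.ncard_coe_finset, ← e2]
      congr!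
    · simp [hcN, mem_topF, hs]
  rw [key]
  omega

variable (R : Rcg A) [Fintype R.M]

/-- The variable standing for the state `q`. -/
noncomputable def stVar (q : R.M) : ℕ := (Fintype.equivFin R.M q : ℕ)

theorem stVar_inj {q q' : R.M} (h : stVar R q = stVar R q') : q = q' :=
  (Fintype.equivFin R.M).injective (Fin.ext h)

variable [Fintype A]

theorem pol_bodyF {N : ℕ} {f : R.M → CMu A} {i : R.M} {m : ℕ}
    (h : ∀ q, pol m (f q) true) : pol m (bodyF R N f i) true := by
  refine pol_bigOr fun φ hφ => ?_
  obtain ⟨p, -, rfl⟩ := List.mem_map.1 hφ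
  refine pol_andF trivial (pol_bigAnd fun φ hφ => ?_)
  obtain ⟨q, -, rfl⟩ := List.mem_map.1 hφ
  exact pol_countF h

theorem wf_bodyF {N : ℕ} {f : R.M → CMu A} {i : R.M}
    (h : ∀ q, WF (f q)) : WF (bodyF R N f i) := by
  refine wf_bigOr fun φ hφ => ?_
  obtain ⟨p, -, rfl⟩ := List.mem_map.1 hφ
  refine ⟨trivial, wf_bigAnd fun φ hφ => ?_⟩
  obtain ⟨q, -, rfl⟩ := List.mem_map.1 hφ
  exact wf_countF h

theorem mem_bodyF {N : ℕ} (hN : ∀ m : R.M, ∀ c, N ≤ c → c • m = N • m)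
    {f : R.M → CMu A} {i : R.M} {T : UTree A} {V : ℕ → Set Node} {s : Node} (hs : s ∈ T.dom)
    (hf : ∀ t ∈ T.ch s, ∀ q, t ∈ (f q).sem T V ↔ R.val T (fun _ => ∅) t = q) :
    s ∈ (bodyF R N f i).sem T V ↔ R.val T (fun _ => ∅) s = i := by
  classical
  set val := R.val T (fun _ => ∅) with hval
  let cnt : R.M → ℕ := fun q => ((T.ch s).filter fun t => val t = q).card
  have hsum : ∑ t ∈ T.ch s, val t = ∑ q, (min (cnt q) N) • q := by
    rw [← Finset.sum_fiberwise (T.ch s) val val]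
    refine Finset.sum_congr rfl fun q _ => ?_
    rw [Finset.sum_congr rfl (g := fun _ => q) (fun t ht => (Finset.mem_filter.1 ht).2),
      Finset.sum_const]
    rcases le_total (cnt q) N with h | h
    · rw [min_eq_left h]
    · rw [min_eq_right h]; exact hN q _ h
  have hv : val s = R.δ (T.label s) ∅ (∑ q, (min (cnt q) N) • q) := by
    rw [← hsum, hval, Rcg.val_eq]
    congr 1
  rw [bodyF, mem_bigOr, hv]
  have hpart : ∀ p : A × (R.M → Fin (N + 1)),
      s ∈ (andF (.lab p.1) (bigAnd ((Finset.univ : Finset R.M).toList.map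
        fun q => countF N f q (p.2 q)))).sem T V ↔
      T.label s = p.1 ∧ ∀ q, (p.2 q : ℕ) = min (cnt q) N := by
    intro p
    rw [mem_andF, mem_bigAnd hs]
    simp only [hs, true_and, sem, Set.mem_ofPred_eq, List.mem_map, Finset.mem_toList,
      Finset.mem_univ, forall_exists_index, forall_apply_eq_imp_iff]
    refine and_congr_right fun _ => forall_congr' fun q => ?_
    exact mem_countF hs val hf (Nat.lt_succ_iff.1 (p.2 q).2)
  constructor
  · rintro ⟨φ, hφ, hmem⟩
    obtain ⟨p, hp, rfl⟩ := List.mem_map.1 hφ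
    obtain ⟨h1, h2⟩ := (hpart p).1 hmem
    rw [Finset.mem_toList, Finset.mem_filter] at hp
    rw [← hp.2, h1]
    simp only [h2]
  · intro h
    let p : A × (R.M → Fin (N + 1)) :=
      (T.label s, fun q => ⟨min (cnt q) N, Nat.lt_succ_iff.2 (min_le_right _ _)⟩)
    refine ⟨_, List.mem_map.2 ⟨p, ?_, rfl⟩, (hpart p).2 ⟨rfl, fun q => rfl⟩⟩
    rw [Finset.mem_toList, Finset.mem_filter]
    exact ⟨Finset.mem_univ _, h⟩

open Classical in
/-- The formula for the state `i` when the variables of the states in `B` are already bound. The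
simultaneous fixed point over all states is unravelled by binding one further state at each
level; the first argument bounds the number of levels. -/
noncomputable def solF (N : ℕ) : ℕ → Finset R.M → R.M → CMu A
  | 0, _, i => .var (stVar R i)
  | n + 1, B, i => if i ∈ B then .var (stVar R i) else
      .mu (stVar R i) (bodyF R N (fun q => solF N n (insert i B) q) i)

theorem pol_solF (N : ℕ) (m n : ℕ) : ∀ (B : Finset R.M) (i : R.M),
    pol m (solF R N n B i) true := by
  induction n with
  | zero => intro B i; exact Or.inl rfl
  | succ n ih =>
    intro B i
    rw [solF]
    split_ifs
    · exact Or.inl rfl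
    · exact Or.inr (pol_bodyF R fun q => ih _ q)

theorem wf_solF (N : ℕ) (n : ℕ) : ∀ (B : Finset R.M) (i : R.M), WF (solF R N n B i) := by
  induction n with
  | zero => intro B i; trivial
  | succ n ih =>
    intro B i
    rw [solF]
    split_ifs
    · trivial
    · exact ⟨pol_bodyF R fun q => pol_solF R N _ n _ q, wf_bodyF R fun q => ih _ q⟩

/-- If the variables in `B` denote their states, then every `solF` formula denotes its state. The
recursion is guarded by modalities and trees are well-founded, so the set of nodes in state `i`
is the least (indeed the only) fixed point. -/
theorem mem_solF {N : ℕ} (hN : ∀ m : R.M, ∀ c, N ≤ c → c • m = N • m) (T : UTree A) (n : ℕ) :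
    ∀ (B : Finset R.M) (V : ℕ → Set Node), Fintype.card R.M ≤ B.card + n →
      (∀ j ∈ B, ∀ s ∈ T.dom, s ∈ V (stVar R j) ↔ R.val T (fun _ => ∅) s = j) →
      ∀ i, ∀ s ∈ T.dom, s ∈ (solF R N n B i).sem T V ↔ R.val T (fun _ => ∅) s = i := by
  classical
  set val := R.val T (fun _ => ∅) with hval
  induction n with
  | zero =>
    intro B V hB hV i s hs
    have : B = Finset.univ := by
      rw [← Finset.card_eq_iff_eq_univ]
      exact le_antisymm (Finset.card_le_univ B) hB
    exact hV i (this ▸ Finset.mem_univ i) s hs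
  | succ n ih =>
    intro B V hB hV i
    by_cases hi : i ∈ B
    · intro s hs
      rw [solF, if_pos hi]
      exact hV i hi s hs
    rw [solF, if_neg hi]
    have hsol : ∀ q, ∀ t ∈ T.dom,
        t ∈ (solF R N n (insert i B) q).sem T
          (Function.update V (stVar R i) {u | u ∈ T.dom ∧ val u = i}) ↔ val t = q := by
      refine ih (insert i B) _ ?_ ?_
      · rw [Finset.card_insert_of_notMem hi]; omega
      · intro j hj s hs
        by_cases hji : j = i
        · subst hji; simp [hs]
        · rw [Function.update_of_ne fun h => hji (stVar_inj R h)]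
          exact hV j ((Finset.mem_insert.1 hj).resolve_left hji) s hs
    intro s hs
    constructor
    · intro h
      refine (h {u | u ∈ T.dom ∧ val u = i} ?_).2
      intro u hu
      have hud : u ∈ T.dom := by
        rw [bodyF, mem_bigOr] at hu
        obtain ⟨φ, hφ, hmem⟩ := hu
        obtain ⟨p, -, rfl⟩ := List.mem_map.1 hφ
        exact (mem_andF.1 hmem).1
      exact ⟨hud, (mem_bodyF R hN hud fun t ht q => hsol q t (UTree.mem_ch.1 ht).1).1 hu⟩
    · intro h P hP
      have all : ∀ s, s ∈ T.dom → val s = i → s ∈ P := by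
        -- strong induction over all proper descendants, via decreasing length
        have ind : ∀ d : ℕ, ∀ s, T.dom.sup List.length + 1 - s.length ≤ d → s ∈ T.dom →
            val s = i → s ∈ P := by
          intro d
          induction d with
          | zero =>
            intro s hd hs _
            have : s.length ≤ T.dom.sup List.length := Finset.le_sup (f := List.length) hs
            omega
          | succ d ihd =>
            intro s hd hs hsi
            apply hP
            refine (sem_mono T (stVar R i) (P := P ∩ {u | u ∈ T.dom ∧ val u = i})
              Set.inter_subset_left _ V).1 (pol_bodyF R fun q => pol_solF R N _ n _ q) ?_
            refine (mem_bodyF R hN hs fun t ht q => ?_).2 hsi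
            have htd : t ∈ T.dom := (UTree.mem_ch.1 ht).1
            rw [← hval, ← hsol q t htd]
            refine sem_local T {u | u ∈ T.dom ∧ s.length < u.length} ?_ _ _ _ ?_ t
              ⟨htd, by rw [UTree.length_of_mem_ch ht]; omega⟩
            · rintro u ⟨_, hu⟩ w ⟨_, hw, j, rfl⟩
              exact ⟨hw, by simp; omega⟩
            · rintro m u ⟨hu, hlen⟩
              by_cases hm : m = stVar R i
              · subst hm
                have hul : u.length ≤ T.dom.sup List.length :=
                  Finset.le_sup (f := List.length) hu
                simp only [Function.update_self]
                exact ⟨fun h => h.2, fun h => ⟨ihd u (by omega) hu h.2, h⟩⟩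
              · simp [hm]
        exact fun s => ind _ s le_rfl
      exact all s hs h

end

theorem exists_mu_of_mso {A : Type} [Fintype A] (L : Set (UTree A)) (φ : MSOu A)
    (hφ : φ.DefinesB L) : ∃ ψ : CMu A, ψ.WF ∧
      ∀ (T : UTree A) (V : ℕ → Set Node), T ∈ L ↔ ([] : Node) ∈ ψ.sem T V := by
  classical
  obtain ⟨P, ⟨R, F, hR⟩, hP⟩ := recog_of_mso φ
  have := Fintype.ofFinite R.M
  obtain ⟨N, hN⟩ := R.aper.uniform
  refine ⟨bigOr ((Finset.univ.filter (· ∈ F)).toList.map (solF R N (Fintype.card R.M) ∅)), ?_, ?_⟩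
  · refine wf_bigOr fun ψ hψ => ?_
    obtain ⟨q, -, rfl⟩ := List.mem_map.1 hψ
    exact wf_solF R N _ _ _
  · intro T V
    -- all free variables are interpreted outside the tree, so the parameters are invisible
    obtain ⟨s₀, hs₀⟩ := Infinite.exists_notMem_finset T.dom
    rw [hφ T (fun _ => s₀) (fun _ => ∅),
      hP T s₀ hs₀ _ _ (fun _ => Or.inr rfl) (fun _ => Set.empty_subset _), hR,
      Rcg.val_congr R T _ (fun _ => ∅) [] T.nil_mem ?_]
    · rw [mem_bigOr]
      have hsol := mem_solF R hN T (Fintype.card R.M) ∅ V (by simp) (by simp)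
      constructor
      · intro h
        exact ⟨_, List.mem_map.2 ⟨_, by simpa using h, rfl⟩, (hsol _ [] T.nil_mem).2 rfl⟩
      · rintro ⟨ψ, hψ, hmem⟩
        obtain ⟨q, hq, rfl⟩ := List.mem_map.1 hψ
        rw [(hsol q [] T.nil_mem).1 hmem]
        simpa using hq
    · intro u hu _ k
      rcases k with x | X
      · simp only [code, Sum.elim_inl, Set.mem_singleton_iff, Set.mem_empty_iff_false, iff_false]
        rintro rfl
        exact hs₀ hu
      · rfl

end RecognizerToMu

/-- Over unordered unranked Σ-trees, MSO and the counting
μ-calculus `C_μ[≺_ch]` have the same expressive power for Boolean queries. -/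
theorem mso_iff_counting_mu (A : Type) [Fintype A] (L : Set (UTree A)) :
    (∃ φ : MSOu A, φ.DefinesB L) ↔
      ∃ φ : CMu A, φ.WF ∧
        ∀ (T : UTree A) (V : ℕ → Set Node),
          T ∈ L ↔ ([] : Node) ∈ φ.sem T V := by
  exact ⟨fun ⟨φ, h⟩ => exists_mu_of_mso L φ h, fun ⟨φ, _, h⟩ => exists_mso_of_mu L φ h⟩

end UnrankedTrees
end

section
/- Over unordered unranked Σ-trees, the ≺_ns-invariant Boolean queries (those definable by an MSO sentence over ordered trees whose truth value does not depend on the choice of sibling ordering) are precisely the Boolean queries definable in MSO_mod, the extension of MSO with modulo quantifiers. -/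
/-!
Both inclusions are proved by translating formulas; the class of properties definable in either
logic is handled through its closure properties (`DefClass`).

From `MSOmod` to invariant `MSO`: in an ordered tree the nodes are linearly ordered by document
order, which is `MSO`-definable. Along this order the size of a set modulo `k` is computed by
guessing the sets of positions at which the running count has a given residue. Hence `Q_k(X)` is
`MSO`-definable, and the resulting sentence is invariant because `MSOmod` cannot see the sibling
order (`invariant_of_mod`).

From invariant `MSO` to `MSOmod`: an `MSO` sentence over ordered trees is equivalent to a finite
bottom-up automaton on the first-child/next-sibling encoding (`exists_automaton`, by induction on
formulas, with the subset construction for quantifiers). For such an automaton a subtree acts as a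
function `Q → Q` (its behaviour) on the state of the siblings to its right. By invariance the
siblings of the input tree may be reordered so that, everywhere in the tree, equal behaviours are
adjacent and the behaviours come in a fixed order (`exists_presents`, `exists_uiso`). Then the
behaviour of a node depends only on its label and on the numbers of children of each behaviour
(`exists_sorted_automaton`). As iterates of maps on a finite set are eventually periodic
(`exists_period`), these numbers matter only up to a threshold and modulo a period, which
`MSOmod` can express. An `MSOmod` sentence therefore guesses the behaviour of every node and
verifies the guess locally (`mod_of_invariant`).
-/

namespace UnrankedTrees

/-! ### MSO over ordered unranked trees.
First-order variables and monadic second-order variables are indexed by ℕ.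
First-order quantifiers range over the nodes of the tree, set quantifiers over
sets of nodes of the tree. -/

inductive MSO (A : Type) : Type where
  | eq : ℕ → ℕ → MSO A
  | desc : ℕ → ℕ → MSO A               -- x ≺*_ch y
  | sib : ℕ → ℕ → MSO A                -- x ≺*_ns y
  | lab : A → ℕ → MSO A                -- P_a(x)
  | mem : ℕ → ℕ → MSO A                -- X(x)
  | not : MSO A → MSO A
  | and : MSO A → MSO A → MSO A
  | exFO : ℕ → MSO A → MSO A
  | exSO : ℕ → MSO A → MSO A

namespace MSO

variable {A : Type}

def Sat (T : UTree A) (v : ℕ → Node) (V : ℕ → Set Node) : MSO A → Prop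
  | .eq x y => v x = v y
  | .desc x y => T.descR (v x) (v y)
  | .sib x y => T.sibR (v x) (v y)
  | .lab a x => v x ∈ T.dom ∧ T.label (v x) = a
  | .mem X x => v x ∈ V X
  | .not φ => ¬ Sat T v V φ
  | .and φ ψ => Sat T v V φ ∧ Sat T v V ψ
  | .exFO n φ => ∃ s ∈ T.dom, Sat T (Function.update v n s) V φ
  | .exSO n φ => ∃ S : Set Node, S ⊆ ↑T.dom ∧ Sat T v (Function.update V n S) φ

/-- `φ`, as a sentence, defines the set `L` of trees.  (Quantifying over all
valuations forces the truth value to be independent of the valuation, i.e.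
`φ` behaves as a sentence.) -/
def DefinesB (φ : MSO A) (L : Set (UTree A)) : Prop :=
  ∀ (T : UTree A) (v : ℕ → Node) (V : ℕ → Set Node), T ∈ L ↔ Sat T v V φ

/-- `φ`, as a formula whose only free variable is the first-order variable `0`,
defines the unary query `Q`. -/
def DefinesU (φ : MSO A) (Q : UTree A → Set Node) : Prop :=
  ∀ (T : UTree A) (v : ℕ → Node) (V : ℕ → Set Node) (s : Node), s ∈ T.dom →
    (s ∈ Q T ↔ Sat T (Function.update v 0 s) V φ)

end MSO

/-! ### Isomorphism of the underlying unordered trees: a label- and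
child-preserving bijection between the domains. Two ordered trees related by
`UIso` are exactly two sibling-ordering expansions of one unordered tree. -/

def UIso {A : Type} (T T' : UTree A) : Prop :=
  ∃ f : Node → Node, Set.BijOn f ↑T.dom ↑T'.dom ∧
    (∀ s ∈ T.dom, T'.label (f s) = T.label s) ∧
    (∀ s ∈ T.dom, ∀ t ∈ T.dom, (T.childR s t ↔ T'.childR (f s) (f t)))

/-- An MSO sentence (over the ordered vocabulary, including the sibling
order) is `≺_ns`-invariant if its truth value does not depend on the choice
of the sibling ordering. -/
def NsInvariant {A : Type} (φ : MSO A) : Prop :=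
  ∀ (T T' : UTree A), UIso T T' →
    ∀ (v v' : ℕ → Node) (V V' : ℕ → Set Node),
      (MSO.Sat T v V φ ↔ MSO.Sat T' v' V' φ)

/-! ### MSO_mod : MSO over unordered trees with modulo quantifiers
`Q_k(X)` (k > 1), true iff |X| ≡ 0 (mod k). -/

inductive MSOmod (A : Type) : Type where
  | eq : ℕ → ℕ → MSOmod A
  | desc : ℕ → ℕ → MSOmod A
  | lab : A → ℕ → MSOmod A
  | mem : ℕ → ℕ → MSOmod A
  | modq : ℕ → ℕ → MSOmod A   -- `modq k X` is Q_{k+2}(X): |X| ≡ 0 (mod k+2)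
  | not : MSOmod A → MSOmod A
  | and : MSOmod A → MSOmod A → MSOmod A
  | exFO : ℕ → MSOmod A → MSOmod A
  | exSO : ℕ → MSOmod A → MSOmod A

namespace MSOmod

variable {A : Type}

def Sat (T : UTree A) (v : ℕ → Node) (V : ℕ → Set Node) : MSOmod A → Prop
  | .eq x y => v x = v y
  | .desc x y => T.descR (v x) (v y)
  | .lab a x => v x ∈ T.dom ∧ T.label (v x) = a
  | .mem X x => v x ∈ V X
  | .modq k X => (V X).ncard % (k + 2) = 0
  | .not φ => ¬ Sat T v V φ
  | .and φ ψ => Sat T v V φ ∧ Sat T v V ψ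
  | .exFO n φ => ∃ s ∈ T.dom, Sat T (Function.update v n s) V φ
  | .exSO n φ => ∃ S : Set Node, S ⊆ ↑T.dom ∧ Sat T v (Function.update V n S) φ

def DefinesB (φ : MSOmod A) (L : Set (UTree A)) : Prop :=
  ∀ (T : UTree A) (v : ℕ → Node) (V : ℕ → Set Node), T ∈ L ↔ Sat T v V φ

end MSOmod

section helpers

/-! ### Definable properties of valuations -/

/-- A property of a tree together with a valuation of the first-order and set variables. -/
abbrev ValProp (A : Type) : Type := UTree A → (ℕ → Node) → (ℕ → Set Node) → Prop

/-- The closure properties shared by the classes of properties definable in `MSO` and in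
`MSOmod`.  Properties only matter on valuations whose first `N` variables take values inside the
tree, for some `N` depending on the property; this is the content of `congr`. -/
structure DefClass {A : Type} (D : ValProp A → Prop) : Prop where
  congr : ∀ (N : ℕ) {P R : ValProp A}, D P →
    (∀ T v V, (∀ i < N, v i ∈ T.dom) → (∀ i < N, V i ⊆ ↑T.dom) → (P T v V ↔ R T v V)) → D R
  eq : ∀ x y, D fun _ v _ => v x = v y
  desc : ∀ x y, D fun T v _ => T.descR (v x) (v y)
  lab : ∀ a x, D fun T v _ => v x ∈ T.dom ∧ T.label (v x) = a
  mem : ∀ X x, D fun _ v V => v x ∈ V X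
  not : ∀ {P : ValProp A}, D P → D fun T v V => ¬ P T v V
  and : ∀ {P R : ValProp A}, D P → D R → D fun T v V => P T v V ∧ R T v V
  exFO : ∀ n {P : ValProp A}, D P →
    D fun T v V => ∃ s ∈ T.dom, P T (Function.update v n s) V
  exSO : ∀ n {P : ValProp A}, D P →
    D fun T v V => ∃ S : Set Node, S ⊆ ↑T.dom ∧ P T v (Function.update V n S)

/-- Definability in `MSO` on valuations whose first `N` variables lie inside the tree. -/
def DefMSO {A : Type} (P : ValProp A) : Prop :=
  ∃ (φ : MSO A) (N : ℕ), ∀ T v V, (∀ i < N, v i ∈ T.dom) → (∀ i < N, V i ⊆ ↑T.dom) →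
    (P T v V ↔ MSO.Sat T v V φ)

/-- Definability in `MSOmod` on valuations whose first `N` variables lie inside the tree. -/
def DefMod {A : Type} (P : ValProp A) : Prop :=
  ∃ (φ : MSOmod A) (N : ℕ), ∀ T v V, (∀ i < N, v i ∈ T.dom) → (∀ i < N, V i ⊆ ↑T.dom) →
    (P T v V ↔ MSOmod.Sat T v V φ)

variable {A : Type}

theorem update_valid {T : UTree A} {N : ℕ} {v : ℕ → Node} (h : ∀ i < N, v i ∈ T.dom) (n : ℕ)
    {s : Node} (hs : s ∈ T.dom) : ∀ i < N, Function.update v n s i ∈ T.dom := by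
  intro i hi
  by_cases hin : i = n
  · subst hin; simpa using hs
  · simpa [Function.update_of_ne hin] using h i hi

theorem update_valid_set {T : UTree A} {N : ℕ} {V : ℕ → Set Node}
    (h : ∀ i < N, V i ⊆ ↑T.dom) (n : ℕ)
    {S : Set Node} (hS : S ⊆ ↑T.dom) : ∀ i < N, Function.update V n S i ⊆ ↑T.dom := by
  intro i hi
  by_cases hin : i = n
  · subst hin; simpa using hS
  · simpa [Function.update_of_ne hin] using h i hi

theorem defClass_MSO : DefClass (DefMSO (A := A)) where
  congr := by
    rintro N P R ⟨φ, M, h⟩ hPR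
    refine ⟨φ, max N M, fun T v V hv hV => ?_⟩
    rw [← hPR T v V (fun i hi => hv i (by omega)) (fun i hi => hV i (by omega))]
    exact h T v V (fun i hi => hv i (by omega)) (fun i hi => hV i (by omega))
  eq x y := ⟨.eq x y, 0, fun _ _ _ _ _ => Iff.rfl⟩
  desc x y := ⟨.desc x y, 0, fun _ _ _ _ _ => Iff.rfl⟩
  lab a x := ⟨.lab a x, 0, fun _ _ _ _ _ => Iff.rfl⟩
  mem X x := ⟨.mem X x, 0, fun _ _ _ _ _ => Iff.rfl⟩
  not := by
    rintro P ⟨φ, M, h⟩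
    exact ⟨.not φ, M, fun T v V hv hV => not_congr (h T v V hv hV)⟩
  and := by
    rintro P R ⟨φ, M, h⟩ ⟨ψ, N, h'⟩
    exact ⟨.and φ ψ, max M N, fun T v V hv hV => and_congr
      (h T v V (fun i hi => hv i (by omega)) (fun i hi => hV i (by omega)))
      (h' T v V (fun i hi => hv i (by omega)) (fun i hi => hV i (by omega)))⟩
  exFO := by
    rintro n P ⟨φ, M, h⟩
    exact ⟨.exFO n φ, M, fun T v V hv hV => exists_congr fun s => and_congr_right fun hs =>
      h T _ V (update_valid hv n hs) hV⟩
  exSO := by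
    rintro n P ⟨φ, M, h⟩
    exact ⟨.exSO n φ, M, fun T v V hv hV => exists_congr fun s => and_congr_right fun hs =>
      h T v _ hv (update_valid_set hV n hs)⟩

theorem defClass_Mod : DefClass (DefMod (A := A)) where
  congr := by
    rintro N P R ⟨φ, M, h⟩ hPR
    refine ⟨φ, max N M, fun T v V hv hV => ?_⟩
    rw [← hPR T v V (fun i hi => hv i (by omega)) (fun i hi => hV i (by omega))]
    exact h T v V (fun i hi => hv i (by omega)) (fun i hi => hV i (by omega))
  eq x y := ⟨.eq x y, 0, fun _ _ _ _ _ => Iff.rfl⟩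
  desc x y := ⟨.desc x y, 0, fun _ _ _ _ _ => Iff.rfl⟩
  lab a x := ⟨.lab a x, 0, fun _ _ _ _ _ => Iff.rfl⟩
  mem X x := ⟨.mem X x, 0, fun _ _ _ _ _ => Iff.rfl⟩
  not := by
    rintro P ⟨φ, M, h⟩
    exact ⟨.not φ, M, fun T v V hv hV => not_congr (h T v V hv hV)⟩
  and := by
    rintro P R ⟨φ, M, h⟩ ⟨ψ, N, h'⟩
    exact ⟨.and φ ψ, max M N, fun T v V hv hV => and_congr
      (h T v V (fun i hi => hv i (by omega)) (fun i hi => hV i (by omega)))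
      (h' T v V (fun i hi => hv i (by omega)) (fun i hi => hV i (by omega)))⟩
  exFO := by
    rintro n P ⟨φ, M, h⟩
    exact ⟨.exFO n φ, M, fun T v V hv hV => exists_congr fun s => and_congr_right fun hs =>
      h T _ V (update_valid hv n hs) hV⟩
  exSO := by
    rintro n P ⟨φ, M, h⟩
    exact ⟨.exSO n φ, M, fun T v V hv hV => exists_congr fun s => and_congr_right fun hs =>
      h T v _ hv (update_valid_set hV n hs)⟩

theorem exists_mem_dom (T : UTree A) (p : Prop) : p ↔ ∃ s ∈ T.dom, p :=
  ⟨fun h => ⟨[], T.nil_mem, h⟩, fun ⟨_, _, h⟩ => h⟩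

theorem exists_sub_dom (T : UTree A) (p : Prop) : p ↔ ∃ S : Set Node, S ⊆ ↑T.dom ∧ p :=
  ⟨fun h => ⟨∅, Set.empty_subset _, h⟩, fun ⟨_, _, h⟩ => h⟩

theorem lt_succ_update_valid {T : UTree A} {n : ℕ} {v : ℕ → Node} (h : ∀ i < n, v i ∈ T.dom)
    {s : Node} (hs : s ∈ T.dom) : ∀ i < n + 1, Function.update v n s i ∈ T.dom := by
  intro i hi
  by_cases hin : i = n
  · subst hin; simpa using hs
  · simpa [Function.update_of_ne hin] using h i (by omega)

theorem lt_succ_update_valid_set {T : UTree A} {n : ℕ} {V : ℕ → Set Node}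
    (h : ∀ i < n, V i ⊆ ↑T.dom)
    {S : Set Node} (hS : S ⊆ ↑T.dom) : ∀ i < n + 1, Function.update V n S i ⊆ ↑T.dom := by
  intro i hi
  by_cases hin : i = n
  · subst hin; simpa using hS
  · simpa [Function.update_of_ne hin] using h i (by omega)

/-- A tree property that is definable on valuations inside the tree is defined by a sentence:
the relevant variables are quantified existentially. -/
theorem DefMSO.definesB {L : Set (UTree A)} (h : DefMSO fun T _ _ => T ∈ L) :
    ∃ φ : MSO A, φ.DefinesB L := by
  obtain ⟨φ, N, h⟩ := h
  suffices H : ∀ n m (φ : MSO A), (∀ T v V, (∀ i < n, v i ∈ T.dom) →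
      (∀ i < m, V i ⊆ ↑T.dom) → (T ∈ L ↔ MSO.Sat T v V φ)) → ∃ φ : MSO A, φ.DefinesB L from
    H N N φ h
  intro n
  induction n with
  | zero =>
    intro m
    induction m with
    | zero => exact fun φ h => ⟨φ, fun T v V => h T v V (by simp) (by simp)⟩
    | succ m ih =>
      refine fun φ h => ih (.exSO m φ) fun T v V hv hV => ?_
      rw [exists_sub_dom T (T ∈ L)]
      exact exists_congr fun S => and_congr_right fun hS =>
        h T v _ hv (lt_succ_update_valid_set hV hS)
  | succ n ih =>
    refine fun m φ h => ih m (.exFO n φ) fun T v V hv hV => ?_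
    rw [exists_mem_dom T (T ∈ L)]
    exact exists_congr fun S => and_congr_right fun hS =>
      h T _ V (lt_succ_update_valid hv hS) hV

/-- The analogue of `DefMSO.definesB` for `MSOmod`. -/
theorem DefMod.definesB {L : Set (UTree A)} (h : DefMod fun T _ _ => T ∈ L) :
    ∃ φ : MSOmod A, φ.DefinesB L := by
  obtain ⟨φ, N, h⟩ := h
  suffices H : ∀ n m (φ : MSOmod A), (∀ T v V, (∀ i < n, v i ∈ T.dom) →
      (∀ i < m, V i ⊆ ↑T.dom) → (T ∈ L ↔ MSOmod.Sat T v V φ)) →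
      ∃ φ : MSOmod A, φ.DefinesB L from
    H N N φ h
  intro n
  induction n with
  | zero =>
    intro m
    induction m with
    | zero => exact fun φ h => ⟨φ, fun T v V => h T v V (by simp) (by simp)⟩
    | succ m ih =>
      refine fun φ h => ih (.exSO m φ) fun T v V hv hV => ?_
      rw [exists_sub_dom T (T ∈ L)]
      exact exists_congr fun S => and_congr_right fun hS =>
        h T v _ hv (lt_succ_update_valid_set hV hS)
  | succ n ih =>
    refine fun m φ h => ih m (.exFO n φ) fun T v V hv hV => ?_
    rw [exists_mem_dom T (T ∈ L)]
    exact exists_congr fun S => and_congr_right fun hS =>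
      h T _ V (lt_succ_update_valid hv hS) hV

namespace DefClass

theorem congr' {D : ValProp A → Prop} (hD : DefClass D)
    {P R : ValProp A} (h : D P) (hPR : ∀ T v V, P T v V ↔ R T v V) : D R :=
  hD.congr 0 h fun T v V _ _ => hPR T v V

theorem or {D : ValProp A → Prop} (hD : DefClass D)
    {P R : ValProp A} (hP : D P) (hR : D R) : D fun T v V => P T v V ∨ R T v V :=
  hD.congr' (hD.not (hD.and (hD.not hP) (hD.not hR))) fun T v V => by tauto

theorem imp {D : ValProp A → Prop} (hD : DefClass D)
    {P R : ValProp A} (hP : D P) (hR : D R) : D fun T v V => P T v V → R T v V :=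
  hD.congr' (hD.not (hD.and hP (hD.not hR))) fun T v V => by tauto

theorem iff {D : ValProp A → Prop} (hD : DefClass D)
    {P R : ValProp A} (hP : D P) (hR : D R) : D fun T v V => P T v V ↔ R T v V :=
  hD.congr' (hD.and (hD.imp hP hR) (hD.imp hR hP)) fun T v V => by tauto

theorem true {D : ValProp A → Prop} (hD : DefClass D) : D fun _ _ _ => True :=
  hD.congr' (hD.eq 0 0) fun T v V => by simp

theorem const {D : ValProp A → Prop} (hD : DefClass D) (p : Prop) : D fun _ _ _ => p := by
  by_cases hp : p
  · exact hD.congr' hD.true fun T v V => by simp [hp]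
  · exact hD.congr' (hD.not hD.true) fun T v V => by simp [hp]

theorem allFO {D : ValProp A → Prop} (hD : DefClass D) (n : ℕ) {P : ValProp A} (hP : D P) :
    D fun T v V => ∀ s ∈ T.dom, P T (Function.update v n s) V :=
  hD.congr' (hD.not (hD.exFO n (hD.not hP))) fun T v V => by
    constructor
    · intro h s hs
      by_contra hc
      exact h ⟨s, hs, hc⟩
    · rintro h ⟨s, hs, hc⟩
      exact hc (h s hs)

theorem all {D : ValProp A → Prop} (hD : DefClass D)
    {ι : Type} [Finite ι] {P : ι → ValProp A} (hP : ∀ i, D (P i)) :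
    D fun T v V => ∀ i, P i T v V := by
  classical
  cases nonempty_fintype ι
  suffices H : ∀ s : Finset ι, D fun T v V => ∀ i ∈ s, P i T v V from
    hD.congr' (H Finset.univ) fun T v V => by simp
  intro s
  induction s using Finset.induction_on with
  | empty => exact hD.congr' hD.true fun T v V => by simp
  | insert a s _ ih => exact hD.congr' (hD.and (hP a) ih) fun T v V => by simp

theorem ex {D : ValProp A → Prop} (hD : DefClass D)
    {ι : Type} [Finite ι] {P : ι → ValProp A} (hP : ∀ i, D (P i)) :
    D fun T v V => ∃ i, P i T v V :=
  hD.congr' (hD.not (hD.all fun i => hD.not (hP i))) fun T v V => by simp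

/-- Simultaneous quantification over the set variables with indices in `[a, a + m)`. -/
theorem exSOs {D : ValProp A → Prop} (hD : DefClass D) (a m : ℕ) {P : ValProp A} (hP : D P) :
    D fun T v V => ∃ W : ℕ → Set Node, (∀ i, a ≤ i → i < a + m → W i ⊆ ↑T.dom) ∧
      (∀ i, (i < a ∨ a + m ≤ i) → W i = V i) ∧ P T v W := by
  induction m with
  | zero =>
    refine hD.congr' hP fun T v V => ⟨fun h => ⟨V, fun i h1 h2 => by omega, fun _ _ => rfl, h⟩, ?_⟩
    rintro ⟨W, -, h, hW⟩
    have : W = V := funext fun i => h i (by omega)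
    rwa [← this]
  | succ m ih =>
    refine hD.congr' (hD.exSO (a + m) ih) fun T v V => ⟨?_, ?_⟩
    · rintro ⟨S, hS, W, h1, h2, h3⟩
      have hWS : W (a + m) = S := by simpa using h2 (a + m) (by omega)
      refine ⟨W, fun i hi hi' => ?_, fun i hi => ?_, h3⟩
      · by_cases h : i = a + m
        · rw [h, hWS]; exact hS
        · exact h1 i hi (by omega)
      · rw [h2 i (by omega), Function.update_of_ne (by omega)]
    · rintro ⟨W, h1, h2, h3⟩
      refine ⟨W (a + m), h1 _ (by omega) (by omega), W,
        fun i hi hi' => h1 i hi (by omega), fun i hi => ?_, h3⟩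
      by_cases h : i = a + m
      · subst h; simp
      · rw [Function.update_of_ne h, h2 i (by omega)]

end DefClass

/-! ### Counting modulo `k` in ordered trees -/

theorem defMSO_sib (x y : ℕ) : DefMSO (A := A) fun T v _ => T.sibR (v x) (v y) :=
  ⟨.sib x y, 0, fun _ _ _ _ _ => Iff.rfl⟩

/-- The lexicographic order on nodes, expressed by prefixes and sibling comparisons. -/
theorem node_lt_iff (x y : Node) : x < y ↔
    (x <+: y ∧ x ≠ y) ∨ ∃ (u : Node) (i j : ℕ), i < j ∧ u ++ [i] <+: x ∧ u ++ [j] <+: y := by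
  induction x generalizing y with
  | nil =>
    cases y with
    | nil => simp
    | cons b y => simp
  | cons a x ih =>
    cases y with
    | nil => simp
    | cons b y =>
      rw [List.cons_lt_cons_iff, ih]
      constructor
      · rintro (h | ⟨rfl, ⟨h, h'⟩ | ⟨u, i, j, hij, h1, h2⟩⟩)
        · exact Or.inr ⟨[], a, b, h, by simp, by simp⟩
        · exact Or.inl ⟨by simpa using h, by simpa using h'⟩
        · exact Or.inr ⟨a :: u, i, j, hij, by simpa using h1, by simpa using h2⟩
      · rintro (⟨h, h'⟩ | ⟨u, i, j, hij, h1, h2⟩)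
        · rw [List.cons_prefix_cons] at h
          obtain ⟨rfl, h⟩ := h
          exact Or.inr ⟨rfl, Or.inl ⟨h, by simpa using h'⟩⟩
        · cases u with
          | nil =>
            simp only [List.nil_append, List.cons_prefix_cons] at h1 h2
            left; omega
          | cons c u =>
            simp only [List.cons_append, List.cons_prefix_cons] at h1 h2
            obtain ⟨rfl, h1⟩ := h1
            obtain ⟨rfl, h2⟩ := h2
            exact Or.inr ⟨rfl, Or.inr ⟨u, i, j, hij, h1, h2⟩⟩

/-- Document order is definable from the descendant relation and the sibling order.  The
auxiliary variables are chosen fresh. -/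
theorem defMSO_lt (x y : ℕ) : DefMSO (A := A) fun _ v _ => v x < v y := by
  have hD := defClass_MSO (A := A)
  set a := x + y + 1
  set b := x + y + 2
  refine hD.congr (x + y + 1) (hD.or (hD.and (hD.desc x y) (hD.not (hD.eq x y)))
    (hD.exFO a (hD.exFO b (hD.and (hD.and (defMSO_sib a b) (hD.not (hD.eq a b)))
      (hD.and (hD.desc a x) (hD.desc b y)))))) ?_
  intro T v V hv hV
  have hx := hv x (by omega)
  have hy := hv y (by omega)
  have e1 : x ≠ a := by omega
  have e2 : x ≠ b := by omega
  have e3 : y ≠ a := by omega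
  have e4 : y ≠ b := by omega
  have e5 : a ≠ b := by omega
  simp only [Function.update_self, Function.update_of_ne e1, Function.update_of_ne e2,
    Function.update_of_ne e3, Function.update_of_ne e4, Function.update_of_ne e5]
  rw [node_lt_iff]
  simp only [UTree.descR, hx, hy, true_and]
  refine or_congr Iff.rfl ?_
  constructor
  · rintro ⟨s, hs, t, ht, ⟨⟨_, _, u, i, j, rfl, rfl, hij⟩, hne⟩, ⟨_, h1⟩, ⟨_, h2⟩⟩
    refine ⟨u, i, j, lt_of_le_of_ne hij ?_, h1, h2⟩
    rintro rfl; exact hne rfl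
  · rintro ⟨u, i, j, hij, h1, h2⟩
    have m1 := T.prefix_closed hx h1
    have m2 := T.prefix_closed hy h2
    refine ⟨_, m1, _, m2, ⟨⟨m1, m2, u, i, j, rfl, rfl, hij.le⟩, ?_⟩, ⟨m1, h1⟩, ⟨m2, h2⟩⟩
    simp; omega

/-- `y` is the immediate successor of `x` within `X`. -/
def NextIn {α : Type} [LT α] (X : Set α) (x y : α) : Prop :=
  x ∈ X ∧ y ∈ X ∧ x < y ∧ ∀ z ∈ X, ¬ (x < z ∧ z < y)

/-- A finite linearly ordered set has cardinality divisible by `k` iff its elements can be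
coloured cyclically by `0, …, k - 1`, starting with `0` and ending with `k - 1`. -/
theorem card_mod_iff {α : Type} [LinearOrder α] (X : Set α) (hX : X.Finite) (k : ℕ) (hk : 0 < k) :
    X.ncard % k = 0 ↔ ∃ W : ℕ → Set α, (∀ i < k, W i ⊆ X) ∧
      (∀ x ∈ X, (∀ z ∈ X, ¬ z < x) → x ∈ W 0) ∧
      (∀ x ∈ X, (∀ z ∈ X, ¬ x < z) → x ∈ W (k - 1)) ∧
      (∀ x ∈ X, ∀ y ∈ X, NextIn X x y → ∀ i < k, x ∈ W i → y ∈ W ((i + 1) % k)) ∧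
      (∀ x ∈ X, ∀ i < k, ∀ j < k, x ∈ W i → x ∈ W j → i = j) := by
  classical
  lift X to Finset α using hX
  simp only [Finset.mem_coe, Set.ncard_coe_finset]
  set r : α → ℕ := fun x => (X.filter (· < x)).card with hr
  have rnext : ∀ x y, NextIn (X : Set α) x y → r y = r x + 1 := by
    rintro x y ⟨hx, hy, hxy, hn⟩
    have : X.filter (· < y) = insert x (X.filter (· < x)) := by
      ext z
      simp only [Finset.mem_filter, Finset.mem_insert]
      constructor
      · rintro ⟨hz, hzy⟩
        rcases lt_trichotomy z x with h | h | h
        · exact Or.inr ⟨hz, h⟩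
        · exact Or.inl h
        · exact absurd ⟨h, hzy⟩ (hn z hz)
      · rintro (rfl | ⟨hz, h⟩)
        · exact ⟨hx, hxy⟩
        · exact ⟨hz, h.trans hxy⟩
    simp only [hr, this]
    rw [Finset.card_insert_of_notMem (by simp)]
  have rlast : ∀ x ∈ X, (∀ z ∈ X, ¬ x < z) → r x + 1 = X.card := by
    intro x hx h
    have : X = insert x (X.filter (· < x)) := by
      ext z
      simp only [Finset.mem_filter, Finset.mem_insert]
      constructor
      · intro hz
        rcases lt_trichotomy z x with h' | h' | h'
        · exact Or.inr ⟨hz, h'⟩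
        · exact Or.inl h'
        · exact absurd h' (h z hz)
      · rintro (rfl | ⟨hz, h⟩)
        · exact hx
        · exact hz
    conv_rhs => rw [this]
    rw [Finset.card_insert_of_notMem (by simp)]
  constructor
  · intro hmod
    refine ⟨fun i => {x | x ∈ X ∧ r x % k = i}, fun i _ x hx => hx.1, ?_, ?_, ?_, ?_⟩
    · intro x hx h
      have : X.filter (· < x) = ∅ := Finset.filter_eq_empty_iff.2 fun z hz => h z hz
      refine ⟨hx, ?_⟩
      simp [hr, this]
    · intro x hx h
      refine ⟨hx, ?_⟩
      have h1 := rlast x hx h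
      obtain ⟨t, ht⟩ := Nat.dvd_of_mod_eq_zero hmod
      cases t with
      | zero => omega
      | succ t =>
        have : r x = (k - 1) + k * t := by rw [Nat.mul_succ] at ht; omega
        rw [this, Nat.add_mul_mod_self_left, Nat.mod_eq_of_lt (by omega)]
    · rintro x hx y hy hxy i hi ⟨_, h⟩
      refine ⟨hy, ?_⟩
      rw [rnext x y hxy, ← h, Nat.mod_add_mod]
    · rintro x hx i hi j hj ⟨_, h⟩ ⟨_, h'⟩
      exact h.symm.trans h'
  · rintro ⟨W, -, h0, h1, h2, h3⟩
    -- the colour of `x` is forced to be its rank modulo `k`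
    have key : ∀ n, ∀ x ∈ X, r x = n → x ∈ W (n % k) := by
      intro n
      induction n with
      | zero =>
        intro x hx hrx
        rw [Nat.zero_mod]
        refine h0 x hx ?_
        have := Finset.card_eq_zero.1 hrx
        intro z hz hzx
        exact Finset.notMem_empty z (this ▸ Finset.mem_filter.2 ⟨hz, hzx⟩)
      | succ n ih =>
        intro x hx hrx
        have hne : (X.filter (· < x)).Nonempty := by
          rw [← Finset.card_pos]; simp only [hr] at hrx; omega
        set p := (X.filter (· < x)).max' hne
        have hp := Finset.mem_filter.1 ((X.filter (· < x)).max'_mem hne)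
        have hpx : NextIn (X : Set α) p x := by
          refine ⟨hp.1, hx, hp.2, ?_⟩
          rintro z hz ⟨h1, h2⟩
          exact absurd ((X.filter (· < x)).le_max' z (Finset.mem_filter.2 ⟨hz, h2⟩))
            (not_le.2 h1)
        have hrp : r p = n := by have := rnext p x hpx; omega
        have := h2 p hp.1 x hx hpx _ (Nat.mod_lt n hk) (ih p hp.1 hrp)
        rwa [Nat.mod_add_mod] at this
    rcases X.eq_empty_or_nonempty with rfl | hne
    · simp
    · have hm := X.max'_mem hne
      set m := X.max' hne
      have hlast : ∀ z ∈ X, ¬ m < z := fun z hz => not_lt.2 (X.le_max' z hz)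
      have e := h3 m hm _ (Nat.mod_lt (r m) hk) _ (by omega) (key _ m hm rfl) (h1 m hm hlast)
      rw [← rlast m hm hlast, ← Nat.mod_add_mod, e, Nat.sub_add_cancel hk, Nat.mod_self]

theorem defMSO_modq (k X : ℕ) :
    DefMSO (A := A) fun _ _ V => (V X).ncard % (k + 2) = 0 := by
  have hD := defClass_MSO (A := A)
  -- quantifiers relativized to the set variable `X`
  have allX : ∀ n {P : ValProp A}, DefMSO P →
      DefMSO fun T v V => ∀ s ∈ T.dom, s ∈ V X → P T (Function.update v n s) V := by
    intro n P hP
    refine hD.congr' (hD.allFO n (hD.imp (hD.mem X n) hP)) fun T v V => ?_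
    simp
  -- the colour class `W i` is the value of the set variable `X + 1 + i`
  have c0 : DefMSO (A := A) fun T _ V => ∀ x ∈ T.dom, x ∈ V X →
      (∀ z ∈ T.dom, z ∈ V X → ¬ z < x) → x ∈ V (X + 1 + 0) := by
    refine hD.congr' (allX 0 (hD.imp (allX 1 (hD.not (defMSO_lt 1 0))) (hD.mem (X + 1 + 0) 0)))
      fun T v V => ?_
    simp
  have c1 : DefMSO (A := A) fun T _ V => ∀ x ∈ T.dom, x ∈ V X →
      (∀ z ∈ T.dom, z ∈ V X → ¬ x < z) → x ∈ V (X + 1 + (k + 2 - 1)) := by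
    refine hD.congr' (allX 0 (hD.imp (allX 1 (hD.not (defMSO_lt 0 1)))
      (hD.mem (X + 1 + (k + 2 - 1)) 0))) fun T v V => ?_
    simp
  have c2 : DefMSO (A := A) fun T _ V => ∀ x ∈ T.dom, x ∈ V X → ∀ y ∈ T.dom, y ∈ V X →
      (x < y ∧ ∀ z ∈ T.dom, z ∈ V X → ¬ (x < z ∧ z < y)) →
      ∀ i : Fin (k + 2), x ∈ V (X + 1 + i) → y ∈ V (X + 1 + (i + 1) % (k + 2)) := by
    refine hD.congr' (allX 0 (allX 1 (hD.imp (hD.and (defMSO_lt 0 1)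
      (allX 2 (hD.not (hD.and (defMSO_lt 0 2) (defMSO_lt 2 1)))))
      (hD.all fun i : Fin (k + 2) => hD.imp (hD.mem (X + 1 + i) 0)
        (hD.mem (X + 1 + (i + 1) % (k + 2)) 1))))) fun T v V => ?_
    simp
  have c3 : DefMSO (A := A) fun T _ V => ∀ x ∈ T.dom, x ∈ V X →
      ∀ i j : Fin (k + 2), x ∈ V (X + 1 + i) → x ∈ V (X + 1 + j) → (i : ℕ) = j := by
    refine hD.congr' (allX 0 (hD.all fun i : Fin (k + 2) => hD.all fun j : Fin (k + 2) =>
      hD.imp (hD.mem (X + 1 + i) 0) (hD.imp (hD.mem (X + 1 + j) 0) (hD.const ((i : ℕ) = j)))))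
      fun T v V => ?_
    simp
  refine hD.congr (X + 1) (hD.exSOs (X + 1) (k + 2) (hD.and c0 (hD.and c1 (hD.and c2 c3)))) ?_
  intro T v V _ hV
  have hVX : V X ⊆ ↑T.dom := hV X (by omega)
  rw [card_mod_iff (V X) (T.dom.finite_toSet.subset hVX) (k + 2) (by omega)]
  constructor
  · rintro ⟨W, hW, hWV, h0, h1, h2, h3⟩
    have e : W X = V X := hWV X (by omega)
    rw [e] at h0 h1 h2 h3
    refine ⟨fun i => W (X + 1 + i) ∩ V X, fun i _ x hx => hx.2, ?_, ?_, ?_, ?_⟩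
    · exact fun x hx h => ⟨h0 x (hVX hx) hx fun z _ hz => h z hz, hx⟩
    · exact fun x hx h => ⟨h1 x (hVX hx) hx fun z _ hz => h z hz, hx⟩
    · rintro x hx y hy ⟨-, -, hxy, hn⟩ i hi ⟨hxi, -⟩
      exact ⟨h2 x (hVX hx) hx y (hVX hy) hy ⟨hxy, fun z _ hz => hn z hz⟩ ⟨i, hi⟩ hxi, hy⟩
    · rintro x hx i hi j hj ⟨hxi, -⟩ ⟨hxj, -⟩
      exact h3 x (hVX hx) hx ⟨i, hi⟩ ⟨j, hj⟩ hxi hxj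
  · rintro ⟨W, hW, h0, h1, h2, h3⟩
    set W' : ℕ → Set Node := fun n =>
      if X + 1 ≤ n ∧ n < X + 1 + (k + 2) then W (n - (X + 1)) else V n with hW'
    have e : W' X = V X := by simp [hW']
    have e' : ∀ i, i < k + 2 → W' (X + 1 + i) = W i := by
      intro i hi
      simp only [hW']
      rw [if_pos (by omega)]
      congr 1; omega
    refine ⟨W', ?_, ?_, ?_, ?_, ?_, ?_⟩
    · intro i hi hi'
      obtain ⟨j, rfl⟩ := Nat.exists_eq_add_of_le hi
      rw [e' j (by omega)]
      exact (hW j (by omega)).trans hVX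
    · intro i hi
      simp only [hW']
      rw [if_neg (by omega)]
    · rw [e, e' 0 (by omega)]
      exact fun x hx hx' h => h0 x hx' fun z hz => h z (hVX hz) hz
    · rw [e, e' _ (by omega)]
      exact fun x hx hx' h => h1 x hx' fun z hz => h z (hVX hz) hz
    · rw [e]
      rintro x hx hx' y hy hy' ⟨hxy, hn⟩ i hi
      rw [e' _ i.2] at hi
      rw [e' _ (Nat.mod_lt _ (by omega))]
      exact h2 x hx' y hy' ⟨hx', hy', hxy, fun z hz => hn z (hVX hz) hz⟩ i i.2 hi
    · rw [e]
      intro x hx hx' i j hi hj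
      rw [e' _ i.2] at hi
      rw [e' _ j.2] at hj
      exact h3 x hx' i i.2 j j.2 hi hj

theorem defMSO_of_mod (ψ : MSOmod A) : DefMSO fun T v V => MSOmod.Sat T v V ψ := by
  have hD := defClass_MSO (A := A)
  induction ψ with
  | eq x y => exact hD.eq x y
  | desc x y => exact hD.desc x y
  | lab a x => exact hD.lab a x
  | mem X x => exact hD.mem X x
  | modq k X => exact defMSO_modq k X
  | not ψ ih => exact hD.not ih
  | and ψ χ ih ih' => exact hD.and ih ih'
  | exFO n ψ ih => exact hD.exFO n ih
  | exSO n ψ ih => exact hD.exSO n ih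

/-! ### `MSOmod` does not see the sibling order -/

theorem descR_of_child_map {T T' : UTree A} {f : Node → Node} (hm : Set.MapsTo f ↑T.dom ↑T'.dom)
    (hc : ∀ s ∈ T.dom, ∀ t ∈ T.dom, T.childR s t → T'.childR (f s) (f t)) {s t : Node}
    (h : T.descR s t) : T'.descR (f s) (f t) := by
  obtain ⟨hs, ht, u, rfl⟩ := h
  induction u using List.reverseRecOn with
  | nil => simpa using ⟨hm hs, hm hs, List.prefix_rfl⟩
  | append_singleton u i ih =>
    have hsu : s ++ u ∈ T.dom := T.prefix_closed ht (by simp [← List.append_assoc])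
    obtain ⟨h1, h2, h3⟩ := ih hsu
    have := hc _ hsu _ ht ⟨hsu, ht, i, by simp⟩
    obtain ⟨_, h4, j, h5⟩ := this
    refine ⟨h1, h4, h3.trans ?_⟩
    rw [h5]; simp

theorem sat_mod_iso {T T' : UTree A} {f : Node → Node} (hb : Set.BijOn f ↑T.dom ↑T'.dom)
    (hl : ∀ s ∈ T.dom, T'.label (f s) = T.label s)
    (hc : ∀ s ∈ T.dom, ∀ t ∈ T.dom, (T.childR s t ↔ T'.childR (f s) (f t)))
    (ψ : MSOmod A) (v : ℕ → Node) (V : ℕ → Set Node)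
    (hv : ∀ i, v i ∈ T.dom) (hV : ∀ i, V i ⊆ ↑T.dom) :
    MSOmod.Sat T v V ψ ↔ MSOmod.Sat T' (fun i => f (v i)) (fun i => f '' V i) ψ := by
  have hm : ∀ s ∈ T.dom, f s ∈ T'.dom := fun s hs => hb.mapsTo hs
  induction ψ generalizing v V with
  | eq x y => exact ⟨fun h => congrArg f h, fun h => hb.injOn (hv x) (hv y) h⟩
  | desc x y =>
    constructor
    · exact descR_of_child_map hb.mapsTo fun s hs t ht => (hc s hs t ht).1
    · intro h
      have hinv := hb.invOn_invFunOn
      have hmaps : Set.MapsTo (Function.invFunOn f ↑T.dom) ↑T'.dom ↑T.dom :=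
        hb.surjOn.mapsTo_invFunOn
      have := descR_of_child_map (T := T') (T' := T) hmaps (by
        intro s hs t ht hst
        rw [hc _ (hmaps hs) _ (hmaps ht)]
        rwa [hinv.2 hs, hinv.2 ht]) h
      rwa [hinv.1 (hv x), hinv.1 (hv y)] at this
  | lab a x =>
    simp only [MSOmod.Sat, hv x, hm _ (hv x), true_and, hl _ (hv x)]
  | mem X x =>
    simp only [MSOmod.Sat]
    exact ⟨fun h => ⟨_, h, rfl⟩, fun ⟨s, hs, h⟩ => hb.injOn (hV X hs) (hv x) h ▸ hs⟩
  | modq k X =>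
    simp only [MSOmod.Sat]
    rw [(hb.injOn.mono (hV X)).ncard_image]
  | not ψ ih => exact not_congr (ih v V hv hV)
  | and ψ χ ih ih' => exact and_congr (ih v V hv hV) (ih' v V hv hV)
  | exFO n ψ ih =>
    have e : ∀ s, (fun i => f (Function.update v n s i)) =
        Function.update (fun i => f (v i)) n (f s) := by
      intro s; funext i
      by_cases h : i = n
      · subst h; simp
      · simp [h]
    have hu : ∀ s ∈ T.dom, ∀ i, Function.update v n s i ∈ T.dom := fun s hs i =>
      update_valid (N := i + 1) (fun i _ => hv i) n hs i (by omega)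
    constructor
    · rintro ⟨s, hs, h⟩
      refine ⟨f s, hm s hs, ?_⟩
      rw [← e]
      exact (ih _ V (hu s hs) hV).1 h
    · rintro ⟨s', hs', h⟩
      obtain ⟨s, hs, rfl⟩ := hb.surjOn hs'
      refine ⟨s, hs, ?_⟩
      rw [← e] at h
      exact (ih _ V (hu s hs) hV).2 h
  | exSO n ψ ih =>
    have e : ∀ S, (fun i => f '' (Function.update V n S i)) =
        Function.update (fun i => f '' (V i)) n (f '' S) := by
      intro s; funext i
      by_cases h : i = n
      · subst h; simp
      · simp [h]
    have hu : ∀ S : Set Node, S ⊆ ↑T.dom → ∀ i, Function.update V n S i ⊆ ↑T.dom :=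
      fun S hS i => update_valid_set (N := i + 1) (fun i _ => hV i) n hS i (by omega)
    constructor
    · rintro ⟨S, hS, h⟩
      refine ⟨f '' S, (Set.image_mono hS).trans hb.image_eq.le, ?_⟩
      rw [← e]
      exact (ih v _ hv (hu S hS)).1 h
    · rintro ⟨S', hS', h⟩
      have hS : f '' (↑T.dom ∩ f ⁻¹' S') = S' := by
        ext t
        constructor
        · rintro ⟨s, hs, rfl⟩; exact hs.2
        · intro ht
          obtain ⟨s, hs, rfl⟩ := hb.surjOn (hS' ht)
          exact ⟨s, ⟨hs, ht⟩, rfl⟩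
      refine ⟨↑T.dom ∩ f ⁻¹' S', Set.inter_subset_left, ?_⟩
      rw [← hS, ← e] at h
      exact (ih v _ hv (hu _ Set.inter_subset_left)).2 h

theorem invariant_of_mod {L : Set (UTree A)} {ψ : MSOmod A} (hψ : ψ.DefinesB L) :
    ∃ φ : MSO A, NsInvariant φ ∧ φ.DefinesB L := by
  have h : DefMSO (A := A) fun T _ _ => T ∈ L :=
    defClass_MSO.congr' (defMSO_of_mod ψ) fun T v V => (hψ T v V).symm
  obtain ⟨φ, hφ⟩ := h.definesB
  refine ⟨φ, ?_, hφ⟩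
  rintro T T' ⟨f, hb, hl, hc⟩ v v' V V'
  rw [← hφ T v V, ← hφ T' v' V', hψ T (fun _ => []) (fun _ => ∅), hψ T',
    sat_mod_iso hb hl hc ψ _ _ (fun _ => T.nil_mem) (fun _ => Set.empty_subset _)]

/-! ### Forests and bottom-up automata -/

/-- Ordered forests in first-child/next-sibling form: `cons a c s` is the forest whose first tree
has root `a` and child forest `c`, followed by the trees of `s`. -/
inductive Fo (α : Type) : Type where
  | nil : Fo α
  | cons : α → Fo α → Fo α → Fo α

namespace Fo

/-- The set of nodes of a forest. -/
def nodes {α : Type} : Fo α → Set α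
  | nil => ∅
  | cons a c s => insert a (c.nodes ∪ s.nodes)

/-- The set of roots of the trees of a forest. -/
def tops {α : Type} : Fo α → Set α
  | nil => ∅
  | cons a _ s => insert a s.tops

/-- No node occurs twice. -/
def Nodup {α : Type} : Fo α → Prop
  | nil => True
  | cons a c s => a ∉ c.nodes ∧ a ∉ s.nodes ∧ Disjoint c.nodes s.nodes ∧ c.Nodup ∧ s.Nodup

/-- The child relation of a forest. -/
def child {α : Type} : Fo α → α → α → Prop
  | nil, _, _ => False
  | cons a c s, x, y => (x = a ∧ y ∈ c.tops) ∨ c.child x y ∨ s.child x y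

/-- The descendant-or-self relation of a forest. -/
def desc {α : Type} : Fo α → α → α → Prop
  | nil, _, _ => False
  | cons a c s, x, y => (x = a ∧ (y = a ∨ y ∈ c.nodes)) ∨ c.desc x y ∨ s.desc x y

/-- The reflexive sibling order of a forest. -/
def sib {α : Type} : Fo α → α → α → Prop
  | nil, _, _ => False
  | cons a c s, x, y => (x = a ∧ (y = a ∨ y ∈ s.tops)) ∨ c.sib x y ∨ s.sib x y

/-- The state reached by a bottom-up automaton with initial state `q0` and transitions `δ` on a
forest whose nodes are labelled by `ℓ`. -/
def eval {α B Q : Type} (q0 : Q) (δ : B → Q → Q → Q) (ℓ : α → B) : Fo α → Q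
  | nil => q0
  | cons a c s => δ (ℓ a) (c.eval q0 δ ℓ) (s.eval q0 δ ℓ)

theorem tops_subset_nodes {α : Type} (f : Fo α) : f.tops ⊆ f.nodes := by
  induction f with
  | nil => simp [tops]
  | cons a c s _ ih =>
    intro x hx
    rcases hx with rfl | hx
    · exact Or.inl rfl
    · exact Or.inr (Or.inr (ih hx))

theorem eval_congr {α B Q : Type} (q0 : Q) (δ : B → Q → Q → Q) {ℓ ℓ' : α → B} (f : Fo α)
    (h : ∀ x ∈ f.nodes, ℓ x = ℓ' x) : f.eval q0 δ ℓ = f.eval q0 δ ℓ' := by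
  induction f with
  | nil => rfl
  | cons a c s ihc ihs =>
    simp only [eval]
    rw [h a (by simp [nodes]), ihc fun x hx => h x (by simp [nodes, hx]),
      ihs fun x hx => h x (by simp [nodes, hx])]

end Fo

/-- The forest `c` may serve as the forest below a root node `[]`. -/
def WF (c : Fo Node) : Prop := c.Nodup ∧ [] ∉ c.nodes

/-- A property of labelled trees (with root `[]` and child forest `c`) that is recognized by a
finite bottom-up automaton; the label of the root and the state of the child forest decide
acceptance. -/
def Rec {B : Type} (R : Fo Node → (Node → B) → Prop) : Prop :=
  ∃ (Q : Type) (_ : Finite Q) (q0 : Q) (δ : B → Q → Q → Q) (acc : B → Q → Prop),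
    ∀ c ℓ, WF c → (R c ℓ ↔ acc (ℓ []) (c.eval q0 δ ℓ))

namespace Rec

variable {B : Type} {R S : Fo Node → (Node → B) → Prop}

theorem congr (h : Rec R) (hRS : ∀ c ℓ, WF c → (R c ℓ ↔ S c ℓ)) : Rec S := by
  obtain ⟨Q, hQ, q0, δ, acc, h⟩ := h
  exact ⟨Q, hQ, q0, δ, acc, fun c ℓ hc => (hRS c ℓ hc).symm.trans (h c ℓ hc)⟩

theorem not (h : Rec R) : Rec fun c ℓ => ¬ R c ℓ := by
  obtain ⟨Q, hQ, q0, δ, acc, h⟩ := h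
  exact ⟨Q, hQ, q0, δ, fun b q => ¬ acc b q, fun c ℓ hc => not_congr (h c ℓ hc)⟩

theorem and (h : Rec R) (h' : Rec S) : Rec fun c ℓ => R c ℓ ∧ S c ℓ := by
  obtain ⟨Q, hQ, q0, δ, acc, h⟩ := h
  obtain ⟨Q', hQ', q0', δ', acc', h'⟩ := h'
  refine ⟨Q × Q', inferInstance, (q0, q0'), fun b p q => (δ b p.1 q.1, δ' b p.2 q.2),
    fun b p => acc b p.1 ∧ acc' b p.2, fun c ℓ hc => ?_⟩
  have e : ∀ f : Fo Node, f.eval (q0, q0') (fun b p q => (δ b p.1 q.1, δ' b p.2 q.2)) ℓ =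
      (f.eval q0 δ ℓ, f.eval q0' δ' ℓ) := by
    intro f
    induction f with
    | nil => rfl
    | cons a c s ihc ihs => simp [Fo.eval, ihc, ihs]
  rw [e]
  exact and_congr (h c ℓ hc) (h' c ℓ hc)

/-- Closure under guessing a set of nodes, by the powerset construction. -/
theorem proj (r : B → Prop → B) (h : Rec R) :
    Rec fun c ℓ => ∃ X : Set Node, R c fun s => r (ℓ s) (s ∈ X) := by
  classical
  obtain ⟨Q, hQ, q0, δ, acc, h⟩ := h
  refine ⟨Set Q, inferInstance, {q0},
    fun b P P' => {q | ∃ (t : Prop), ∃ p ∈ P, ∃ p' ∈ P', q = δ (r b t) p p'},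
    fun b P => ∃ (t : Prop), ∃ p ∈ P, acc (r b t) p, fun c ℓ hc => ?_⟩
  have e : ∀ f : Fo Node, f.Nodup → ∀ q, q ∈ f.eval {q0}
      (fun b P P' => {q | ∃ (t : Prop), ∃ p ∈ P, ∃ p' ∈ P', q = δ (r b t) p p'}) ℓ ↔
      ∃ X : Set Node, f.eval q0 δ (fun s => r (ℓ s) (s ∈ X)) = q := by
    intro f hf
    induction f with
    | nil => intro q; simp [Fo.eval, eq_comm]
    | cons a c s ihc ihs =>
      intro q
      obtain ⟨h1, h2, h3, h4, h5⟩ := hf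
      simp only [Fo.eval, Set.mem_ofPred_eq, ihc h4, ihs h5]
      constructor
      · rintro ⟨t, _, ⟨X, rfl⟩, _, ⟨Y, rfl⟩, rfl⟩
        -- glue the guesses on the root, the children and the siblings
        set Z : Set Node := {x | if x = a then t else if x ∈ c.nodes then x ∈ X else x ∈ Y}
        have ha : (a ∈ Z) = t := by simp [Z]
        refine ⟨Z, ?_⟩
        rw [ha]
        congr 1
        · refine Fo.eval_congr _ _ _ fun x hx => ?_
          have : x ≠ a := by rintro rfl; exact h1 hx
          have : (x ∈ Z) = (x ∈ X) := by simp [Z, this, hx]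
          rw [this]
        · refine Fo.eval_congr _ _ _ fun x hx => ?_
          have h6 : x ≠ a := by rintro rfl; exact h2 hx
          have h7 : x ∉ c.nodes := fun h => Set.disjoint_left.1 h3 h hx
          have : (x ∈ Z) = (x ∈ Y) := by simp [Z, h6, h7]
          rw [this]
      · rintro ⟨X, rfl⟩
        exact ⟨a ∈ X, _, ⟨X, rfl⟩, _, ⟨X, rfl⟩, rfl⟩
  simp only [e c hc.1]
  constructor
  · rintro ⟨X, hX⟩
    exact ⟨[] ∈ X, _, ⟨X, rfl⟩, (h c _ hc).1 hX⟩
  · rintro ⟨t, _, ⟨X, rfl⟩, ha⟩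
    set Z : Set Node := {x | if x = [] then t else x ∈ X}
    have h0 : ([] ∈ Z) = t := by simp [Z]
    refine ⟨Z, (h c _ hc).2 ?_⟩
    rw [h0]
    rw [Fo.eval_congr (ℓ' := fun s => r (ℓ s) (s ∈ X))]
    · exact ha
    · intro x hx
      have : x ≠ [] := by rintro rfl; exact hc.2 hx
      have : (x ∈ Z) = (x ∈ X) := by simp [Z, this]
      rw [this]

theorem exists_node (S : B → Prop) :
    Rec fun c (ℓ : Node → B) => ∃ s ∈ insert [] c.nodes, S (ℓ s) := by
  refine ⟨Prop, inferInstance, False, fun b p q => S b ∨ p ∨ q, fun b p => S b ∨ p,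
    fun c ℓ _ => ?_⟩
  have e : ∀ f : Fo Node, f.eval False (fun b p q => S b ∨ p ∨ q) ℓ = ∃ s ∈ f.nodes, S (ℓ s) := by
    intro f
    induction f with
    | nil => simp [Fo.eval, Fo.nodes]
    | cons a c s ihc ihs =>
      simp only [Fo.eval, Fo.nodes, ihc, ihs, Set.exists_mem_insert, Set.mem_union, or_and_right,
        exists_or]
  rw [e]
  simp

theorem two_nodes (S : B → Prop) :
    Rec fun c (ℓ : Node → B) => ∃ s ∈ insert [] c.nodes, ∃ t ∈ insert [] c.nodes,
      s ≠ t ∧ S (ℓ s) ∧ S (ℓ t) := by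
  set δ : B → Prop × Prop → Prop × Prop → Prop × Prop := fun b p q =>
    (S b ∨ p.1 ∨ q.1, p.2 ∨ q.2 ∨ (S b ∧ (p.1 ∨ q.1)) ∨ (p.1 ∧ q.1)) with hδ
  refine ⟨Prop × Prop, inferInstance, (False, False), δ, fun b p => p.2 ∨ (S b ∧ p.1),
    fun c ℓ hc => ?_⟩
  have e : ∀ f : Fo Node, f.Nodup → f.eval (False, False) δ ℓ = (∃ s ∈ f.nodes, S (ℓ s),
      ∃ s ∈ f.nodes, ∃ t ∈ f.nodes, s ≠ t ∧ S (ℓ s) ∧ S (ℓ t)) := by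
    intro f hf
    induction f with
    | nil => simp [Fo.eval, Fo.nodes]
    | cons a c s ihc ihs =>
      obtain ⟨h1, h2, h3, h4, h5⟩ := hf
      rw [Set.disjoint_left] at h3
      simp only [Fo.eval, Fo.nodes, ihc h4, ihs h5]
      simp only [hδ]
      refine Prod.ext (propext ?_) (propext ?_)
      · simp only [Set.exists_mem_insert, Set.mem_union, or_and_right, exists_or]
      · constructor
        · rintro (⟨x, hx, y, hy, h⟩ | ⟨x, hx, y, hy, h⟩ | ⟨ha, ⟨x, hx, h⟩ | ⟨x, hx, h⟩⟩ |
            ⟨⟨x, hx, h⟩, ⟨y, hy, h'⟩⟩)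
          · exact ⟨x, by simp [hx], y, by simp [hy], h⟩
          · exact ⟨x, by simp [hx], y, by simp [hy], h⟩
          · exact ⟨a, by simp, x, by simp [hx], fun e => h1 (e ▸ hx), ha, h⟩
          · exact ⟨a, by simp, x, by simp [hx], fun e => h2 (e ▸ hx), ha, h⟩
          · exact ⟨x, by simp [hx], y, by simp [hy], fun e => h3 hx (e ▸ hy), h, h'⟩
        · rintro ⟨x, rfl | hx | hx, y, rfl | hy | hy, hne, hSx, hSy⟩
          · exact absurd rfl hne
          · exact Or.inr (Or.inr (Or.inl ⟨hSx, Or.inl ⟨y, hy, hSy⟩⟩))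
          · exact Or.inr (Or.inr (Or.inl ⟨hSx, Or.inr ⟨y, hy, hSy⟩⟩))
          · exact Or.inr (Or.inr (Or.inl ⟨hSy, Or.inl ⟨x, hx, hSx⟩⟩))
          · exact Or.inl ⟨x, hx, y, hy, hne, hSx, hSy⟩
          · exact Or.inr (Or.inr (Or.inr ⟨⟨x, hx, hSx⟩, ⟨y, hy, hSy⟩⟩))
          · exact Or.inr (Or.inr (Or.inl ⟨hSy, Or.inr ⟨x, hx, hSx⟩⟩))
          · exact Or.inr (Or.inr (Or.inr ⟨⟨y, hy, hSy⟩, ⟨x, hx, hSx⟩⟩))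
          · exact Or.inr (Or.inl ⟨x, hx, y, hy, hne, hSx, hSy⟩)
  rw [e c hc.1]
  constructor
  · rintro ⟨x, rfl | hx, y, rfl | hy, hne, hSx, hSy⟩
    · exact absurd rfl hne
    · exact Or.inr ⟨hSx, y, hy, hSy⟩
    · exact Or.inr ⟨hSy, x, hx, hSx⟩
    · exact Or.inl ⟨x, hx, y, hy, hne, hSx, hSy⟩
  · rintro (⟨x, hx, y, hy, h⟩ | ⟨h0, y, hy, h⟩)
    · exact ⟨x, Or.inr hx, y, Or.inr hy, h⟩
    · exact ⟨[], Or.inl rfl, y, Or.inr hy, fun e => hc.2 (e ▸ hy), h0, h⟩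

theorem unique_node (S : B → Prop) :
    Rec fun c (ℓ : Node → B) => ∃ s ∈ insert [] c.nodes, S (ℓ s) ∧
      ∀ t ∈ insert [] c.nodes, S (ℓ t) → t = s := by
  refine ((exists_node S).and (two_nodes S).not).congr fun c ℓ _ => ?_
  constructor
  · rintro ⟨⟨s, hs, h⟩, h2⟩
    refine ⟨s, hs, h, fun t ht h' => ?_⟩
    by_contra hne
    exact h2 ⟨t, ht, s, hs, hne, h', h⟩
  · rintro ⟨s, hs, h, hu⟩
    refine ⟨⟨s, hs, h⟩, ?_⟩
    rintro ⟨x, hx, y, hy, hne, h1, h2⟩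
    exact hne ((hu x hx h1).trans (hu y hy h2).symm)

theorem desc_pair (S S' : B → Prop) :
    Rec fun c (ℓ : Node → B) => (∃ x y, c.desc x y ∧ S (ℓ x) ∧ S' (ℓ y)) ∨
      (S (ℓ []) ∧ ∃ y ∈ insert [] c.nodes, S' (ℓ y)) := by
  set δ : B → Prop × Prop → Prop × Prop → Prop × Prop := fun b p q =>
    (S' b ∨ p.1 ∨ q.1, (S b ∧ (S' b ∨ p.1)) ∨ p.2 ∨ q.2) with hδ
  refine ⟨Prop × Prop, inferInstance, (False, False), δ,
    fun b p => p.2 ∨ (S b ∧ (S' b ∨ p.1)), fun c ℓ hc => ?_⟩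
  have e : ∀ f : Fo Node, f.eval (False, False) δ ℓ = (∃ s ∈ f.nodes, S' (ℓ s),
      ∃ x y, f.desc x y ∧ S (ℓ x) ∧ S' (ℓ y)) := by
    intro f
    induction f with
    | nil => simp [Fo.eval, Fo.nodes, Fo.desc]
    | cons a c s ihc ihs =>
      simp only [Fo.eval, Fo.nodes, ihc, ihs, Fo.desc]
      simp only [hδ]
      refine Prod.ext (propext ?_) (propext ?_)
      · simp only [Set.exists_mem_insert, Set.mem_union, or_and_right, exists_or]
      · constructor
        · rintro (⟨h1, h2 | ⟨y, hy, h⟩⟩ | ⟨x, y, h, h'⟩ | ⟨x, y, h, h'⟩)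
          · exact ⟨a, a, Or.inl ⟨rfl, Or.inl rfl⟩, h1, h2⟩
          · exact ⟨a, y, Or.inl ⟨rfl, Or.inr hy⟩, h1, h⟩
          · exact ⟨x, y, Or.inr (Or.inl h), h'⟩
          · exact ⟨x, y, Or.inr (Or.inr h), h'⟩
        · rintro ⟨x, y, ⟨rfl, rfl | hy⟩ | h | h, h1, h2⟩
          · exact Or.inl ⟨h1, Or.inl h2⟩
          · exact Or.inl ⟨h1, Or.inr ⟨y, hy, h2⟩⟩
          · exact Or.inr (Or.inl ⟨x, y, h, h1, h2⟩)
          · exact Or.inr (Or.inr ⟨x, y, h, h1, h2⟩)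
  rw [e]
  simp

theorem sib_pair (S S' : B → Prop) :
    Rec fun c (ℓ : Node → B) => ∃ x y, c.sib x y ∧ S (ℓ x) ∧ S' (ℓ y) := by
  set δ : B → Prop × Prop → Prop × Prop → Prop × Prop := fun b p q =>
    (S' b ∨ q.1, (S b ∧ (S' b ∨ q.1)) ∨ p.2 ∨ q.2) with hδ
  refine ⟨Prop × Prop, inferInstance, (False, False), δ, fun _ p => p.2, fun c ℓ hc => ?_⟩
  have e : ∀ f : Fo Node, f.eval (False, False) δ ℓ = (∃ s ∈ f.tops, S' (ℓ s),
      ∃ x y, f.sib x y ∧ S (ℓ x) ∧ S' (ℓ y)) := by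
    intro f
    induction f with
    | nil => simp [Fo.eval, Fo.tops, Fo.sib]
    | cons a c s ihc ihs =>
      simp only [Fo.eval, Fo.tops, ihc, ihs, Fo.sib]
      simp only [hδ]
      refine Prod.ext (propext ?_) (propext ?_)
      · simp only [Set.exists_mem_insert]
      · constructor
        · rintro (⟨h1, h2 | ⟨y, hy, h⟩⟩ | ⟨x, y, h, h'⟩ | ⟨x, y, h, h'⟩)
          · exact ⟨a, a, Or.inl ⟨rfl, Or.inl rfl⟩, h1, h2⟩
          · exact ⟨a, y, Or.inl ⟨rfl, Or.inr hy⟩, h1, h⟩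
          · exact ⟨x, y, Or.inr (Or.inl h), h'⟩
          · exact ⟨x, y, Or.inr (Or.inr h), h'⟩
        · rintro ⟨x, y, ⟨rfl, rfl | hy⟩ | h | h, h1, h2⟩
          · exact Or.inl ⟨h1, Or.inl h2⟩
          · exact Or.inl ⟨h1, Or.inr ⟨y, hy, h2⟩⟩
          · exact Or.inr (Or.inl ⟨x, y, h, h1, h2⟩)
          · exact Or.inr (Or.inr ⟨x, y, h, h1, h2⟩)
  rw [e]

end Rec

/-- The forest `c` displays the nodes of `T` other than the root, in their order. -/
structure Displays (T : UTree A) (c : Fo Node) : Prop where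
  wf : WF c
  dom : (T.dom : Set Node) = insert [] c.nodes
  desc : ∀ x y, x ≠ [] → (T.descR x y ↔ c.desc x y)
  sib : ∀ x y, T.sibR x y ↔ c.sib x y

/-- The label of a node together with the variables whose value is, or contains, the node. -/
def ann (T : UTree A) (v : ℕ → Node) (V : ℕ → Set Node) (s : Node) : A × Set ℕ × Set ℕ :=
  (T.label s, {x | v x = s}, {X | s ∈ V X})

/-- Every `MSO` formula is recognized by a finite automaton reading trees annotated by
valuations. -/
theorem exists_automaton (φ : MSO A) : ∃ R : Fo Node → (Node → A × Set ℕ × Set ℕ) → Prop,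
    Rec R ∧ ∀ T c v V, Displays T c → (∀ i, v i ∈ T.dom) →
      (MSO.Sat T v V φ ↔ R c (ann T v V)) := by
  classical
  have memdom : ∀ {T : UTree A} {c}, Displays T c → ∀ s, s ∈ T.dom ↔ s ∈ insert [] c.nodes := by
    intro T c h s
    rw [← h.dom]; simp
  induction φ with
  | eq x y =>
    refine ⟨_, Rec.exists_node fun b => x ∈ b.2.1 ∧ y ∈ b.2.1, fun T c v V hT hv => ?_⟩
    simp only [ann, MSO.Sat, Set.mem_ofPred_eq]
    constructor
    · intro h; exact ⟨v x, (memdom hT _).1 (hv x), rfl, h.symm⟩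
    · rintro ⟨s, -, h1, h2⟩; exact h1.trans h2.symm
  | desc x y =>
    refine ⟨_, Rec.desc_pair (fun b => x ∈ b.2.1) (fun b => y ∈ b.2.1), fun T c v V hT hv => ?_⟩
    simp only [ann, MSO.Sat, Set.mem_ofPred_eq]
    by_cases hx : v x = []
    · refine iff_of_true ⟨hv x, hv y, ?_⟩ (Or.inr ⟨hx, v y, (memdom hT _).1 (hv y), rfl⟩)
      rw [hx]; exact List.nil_prefix
    · rw [hT.desc _ _ hx]
      constructor
      · intro h; exact Or.inl ⟨_, _, h, rfl, rfl⟩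
      · rintro (⟨_, _, h, rfl, rfl⟩ | ⟨h, -⟩)
        · exact h
        · exact absurd h hx
  | sib x y =>
    refine ⟨_, Rec.sib_pair (fun b => x ∈ b.2.1) (fun b => y ∈ b.2.1), fun T c v V hT hv => ?_⟩
    simp only [ann, MSO.Sat, Set.mem_ofPred_eq]
    rw [hT.sib]
    constructor
    · intro h; exact ⟨_, _, h, rfl, rfl⟩
    · rintro ⟨_, _, h, rfl, rfl⟩; exact h
  | lab a x =>
    refine ⟨_, Rec.exists_node fun b => b.1 = a ∧ x ∈ b.2.1, fun T c v V hT hv => ?_⟩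
    simp only [ann, MSO.Sat, Set.mem_ofPred_eq]
    constructor
    · intro h; exact ⟨v x, (memdom hT _).1 (hv x), h.2, rfl⟩
    · rintro ⟨s, -, h1, rfl⟩; exact ⟨hv x, h1⟩
  | mem X x =>
    refine ⟨_, Rec.exists_node fun b => X ∈ b.2.2 ∧ x ∈ b.2.1, fun T c v V hT hv => ?_⟩
    simp only [ann, MSO.Sat, Set.mem_ofPred_eq]
    constructor
    · intro h; exact ⟨v x, (memdom hT _).1 (hv x), h, rfl⟩
    · rintro ⟨s, -, h1, rfl⟩; exact h1
  | not φ ih =>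
    obtain ⟨R, hR, h⟩ := ih
    exact ⟨_, hR.not, fun T c v V hT hv => not_congr (h T c v V hT hv)⟩
  | and φ ψ ih ih' =>
    obtain ⟨R, hR, h⟩ := ih
    obtain ⟨R', hR', h'⟩ := ih'
    exact ⟨_, hR.and hR', fun T c v V hT hv => and_congr (h T c v V hT hv) (h' T c v V hT hv)⟩
  | exFO n φ ih =>
    obtain ⟨R, hR, h⟩ := ih
    have hRc : ∀ c ℓ ℓ', WF c → (∀ s ∈ insert [] c.nodes, ℓ s = ℓ' s) → (R c ℓ ↔ R c ℓ') := by
      obtain ⟨Q, hQ, q0, δ, acc, hR⟩ := hR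
      intro c ℓ ℓ' hc he
      rw [hR c ℓ hc, hR c ℓ' hc, he [] (by simp),
        Fo.eval_congr q0 δ c fun x hx => he x (by simp [hx])]
    set r : A × Set ℕ × Set ℕ → Prop → A × Set ℕ × Set ℕ :=
      fun b t => (b.1, {x | if x = n then t else x ∈ b.2.1}, b.2.2) with hr
    refine ⟨_, (hR.and (Rec.unique_node fun b => n ∈ b.2.1)).proj r, fun T c v V hT hv => ?_⟩
    have e1 : ∀ (X : Set Node) s, n ∈ (r (ann T v V s) (s ∈ X)).2.1 ↔ s ∈ X := by
      intro X s; simp [hr]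
    simp only [e1]
    have e2 : ∀ (X : Set Node) s, s ∈ insert [] c.nodes → s ∈ X →
        (∀ t ∈ insert [] c.nodes, t ∈ X → t = s) →
        ∀ t ∈ insert [] c.nodes, r (ann T v V t) (t ∈ X) = ann T (Function.update v n s) V t := by
      intro X s hs hsX hu t ht
      simp only [hr, ann]
      refine Prod.ext rfl (Prod.ext ?_ rfl)
      ext x
      by_cases hx : x = n
      · subst hx
        simp only [Set.mem_ofPred_eq, if_true, Function.update_self]
        exact ⟨fun h => (hu t ht h).symm, fun h => h ▸ hsX⟩
      · simp [hx]
    have hval : ∀ s ∈ T.dom, ∀ i, Function.update v n s i ∈ T.dom := fun s hs i =>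
      update_valid (N := i + 1) (fun i _ => hv i) n hs i (by omega)
    constructor
    · rintro ⟨s, hs, hsat⟩
      have hs' := (memdom hT s).1 hs
      refine ⟨{s}, ?_, s, hs', rfl, fun t _ ht => ht⟩
      rw [hRc _ _ _ hT.wf (e2 {s} s hs' rfl fun t _ ht => ht)]
      exact (h T c _ V hT (hval s hs)).1 hsat
    · rintro ⟨X, hX, s, hs', hsX, hu⟩
      have hs := (memdom hT s).2 hs'
      refine ⟨s, hs, (h T c _ V hT (hval s hs)).2 ?_⟩
      rwa [hRc _ _ _ hT.wf (e2 X s hs' hsX hu)] at hX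
  | exSO n φ ih =>
    obtain ⟨R, hR, h⟩ := ih
    have hRc : ∀ c ℓ ℓ', WF c → (∀ s ∈ insert [] c.nodes, ℓ s = ℓ' s) → (R c ℓ ↔ R c ℓ') := by
      obtain ⟨Q, hQ, q0, δ, acc, hR⟩ := hR
      intro c ℓ ℓ' hc he
      rw [hR c ℓ hc, hR c ℓ' hc, he [] (by simp),
        Fo.eval_congr q0 δ c fun x hx => he x (by simp [hx])]
    set r : A × Set ℕ × Set ℕ → Prop → A × Set ℕ × Set ℕ :=
      fun b t => (b.1, b.2.1, {x | if x = n then t else x ∈ b.2.2}) with hr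
    refine ⟨_, hR.proj r, fun T c v V hT hv => ?_⟩
    have e2 : ∀ (X Y : Set Node), (∀ t ∈ insert [] c.nodes, t ∈ X ↔ t ∈ Y) →
        ∀ t ∈ insert [] c.nodes, r (ann T v V t) (t ∈ X) = ann T v (Function.update V n Y) t := by
      intro X Y hXY t ht
      simp only [hr, ann]
      refine Prod.ext rfl (Prod.ext rfl ?_)
      ext x
      by_cases hx : x = n
      · subst hx
        simpa using hXY t ht
      · simp [hx]
    constructor
    · rintro ⟨S, hS, hsat⟩
      refine ⟨S, ?_⟩
      rw [hRc _ _ _ hT.wf (e2 S S fun _ _ => Iff.rfl)]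
      exact (h T c v _ hT hv).1 hsat
    · rintro ⟨X, hX⟩
      refine ⟨X ∩ ↑T.dom, Set.inter_subset_right, (h T c v _ hT hv).2 ?_⟩
      rwa [hRc _ _ _ hT.wf (e2 X (X ∩ ↑T.dom) fun t ht => by
        have := (memdom hT t).2 ht
        simp [this])] at hX

/-! ### Turning a forest into an ordered tree -/

namespace Fo

/-- Relabelling of the nodes of a forest. -/
def map {α β : Type} (f : α → β) : Fo α → Fo β
  | nil => nil
  | cons a c s => cons (f a) (c.map f) (s.map f)

section map
variable {α β : Type} (f : α → β)

theorem nodes_map (g : Fo α) : (g.map f).nodes = f '' g.nodes := by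
  induction g with
  | nil => simp [map, nodes]
  | cons a c s ihc ihs => simp [map, nodes, ihc, ihs, Set.image_insert_eq, Set.image_union]

theorem tops_map (g : Fo α) : (g.map f).tops = f '' g.tops := by
  induction g with
  | nil => simp [map, tops]
  | cons a c s ihc ihs => simp [map, tops, ihs, Set.image_insert_eq]

theorem child_map (g : Fo α) (u w : β) :
    (g.map f).child u w ↔ ∃ x y, g.child x y ∧ f x = u ∧ f y = w := by
  induction g with
  | nil => simp [map, child]
  | cons a c s ihc ihs =>
    simp only [map, child, ihc, ihs, tops_map]
    constructor
    · rintro (⟨rfl, y, hy, rfl⟩ | ⟨x, y, h, h'⟩ | ⟨x, y, h, h'⟩)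
      · exact ⟨a, y, Or.inl ⟨rfl, hy⟩, rfl, rfl⟩
      · exact ⟨x, y, Or.inr (Or.inl h), h'⟩
      · exact ⟨x, y, Or.inr (Or.inr h), h'⟩
    · rintro ⟨x, y, ⟨rfl, hy⟩ | h | h, rfl, rfl⟩
      · exact Or.inl ⟨rfl, y, hy, rfl⟩
      · exact Or.inr (Or.inl ⟨x, y, h, rfl, rfl⟩)
      · exact Or.inr (Or.inr ⟨x, y, h, rfl, rfl⟩)

theorem eval_map {B Q : Type} (q0 : Q) (δ : B → Q → Q → Q) (ℓ : β → B) (g : Fo α) :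
    (g.map f).eval q0 δ ℓ = g.eval q0 δ (fun x => ℓ (f x)) := by
  induction g with
  | nil => rfl
  | cons a c s ihc ihs => simp [map, eval, ihc, ihs]

theorem map_congr {f f' : α → β} (g : Fo α) (h : ∀ x ∈ g.nodes, f x = f' x) :
    g.map f = g.map f' := by
  induction g with
  | nil => rfl
  | cons a c s ihc ihs =>
    simp only [map]
    rw [h a (by simp [nodes]), ihc fun x hx => h x (by simp [nodes, hx]),
      ihs fun x hx => h x (by simp [nodes, hx])]

theorem injOn_of_nodup_map (g : Fo α) (h : (g.map f).Nodup) : Set.InjOn f g.nodes := by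
  induction g with
  | nil => simp [nodes]
  | cons a c s ihc ihs =>
    obtain ⟨h1, h2, h3, h4, h5⟩ := h
    rw [nodes_map] at h1 h2
    rw [nodes_map, nodes_map, Set.disjoint_left] at h3
    rintro x (rfl | hx | hx) y (rfl | hy | hy) hxy
    · rfl
    · exact absurd ⟨y, hy, hxy.symm⟩ h1
    · exact absurd ⟨y, hy, hxy.symm⟩ h2
    · exact absurd ⟨x, hx, hxy⟩ h1
    · exact ihc h4 hx hy hxy
    · exact absurd ⟨y, hy, rfl⟩ (h3 ⟨x, hx, hxy⟩)
    · exact absurd ⟨x, hx, hxy⟩ h2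
    · exact absurd ⟨x, hx, rfl⟩ (h3 ⟨y, hy, hxy.symm⟩)
    · exact ihs h5 hx hy hxy

end map

theorem nodes_finite {α : Type} (g : Fo α) : g.nodes.Finite := by
  induction g with
  | nil => exact Set.finite_empty
  | cons a c s ihc ihs => exact (ihc.union ihs).insert a

theorem child_nodes {α : Type} (g : Fo α) {x y : α} (h : g.child x y) :
    x ∈ g.nodes ∧ y ∈ g.nodes := by
  induction g with
  | nil => exact h.elim
  | cons a c s ihc ihs =>
    rcases h with ⟨rfl, hy⟩ | h | h
    · exact ⟨Or.inl rfl, Or.inr (Or.inl (c.tops_subset_nodes hy))⟩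
    · exact ⟨Or.inr (Or.inl (ihc h).1), Or.inr (Or.inl (ihc h).2)⟩
    · exact ⟨Or.inr (Or.inr (ihs h).1), Or.inr (Or.inr (ihs h).2)⟩

/-- Replace the nodes of a forest by their addresses, when its trees are attached below the node
`p` as the children number `i, i + 1, …`. -/
def num {α : Type} : Fo α → Node → ℕ → Fo Node
  | nil, _, _ => nil
  | cons _ c s, p, i => cons (p ++ [i]) (num c (p ++ [i]) 0) (num s p (i + 1))

theorem exists_map_eq_num {α : Type} (g : Fo α) (hg : g.Nodup) (p : Node) (i : ℕ) :
    ∃ f : α → Node, g.map f = g.num p i := by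
  classical
  induction g generalizing p i with
  | nil => exact ⟨fun _ => [], rfl⟩
  | cons a c s ihc ihs =>
    obtain ⟨h1, h2, h3, h4, h5⟩ := hg
    obtain ⟨fc, hc⟩ := ihc h4 (p ++ [i]) 0
    obtain ⟨fs, hs⟩ := ihs h5 p (i + 1)
    refine ⟨fun x => if x = a then p ++ [i] else if x ∈ c.nodes then fc x else fs x, ?_⟩
    simp only [map, num, if_true, ← hc, ← hs]
    congr 1
    · refine map_congr _ fun x hx => ?_
      rw [if_neg (by rintro rfl; exact h1 hx), if_pos hx]
    · refine map_congr _ fun x hx => ?_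
      rw [if_neg (by rintro rfl; exact h2 hx), if_neg fun h => Set.disjoint_left.1 h3 h hx]

section num
variable {α : Type}

theorem num_mem {g : Fo α} {p : Node} {i : ℕ} {y : Node} (hy : y ∈ (g.num p i).nodes) :
    ∃ j, i ≤ j ∧ p ++ [j] <+: y := by
  induction g generalizing p i with
  | nil => exact hy.elim
  | cons a c s ihc ihs =>
    rcases hy with rfl | hy | hy
    · exact ⟨i, le_rfl, List.prefix_rfl⟩
    · obtain ⟨j, _, h⟩ := ihc hy
      exact ⟨i, le_rfl, (List.prefix_append _ _).trans h⟩
    · obtain ⟨j, hj, h⟩ := ihs hy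
      exact ⟨j, by omega, h⟩

theorem num_mem_below {g : Fo α} {p : Node} {i : ℕ} {y : Node}
    (hy : y ∈ (g.num (p ++ [i]) 0).nodes) : p ++ [i] <+: y ∧ (p ++ [i]).length < y.length := by
  obtain ⟨j, _, h⟩ := num_mem hy
  exact ⟨(List.prefix_append _ _).trans h, by have := h.length_le; simp at this ⊢; omega⟩

theorem num_mem_right {g : Fo α} {p : Node} {i : ℕ} {y : Node}
    (hy : y ∈ (g.num p (i + 1)).nodes) :
    ¬ p ++ [i] <+: y ∧ (p ++ [i]).length ≤ y.length := by
  obtain ⟨j, hj, h⟩ := num_mem hy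
  refine ⟨fun h' => ?_, by have := h.length_le; simpa using this⟩
  have := (List.prefix_of_prefix_length_le h h' (by simp)).eq_of_length (by simp)
  simp at this
  omega

theorem num_right_not_prefix {g : Fo α} {p : Node} {i : ℕ} {x y : Node}
    (hx : x ∈ (g.num p (i + 1)).nodes) (hxy : x <+: y) (hy : p ++ [i] <+: y) : False :=
  (num_mem_right hx).1 (List.prefix_of_prefix_length_le hy hxy (num_mem_right hx).2)

theorem num_nodup (g : Fo α) (p : Node) (i : ℕ) : (g.num p i).Nodup := by
  induction g generalizing p i with
  | nil => trivial
  | cons a c s ihc ihs =>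
    refine ⟨fun h => ?_, fun h => ?_, Set.disjoint_left.2 fun x hx hx' => ?_, ihc _ _, ihs _ _⟩
    · exact lt_irrefl _ (num_mem_below h).2
    · exact (num_mem_right h).1 List.prefix_rfl
    · exact (num_mem_right hx').1 (num_mem_below hx).1

theorem num_tops {g : Fo α} {p : Node} {i : ℕ} {y : Node} :
    y ∈ (g.num p i).tops ↔ y ∈ (g.num p i).nodes ∧ ∃ j, y = p ++ [j] := by
  induction g generalizing p i with
  | nil => simp [num, tops, nodes]
  | cons a c s ihc ihs =>
    simp only [num, tops, nodes, Set.mem_insert_iff, Set.mem_union, ihs]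
    constructor
    · rintro (rfl | ⟨h, h'⟩)
      · exact ⟨Or.inl rfl, i, rfl⟩
      · exact ⟨Or.inr (Or.inr h), h'⟩
    · rintro ⟨rfl | h | h, j, hj⟩
      · exact Or.inl rfl
      · have := (num_mem_below h).2
        simp [hj] at this
      · exact Or.inr ⟨h, j, hj⟩

theorem num_prefix_closed {g : Fo α} {p : Node} {i : ℕ} {x y : Node}
    (hy : y ∈ (g.num p i).nodes) (hxy : x <+: y) (hx : p.length < x.length) :
    x ∈ (g.num p i).nodes := by
  induction g generalizing p i with
  | nil => exact hy.elim
  | cons a c s ihc ihs =>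
    rcases hy with rfl | hy | hy
    · exact Or.inl (hxy.eq_of_length (by have := hxy.length_le; simp at this ⊢; omega))
    · by_cases h : (p ++ [i]).length < x.length
      · exact Or.inr (Or.inl (ihc hy h))
      · refine Or.inl ((List.prefix_of_prefix_length_le hxy (num_mem_below hy).1
          (by omega)).eq_of_length ?_)
        simp at h ⊢; omega
    · exact Or.inr (Or.inr (ihs hy hx))

theorem num_sib_closed {g : Fo α} {p : Node} {i : ℕ} {x : Node} {k l : ℕ}
    (hy : x ++ [k] ∈ (g.num p i).nodes) (hlk : l < k) (hl : x = p → i ≤ l) :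
    x ++ [l] ∈ (g.num p i).nodes := by
  induction g generalizing p i with
  | nil => exact hy.elim
  | cons a c s ihc ihs =>
    rcases hy with hy | hy | hy
    · have := List.append_inj' hy rfl
      have h1 := hl this.1
      have h2 : k = i := by simpa using this.2
      omega
    · exact Or.inr (Or.inl (ihc hy fun _ => Nat.zero_le _))
    · by_cases h : x = p ∧ l = i
      · obtain ⟨rfl, rfl⟩ := h
        exact Or.inl rfl
      · refine Or.inr (Or.inr (ihs hy fun hx => ?_))
        have h1 := hl hx
        have : l ≠ i := fun h' => h ⟨hx, h'⟩
        omega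

theorem num_desc {g : Fo α} {p : Node} {i : ℕ} {x y : Node} :
    (g.num p i).desc x y ↔ x ∈ (g.num p i).nodes ∧ y ∈ (g.num p i).nodes ∧ x <+: y := by
  induction g generalizing p i with
  | nil => simp [num, desc, nodes]
  | cons a c s ihc ihs =>
    simp only [num, desc, nodes, Set.mem_insert_iff, Set.mem_union, ihc, ihs]
    constructor
    · rintro (⟨rfl, rfl | hy⟩ | ⟨h1, h2, h3⟩ | ⟨h1, h2, h3⟩)
      · simp
      · exact ⟨Or.inl rfl, Or.inr (Or.inl hy), (num_mem_below hy).1⟩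
      · exact ⟨Or.inr (Or.inl h1), Or.inr (Or.inl h2), h3⟩
      · exact ⟨Or.inr (Or.inr h1), Or.inr (Or.inr h2), h3⟩
    · rintro ⟨rfl | hx | hx, rfl | hy | hy, h⟩
      · exact Or.inl ⟨rfl, Or.inl rfl⟩
      · exact Or.inl ⟨rfl, Or.inr hy⟩
      · exact absurd h (num_mem_right hy).1
      · exact absurd h.length_le (not_le.2 (num_mem_below hx).2)
      · exact Or.inr (Or.inl ⟨hx, hy, h⟩)
      · exact absurd ((num_mem_below hx).1.trans h) (num_mem_right hy).1
      · exact (num_right_not_prefix hx h List.prefix_rfl).elim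
      · exact (num_right_not_prefix hx h (num_mem_below hy).1).elim
      · exact Or.inr (Or.inr ⟨hx, hy, h⟩)

theorem num_child {g : Fo α} {p : Node} {i : ℕ} {x y : Node} :
    (g.num p i).child x y ↔
      x ∈ (g.num p i).nodes ∧ y ∈ (g.num p i).nodes ∧ ∃ k, y = x ++ [k] := by
  induction g generalizing p i with
  | nil => simp [num, child, nodes]
  | cons a c s ihc ihs =>
    simp only [num, child, nodes, Set.mem_insert_iff, Set.mem_union, ihc, ihs, num_tops]
    constructor
    · rintro (⟨rfl, hy, h⟩ | ⟨h1, h2, h3⟩ | ⟨h1, h2, h3⟩)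
      · exact ⟨Or.inl rfl, Or.inr (Or.inl hy), h⟩
      · exact ⟨Or.inr (Or.inl h1), Or.inr (Or.inl h2), h3⟩
      · exact ⟨Or.inr (Or.inr h1), Or.inr (Or.inr h2), h3⟩
    · rintro ⟨hx, hy, k, hk⟩
      have h : x <+: y := by rw [hk]; exact List.prefix_append _ _
      rcases hx with rfl | hx | hx <;> rcases hy with rfl | hy | hy
      · simp at hk
      · exact Or.inl ⟨rfl, hy, k, hk⟩
      · exact absurd h (num_mem_right hy).1
      · exact absurd h.length_le (not_le.2 (num_mem_below hx).2)
      · exact Or.inr (Or.inl ⟨hx, hy, k, hk⟩)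
      · exact absurd ((num_mem_below hx).1.trans h) (num_mem_right hy).1
      · exact (num_right_not_prefix hx h List.prefix_rfl).elim
      · exact (num_right_not_prefix hx h (num_mem_below hy).1).elim
      · exact Or.inr (Or.inr ⟨hx, hy, k, hk⟩)

theorem num_below_right_not_sib {g g' : Fo α} {p u : Node} {i j k : ℕ}
    (hx : u ++ [j] ∈ (g.num (p ++ [i]) 0).nodes) (hy : u ++ [k] ∈ (g'.num p (i + 1)).nodes) :
    False := by
  have h := num_mem_below hx
  have h1 : p ++ [i] <+: u := List.prefix_of_prefix_length_le h.1 (List.prefix_append u [j])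
    (by have := h.2; simp at this ⊢; omega)
  exact (num_mem_right hy).1 (h1.trans (List.prefix_append _ _))

theorem num_sib {g : Fo α} {p : Node} {i : ℕ} {x y : Node} :
    (g.num p i).sib x y ↔ x ∈ (g.num p i).nodes ∧ y ∈ (g.num p i).nodes ∧
      ∃ (u : Node) (j k : ℕ), x = u ++ [j] ∧ y = u ++ [k] ∧ j ≤ k := by
  induction g generalizing p i with
  | nil => simp [num, sib, nodes]
  | cons a c s ihc ihs =>
    simp only [num, sib, nodes, Set.mem_insert_iff, Set.mem_union, ihc, ihs, num_tops]
    constructor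
    · rintro (⟨rfl, rfl | ⟨hy, k, rfl⟩⟩ | ⟨h1, h2, h3⟩ | ⟨h1, h2, h3⟩)
      · exact ⟨Or.inl rfl, Or.inl rfl, p, i, i, rfl, rfl, le_rfl⟩
      · refine ⟨Or.inl rfl, Or.inr (Or.inr hy), p, i, k, rfl, rfl, ?_⟩
        obtain ⟨j, hj, h⟩ := num_mem hy
        have := h.eq_of_length (by simp)
        simp at this; omega
      · exact ⟨Or.inr (Or.inl h1), Or.inr (Or.inl h2), h3⟩
      · exact ⟨Or.inr (Or.inr h1), Or.inr (Or.inr h2), h3⟩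
    · rintro ⟨hx, hy, u, j, k, ex, ey, hjk⟩
      rcases hx with hx | hx | hx <;> rcases hy with hy | hy | hy
      · exact Or.inl ⟨hx, Or.inl hy⟩
      · have h := (num_mem_below hy).2
        rw [← hx, ex, ey] at h
        simp at h
      · refine Or.inl ⟨hx, Or.inr ⟨hy, k, ?_⟩⟩
        rw [ey, (List.append_inj' (ex.symm.trans hx) rfl).1]
      · have h := (num_mem_below hx).2
        rw [← hy, ex, ey] at h
        simp at h
      · exact Or.inr (Or.inl ⟨hx, hy, u, j, k, ex, ey, hjk⟩)
      · subst ex ey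
        exact (num_below_right_not_sib hx hy).elim
      · exfalso
        obtain ⟨h1, h2⟩ := List.append_inj' (ey.symm.trans hy) rfl
        obtain ⟨j', hj', h⟩ := num_mem hx
        rw [ex, h1] at h
        have h3 := h.eq_of_length (by simp)
        simp at h2 h3
        omega
      · subst ex ey
        exact (num_below_right_not_sib hy hx).elim
      · exact Or.inr (Or.inr ⟨hx, hy, u, j, k, ex, ey, hjk⟩)

end num

end Fo

/-- The tree with root `[]` whose remaining nodes are the addresses in the forest `g`. -/
noncomputable def realize (g : Fo Node) (lab : Node → A) : UTree A where
  dom := ((g.num [] 0).nodes_finite.insert []).toFinset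
  nil_mem := by simp
  prefix_closed := by
    intro s t hs hts
    simp only [Set.Finite.mem_toFinset, Set.mem_insert_iff] at hs ⊢
    by_cases ht : t = []
    · exact Or.inl ht
    · right
      rcases hs with rfl | hs
      · exact absurd (List.prefix_nil.1 hts) ht
      · exact Fo.num_prefix_closed hs hts (List.length_pos_of_ne_nil ht)
  sib_closed := by
    intro s i j hs hji
    simp only [Set.Finite.mem_toFinset, Set.mem_insert_iff, List.append_eq_nil_iff,
      List.cons_ne_nil, and_false, false_or] at hs ⊢
    exact Fo.num_sib_closed hs hji fun _ => Nat.zero_le _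
  label := lab

theorem mem_realize {g : Fo Node} {lab : Node → A} {s : Node} :
    s ∈ (realize g lab).dom ↔ s = [] ∨ s ∈ (g.num [] 0).nodes := by
  simp [realize]

theorem nil_notMem_num (g : Fo Node) : [] ∉ (g.num [] 0).nodes := fun h => by
  obtain ⟨j, _, h⟩ := Fo.num_mem h
  simp at h

theorem displays_realize (g : Fo Node) (lab : Node → A) :
    Displays (realize g lab) (g.num [] 0) where
  wf := ⟨Fo.num_nodup _ _ _, nil_notMem_num g⟩
  dom := by ext s; simp [mem_realize]
  desc x y hx := by
    rw [Fo.num_desc]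
    simp only [UTree.descR, mem_realize, hx, false_or]
    constructor
    · rintro ⟨h1, rfl | h2, h3⟩
      · exact absurd (List.prefix_nil.1 h3) hx
      · exact ⟨h1, h2, h3⟩
    · rintro ⟨h1, h2, h3⟩
      exact ⟨h1, Or.inr h2, h3⟩
  sib x y := by
    rw [Fo.num_sib]
    simp only [UTree.sibR, mem_realize]
    constructor
    · rintro ⟨h1, h2, u, i, j, rfl, rfl, hij⟩
      exact ⟨by simpa using h1, by simpa using h2, u, i, j, rfl, rfl, hij⟩
    · rintro ⟨h1, h2, h3⟩
      exact ⟨Or.inr h1, Or.inr h2, h3⟩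

/-- The forest `g` presents the strict descendants of `s` in `T`, up to the order of siblings. -/
structure Presents (T : UTree A) (s : Node) (g : Fo Node) : Prop where
  nodup : g.Nodup
  mem_nodes : ∀ t, t ∈ g.nodes ↔ t ∈ T.dom ∧ s <+: t ∧ t ≠ s
  mem_tops : ∀ t, t ∈ g.tops ↔ T.childR s t
  child : ∀ x y, g.child x y ↔ x ∈ g.nodes ∧ T.childR x y

theorem childR_ne_nil {T : UTree A} {x y : Node} (h : T.childR x y) : y ≠ [] := by
  obtain ⟨_, _, i, rfl⟩ := h
  simp

/-- If `g` presents `T`, the tree realized by `g` is `T` with its siblings reordered. -/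
theorem exists_uiso {T : UTree A} {g : Fo Node} (hg : Presents T [] g) :
    ∃ lab : Node → A, UIso T (realize g lab) ∧
      lab [] = T.label [] ∧ ∀ {Q : Type} (q0 : Q) (δ : A → Q → Q → Q),
        (g.num [] 0).eval q0 δ lab = g.eval q0 δ T.label := by
  classical
  obtain ⟨f, hf⟩ := g.exists_map_eq_num hg.nodup [] 0
  have hinj : Set.InjOn f g.nodes := g.injOn_of_nodup_map f (hf ▸ Fo.num_nodup _ _ _)
  have hnodes : (g.num [] 0).nodes = f '' g.nodes := by rw [← hf, Fo.nodes_map]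
  have htops : (g.num [] 0).tops = f '' g.tops := by rw [← hf, Fo.tops_map]
  have hchild : ∀ u w, (g.num [] 0).child u w ↔ ∃ x y, g.child x y ∧ f x = u ∧ f y = w := by
    intro u w; rw [← hf, Fo.child_map]
  have hmem : ∀ t, t ∈ g.nodes ↔ t ∈ T.dom ∧ t ≠ [] := by
    intro t; rw [hg.mem_nodes]; simp
  have hfne : ∀ x ∈ g.nodes, f x ≠ [] := by
    intro x hx h
    exact nil_notMem_num g (hnodes ▸ ⟨x, hx, h⟩)
  set F : Node → Node := fun x => if x = [] then [] else f x with hF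
  have F0 : F [] = [] := by simp [hF]
  have F1 : ∀ x ∈ g.nodes, F x = f x := by
    intro x hx
    simp only [hF]
    rw [if_neg ((hmem x).1 hx).2]
  have cases_dom : ∀ x ∈ T.dom, x = [] ∨ x ∈ g.nodes := by
    intro x hx
    by_cases h : x = []
    · exact Or.inl h
    · exact Or.inr ((hmem x).2 ⟨hx, h⟩)
  have Finj : Set.InjOn F ↑T.dom := by
    intro x hx y hy hxy
    rcases cases_dom x hx with rfl | hx <;> rcases cases_dom y hy with rfl | hy
    · rfl
    · rw [F0, F1 y hy] at hxy; exact absurd hxy.symm (hfne y hy)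
    · rw [F0, F1 x hx] at hxy; exact absurd hxy (hfne x hx)
    · rw [F1 x hx, F1 y hy] at hxy; exact hinj hx hy hxy
  set lab : Node → A := fun y => T.label (Function.invFunOn F ↑T.dom y) with hlab
  have hlabF : ∀ s ∈ T.dom, lab (F s) = T.label s := by
    intro s hs
    simp only [hlab]
    rw [Finj.leftInvOn_invFunOn hs]
  refine ⟨lab, ⟨F, ⟨?_, Finj, ?_⟩, hlabF, ?_⟩, ?_, ?_⟩
  · intro x hx
    refine mem_realize.2 ?_
    rcases cases_dom x hx with rfl | hx
    · exact Or.inl F0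
    · right; rw [F1 x hx, hnodes]; exact ⟨x, hx, rfl⟩
  · intro y hy
    rcases mem_realize.1 hy with rfl | hy
    · exact ⟨[], T.nil_mem, F0⟩
    · rw [hnodes] at hy
      obtain ⟨x, hx, rfl⟩ := hy
      exact ⟨x, ((hmem x).1 hx).1, F1 x hx⟩
  · intro s hs t ht
    rcases cases_dom t ht with rfl | ht'
    · rw [F0]
      exact iff_of_false (fun h => childR_ne_nil h rfl) (fun h => childR_ne_nil h rfl)
    · have hft : f t ∈ (g.num [] 0).nodes := hnodes ▸ ⟨t, ht', rfl⟩
      rcases cases_dom s hs with rfl | hs'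
      · rw [← hg.mem_tops, F0, F1 t ht']
        have : (realize g lab).childR [] (f t) ↔ f t ∈ (g.num [] 0).tops := by
          rw [Fo.num_tops]
          simp [UTree.childR, mem_realize, hft]
        rw [this, htops]
        exact ⟨fun h => ⟨t, h, rfl⟩, fun ⟨t', h, e⟩ =>
          hinj (g.tops_subset_nodes h) ht' e ▸ h⟩
      · have hfs : f s ∈ (g.num [] 0).nodes := hnodes ▸ ⟨s, hs', rfl⟩
        rw [F1 s hs', F1 t ht']
        have h1 : (realize g lab).childR (f s) (f t) ↔ (g.num [] 0).child (f s) (f t) := by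
          rw [Fo.num_child]
          simp [UTree.childR, mem_realize, hft, hfs]
        have h2 : T.childR s t ↔ g.child s t := by rw [hg.child]; simp [hs']
        rw [h1, h2, hchild]
        refine ⟨fun h => ⟨s, t, h, rfl, rfl⟩, ?_⟩
        rintro ⟨x, y, h, ex, ey⟩
        have hn := g.child_nodes h
        rwa [← hinj hn.1 hs' ex, ← hinj hn.2 ht' ey]
  · have := hlabF [] T.nil_mem
    rwa [F0] at this
  · intro Q q0 δ
    rw [← hf, Fo.eval_map]
    refine Fo.eval_congr _ _ _ fun x hx => ?_
    rw [← F1 x hx]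
    exact hlabF x ((hmem x).1 hx).1

/-! ### Sorting siblings by their behaviour -/

section sorting
variable {Q : Type}

/-- The state reached from `q0` when `n k` trees of behaviour `k` are read for each `k`, in the
order given by the list `ks`. -/
def prodA (ks : List (Q → Q)) (q0 : Q) (n : (Q → Q) → ℕ) : Q :=
  ks.foldr (fun k q => k^[n k] q) q0

theorem prodA_congr (ks : List (Q → Q)) (q0 : Q) {n n' : (Q → Q) → ℕ}
    (h : ∀ k : Q → Q, k^[n k] = k^[n' k]) : prodA ks q0 n = prodA ks q0 n' := by
  unfold prodA
  congr 1
  funext k q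
  rw [h k]

/-- The number of children of `x` whose behaviour is `k`. -/
noncomputable def cnt (T : UTree A) (K : Node → Q → Q) (x : Node) (k : Q → Q) : ℕ :=
  {y | T.childR x y ∧ K y = k}.ncard

theorem foldr_const_act (K : Node → Q → Q) (k : Q → Q) (l : List Node) (h : ∀ t ∈ l, K t = k)
    (q : Q) : l.foldr (fun t q => K t q) q = k^[l.length] q := by
  induction l with
  | nil => rfl
  | cons t l ih =>
    rw [List.foldr_cons, ih fun t ht => h t (by simp [ht]), h t (by simp), List.length_cons,
      Function.iterate_succ_apply']

open Classical in
theorem exists_sorted (Ch : Finset Node) (K : Node → Q → Q) (ks : List (Q → Q)) (hks : ks.Nodup)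
    (q0 : Q) : ∃ l : List Node, l.Nodup ∧ (∀ t, t ∈ l ↔ t ∈ Ch ∧ K t ∈ ks) ∧
      l.foldr (fun t q => K t q) q0 = prodA ks q0 fun k => (Ch.filter fun t => K t = k).card := by
  induction ks with
  | nil => exact ⟨[], by simp, by simp, rfl⟩
  | cons k ks ih =>
    obtain ⟨hk, hks⟩ := List.nodup_cons.1 hks
    obtain ⟨l, h1, h2, h3⟩ := ih hks
    refine ⟨(Ch.filter fun t => K t = k).toList ++ l, ?_, ?_, ?_⟩
    · refine List.nodup_append.2 ⟨Finset.nodup_toList _, h1, ?_⟩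
      rintro a ha b hb rfl
      simp only [Finset.mem_toList, Finset.mem_filter] at ha
      exact hk (ha.2 ▸ ((h2 a).1 hb).2)
    · intro t
      simp only [List.mem_append, Finset.mem_toList, Finset.mem_filter, h2, List.mem_cons]
      tauto
    · rw [List.foldr_append, h3, foldr_const_act K k _ (by simp), Finset.length_toList]
      rfl

/-- The forest with trees rooted at the nodes in `l`, where `C t` is the forest below `t`. -/
def assemble (C : Node → Fo Node) (l : List Node) : Fo Node :=
  l.foldr (fun t f => .cons t (C t) f) .nil

theorem eval_assemble {B : Type} (q0 : Q) (δ : B → Q → Q → Q) (ℓ : Node → B)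
    (C : Node → Fo Node) (K : Node → Q → Q) (l : List Node)
    (h : ∀ t ∈ l, δ (ℓ t) ((C t).eval q0 δ ℓ) = K t) :
    (assemble C l).eval q0 δ ℓ = l.foldr (fun t q => K t q) q0 := by
  induction l with
  | nil => rfl
  | cons t l ih =>
    rw [List.foldr_cons, ← ih fun t ht => h t (by simp [ht]), ← h t (by simp)]
    rfl

theorem presents_assemble {T : UTree A} {s : Node} {C : Node → Fo Node} {l : List Node}
    (hl : l.Nodup) (hmem : ∀ t, t ∈ l ↔ T.childR s t) (hC : ∀ t ∈ l, Presents T t (C t)) :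
    Presents T s (assemble C l) := by
  have hch : ∀ t ∈ l, T.childR s t := fun t => (hmem t).1
  have key : (assemble C l).Nodup ∧
      (∀ x, x ∈ (assemble C l).nodes ↔ ∃ t ∈ l, x ∈ T.dom ∧ t <+: x) ∧
      (∀ x, x ∈ (assemble C l).tops ↔ x ∈ l) ∧
      (∀ x y, (assemble C l).child x y ↔ x ∈ (assemble C l).nodes ∧ T.childR x y) := by
    clear hmem
    induction l with
    | nil => exact ⟨trivial, by simp [assemble, Fo.nodes], by simp [assemble, Fo.tops],
        by simp [assemble, Fo.nodes, Fo.child]⟩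
    | cons t l ih =>
      obtain ⟨htl, hl⟩ := List.nodup_cons.1 hl
      obtain ⟨h1, h2, h3, h4⟩ := ih hl (fun t ht => hC t (by simp [ht]))
        (fun t ht => hch t (by simp [ht]))
      have ht := hC t (by simp)
      have htd : T.childR s t := hch t (by simp)
      -- distinct children of `s` have incomparable subtrees
      have hdis : ∀ x, t <+: x → x ∉ (assemble C l).nodes := by
        intro x hx hx'
        obtain ⟨t', ht', -, h'⟩ := (h2 x).1 hx'
        obtain ⟨-, -, i, hi⟩ := htd
        obtain ⟨-, -, j, hj⟩ := hch t' (by simp [ht'])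
        have hlen : t.length = t'.length := by simp [hi, hj]
        have : t = t' := (List.prefix_of_prefix_length_le hx h' hlen.le).eq_of_length hlen
        exact htl (this ▸ ht')
      have e : assemble C (t :: l) = .cons t (C t) (assemble C l) := rfl
      rw [e]
      refine ⟨⟨fun h => ((ht.mem_nodes t).1 h).2.2 rfl, hdis t List.prefix_rfl,
        Set.disjoint_left.2 fun x hx => hdis x ((ht.mem_nodes x).1 hx).2.1, ht.nodup, h1⟩,
        ?_, ?_, ?_⟩
      · intro x
        simp only [Fo.nodes, Set.mem_insert_iff, Set.mem_union, ht.mem_nodes, h2, List.mem_cons,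
          exists_eq_or_imp]
        constructor
        · rintro (rfl | h | h)
          · exact Or.inl ⟨htd.2.1, List.prefix_rfl⟩
          · exact Or.inl ⟨h.1, h.2.1⟩
          · exact Or.inr h
        · rintro (h | h)
          · by_cases hx : x = t
            · exact Or.inl hx
            · exact Or.inr (Or.inl ⟨h.1, h.2, hx⟩)
          · exact Or.inr (Or.inr h)
      · intro x
        simp [Fo.tops, h3]
      · intro x y
        simp only [Fo.child, Fo.nodes, Set.mem_insert_iff, Set.mem_union, ht.mem_tops, ht.child,
          h4]
        constructor
        · rintro (⟨rfl, h⟩ | ⟨h, h'⟩ | ⟨h, h'⟩)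
          · exact ⟨Or.inl rfl, h⟩
          · exact ⟨Or.inr (Or.inl h), h'⟩
          · exact ⟨Or.inr (Or.inr h), h'⟩
        · rintro ⟨rfl | h | h, h'⟩
          · exact Or.inl ⟨rfl, h'⟩
          · exact Or.inr (Or.inl ⟨h, h'⟩)
          · exact Or.inr (Or.inr ⟨h, h'⟩)
  obtain ⟨h1, h2, h3, h4⟩ := key
  refine ⟨h1, fun x => ?_, fun x => (h3 x).trans (hmem x), h4⟩
  rw [h2]
  constructor
  · rintro ⟨t, ht, hx, htx⟩
    obtain ⟨-, -, i, rfl⟩ := hch t ht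
    refine ⟨hx, (List.prefix_append _ _).trans htx, ?_⟩
    rintro rfl
    have := htx.length_le
    simp at this
  · rintro ⟨hx, ⟨r, rfl⟩, hne⟩
    cases r with
    | nil => simp at hne
    | cons i r =>
      have hp : s ++ [i] <+: s ++ i :: r := ⟨r, by simp⟩
      exact ⟨s ++ [i], (hmem _).2 ⟨T.prefix_closed hx (List.prefix_append _ _),
        T.prefix_closed hx hp, i, rfl⟩, hx, hp⟩

/-- `K` assigns to each node of `T` the behaviour of its subtree, as a function of the state of
the forest to its right, when siblings are sorted by behaviour. -/
def Local (T : UTree A) (ks : List (Q → Q)) (q0 : Q) (δ : A → Q → Q → Q) (K : Node → Q → Q) :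
    Prop :=
  ∀ x ∈ T.dom, K x = δ (T.label x) (prodA ks q0 (cnt T K x))

theorem exists_presents {T : UTree A} {ks : List (Q → Q)} {q0 : Q} {δ : A → Q → Q → Q}
    {K : Node → Q → Q} (hks : ks.Nodup) (hall : ∀ k, k ∈ ks) (hK : Local T ks q0 δ K) (n : ℕ) :
    ∀ s ∈ T.dom, (∀ t ∈ T.dom, s <+: t → t.length ≤ s.length + n) →
      ∃ g, Presents T s g ∧ g.eval q0 δ T.label = prodA ks q0 (cnt T K s) := by
  classical
  induction n with
  | zero =>
    intro s hs hlen
    have hno : ∀ t, ¬ T.childR s t := by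
      rintro t ⟨-, ht, i, rfl⟩
      have := hlen _ ht (List.prefix_append _ _)
      simp at this
    refine ⟨.nil, presents_assemble (C := fun _ => .nil) List.nodup_nil (by simpa using hno)
      (by simp), ?_⟩
    have h0 : ∀ k, cnt T K s k = 0 := fun k => by simp [cnt, hno]
    rw [prodA_congr ks q0 (n' := fun _ => 0) fun k => by rw [h0]]
    simp only [Fo.eval, prodA, Function.iterate_zero, id]
    clear hks hall hK h0
    induction ks with
    | nil => rfl
    | cons k ks ih => rwa [List.foldr_cons]
  | succ n ih =>
    intro s hs hlen
    have hex : ∀ t, ∃ g, T.childR s t →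
        Presents T t g ∧ g.eval q0 δ T.label = prodA ks q0 (cnt T K t) := by
      intro t
      by_cases ht : T.childR s t
      · obtain ⟨g, hg⟩ := ih t ht.2.1 fun u hu htu => by
          obtain ⟨-, -, i, rfl⟩ := ht
          have := hlen u hu ((List.prefix_append _ _).trans htu)
          simp only [List.length_append, List.length_singleton]
          omega
        exact ⟨g, fun _ => hg⟩
      · exact ⟨.nil, fun h => absurd h ht⟩
    choose C hC using hex
    obtain ⟨l, h1, h2, h3⟩ := exists_sorted (T.dom.filter fun t => T.childR s t) K ks hks q0
    have hmem : ∀ t, t ∈ l ↔ T.childR s t := fun t => by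
      rw [h2]
      simp only [Finset.mem_filter, hall, and_true]
      exact ⟨fun h => h.2, fun h => ⟨h.2.1, h⟩⟩
    refine ⟨assemble C l, presents_assemble h1 hmem fun t ht => (hC t ((hmem t).1 ht)).1, ?_⟩
    rw [eval_assemble q0 δ T.label C K l fun t ht => ?_, h3]
    · refine prodA_congr ks q0 fun k => ?_
      congr 1
      rw [cnt, ← Set.ncard_coe_finset]
      congr 1
      ext t
      simp only [Finset.coe_filter, Finset.mem_filter]
      exact ⟨fun h => ⟨h.1.2, h.2⟩, fun h => ⟨⟨h.1.2.1, h.1⟩, h.2⟩⟩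
    · have ht' := (hmem t).1 ht
      rw [(hC t ht').2, hK t ht'.2.1]

theorem exists_length_bound (T : UTree A) : ∃ M, ∀ t ∈ T.dom, t.length < M := by
  refine ⟨T.dom.sup List.length + 1, fun t ht => Nat.lt_succ_of_le (Finset.le_sup ht)⟩

theorem exists_local (T : UTree A) (ks : List (Q → Q)) (q0 : Q) (δ : A → Q → Q → Q) :
    ∃ K, Local T ks q0 δ K := by
  obtain ⟨M, hM⟩ := exists_length_bound T
  -- `Kf n` is correct on nodes with fewer than `n` levels below them
  let Kf : ℕ → Node → Q → Q := fun n => Nat.rec (fun _ => id)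
    (fun _ K x => δ (T.label x) (prodA ks q0 (cnt T K x))) n
  refine ⟨fun x => Kf (M - x.length) x, fun x hx => ?_⟩
  obtain ⟨m, hm⟩ : ∃ m, M - x.length = m + 1 := ⟨M - x.length - 1, by have := hM x hx; omega⟩
  have e : Kf (M - x.length) x = δ (T.label x) (prodA ks q0 (cnt T (Kf m) x)) := by rw [hm]
  beta_reduce
  rw [e]
  congr 2
  funext k
  unfold cnt
  congr 1
  ext y
  refine and_congr_right fun hy => ?_
  obtain ⟨-, -, i, rfl⟩ := hy
  have : M - (x ++ [i]).length = m := by simp; omega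
  beta_reduce
  rw [this]

end sorting

/-- Membership in the language of an invariant sentence is decided by a finite automaton reading
the siblings in the order of their behaviours; only the number of children of each behaviour
matters. -/
theorem exists_sorted_automaton {φ : MSO A} {L : Set (UTree A)} (hinv : NsInvariant φ)
    (hφ : φ.DefinesB L) :
    ∃ (Q : Type) (_ : Finite Q) (q0 : Q) (δ : A → Q → Q → Q) (acc : A → Q → Prop)
      (ks : List (Q → Q)), ∀ (T : UTree A) (K : Node → Q → Q), Local T ks q0 δ K →
        (T ∈ L ↔ acc (T.label []) (prodA ks q0 (cnt T K []))) := by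
  classical
  obtain ⟨R, ⟨Q, hQ, q0, δ, acc, hR⟩, hφR⟩ := exists_automaton φ
  cases nonempty_fintype Q
  refine ⟨Q, hQ, q0, fun a => δ (a, ∅, ∅), fun a q => acc (a, Set.univ, ∅) q,
    (Finset.univ : Finset (Q → Q)).toList, fun T K hK => ?_⟩
  obtain ⟨M, hM⟩ := exists_length_bound T
  obtain ⟨g, hg, hge⟩ := exists_presents (Finset.nodup_toList _) (by simp) hK M [] T.nil_mem
    fun t ht _ => by have := hM t ht; simp; omega
  obtain ⟨lab, hiso, hlab, heval⟩ := exists_uiso hg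
  have hd := displays_realize g lab
  rw [hφ T (fun _ => []) (fun _ => ∅), hinv T _ hiso _ (fun _ => []) _ (fun _ => ∅),
    hφR _ _ _ _ hd (fun _ => (realize g lab).nil_mem), hR _ _ hd.wf]
  have e0 : ann (realize g lab) (fun _ => []) (fun _ => ∅) [] = (T.label [], Set.univ, ∅) := by
    simp [ann, realize, hlab]
  have e1 : (g.num [] 0).eval q0 δ (ann (realize g lab) (fun _ => []) fun _ => ∅) =
      (g.num [] 0).eval q0 (fun a => δ (a, ∅, ∅)) lab := by
    have key : ∀ f : Fo Node, [] ∉ f.nodes →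
        f.eval q0 δ (ann (realize g lab) (fun _ => []) fun _ => ∅) =
          f.eval q0 (fun a => δ (a, ∅, ∅)) lab := by
      intro f
      induction f with
      | nil => exact fun _ => rfl
      | cons a c s ihc ihs =>
        intro hn
        simp only [Fo.nodes, Set.mem_insert_iff, Set.mem_union, not_or] at hn
        simp only [Fo.eval]
        rw [ihc hn.2.1, ihs hn.2.2]
        have : ann (realize g lab) (fun _ => []) (fun _ => ∅) a = (lab a, ∅, ∅) := by
          simp [ann, realize, hn.1]
        rw [this]
    exact key _ (nil_notMem_num g)
  rw [e0, e1, heval, hge]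

/-! ### Counting up to a threshold and a period -/

theorem exists_period (Q : Type) [Finite Q] :
    ∃ N p : ℕ, 0 < p ∧ ∀ k : Q → Q, k^[N + p] = k^[N] := by
  obtain ⟨i, j, hij, h⟩ :=
    Finite.exists_ne_map_eq_of_infinite fun (n : ℕ) (k : Q → Q) => k^[n]
  rcases lt_or_gt_of_ne hij with hlt | hlt
  · exact ⟨i, j - i, by omega, fun k => by
      rw [Nat.add_sub_cancel' hlt.le]; exact (congrFun h k).symm⟩
  · exact ⟨j, i - j, by omega, fun k => by
      rw [Nat.add_sub_cancel' hlt.le]; exact congrFun h k⟩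

/-- `n` and its representative `c` agree up to the threshold `N` and the period `p`. -/
def Cg (N p n c : ℕ) : Prop := n = c ∨ (N ≤ c ∧ ∃ t, n = c + p * t)

theorem exists_Cg (N : ℕ) {p : ℕ} (hp : 0 < p) (n : ℕ) : ∃ c : Fin (N + p), Cg N p n c := by
  by_cases h : n < N
  · exact ⟨⟨n, by omega⟩, Or.inl rfl⟩
  · have h1 := Nat.mod_lt (n - N) hp
    have h2 := Nat.mod_add_div (n - N) p
    exact ⟨⟨N + (n - N) % p, by omega⟩, Or.inr ⟨by simp, (n - N) / p, by
      show n = N + (n - N) % p + p * ((n - N) / p)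
      omega⟩⟩

theorem iterate_Cg {Q : Type} {N p n c : ℕ} {k : Q → Q} (hk : k^[N + p] = k^[N])
    (h : Cg N p n c) : k^[n] = k^[c] := by
  rcases h with rfl | ⟨hN, t, rfl⟩
  · rfl
  · induction t with
    | zero => rfl
    | succ t ih =>
      have e : c + p * (t + 1) = (c - N + p * t) + (N + p) := by
        rw [Nat.mul_succ]; omega
      rw [e, Function.iterate_add, hk, ← Function.iterate_add, ← ih]
      congr 1
      omega

/-! ### Counting in `MSOmod` -/

theorem defMod_modq (p X : ℕ) : DefMod (A := A) fun _ _ V => (V X).ncard % (p + 2) = 0 :=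
  ⟨.modq p X, 0, fun _ _ _ _ _ => Iff.rfl⟩

/-- A definable constraint on cardinalities may be shifted by one, by removing an element of the
set; the set variable `z + 1` holds the smaller set. -/
theorem defMod_succ {R : ℕ → Prop} (h : ∀ z, DefMod (A := A) fun _ _ V => R (V z).ncard) (z : ℕ) :
    DefMod (A := A) fun _ _ V => ∃ n, (V z).ncard = n + 1 ∧ R n := by
  have hD := defClass_Mod (A := A)
  refine hD.congr (z + 1) (hD.exSO (z + 1) (hD.exFO 0 (hD.and (hD.not (hD.mem (z + 1) 0))
    (hD.and (h (z + 1)) (hD.allFO 1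
      (hD.iff (hD.mem z 1) (hD.or (hD.mem (z + 1) 1) (hD.eq 1 0)))))))) fun T v V _ hV => ?_
  have hVz : V z ⊆ ↑T.dom := hV z (by omega)
  have hz : ∀ S, Function.update V (z + 1) S z = V z := fun S =>
    Function.update_of_ne (by omega) _ _
  simp only [Function.update_self, hz, ne_eq, zero_ne_one, not_false_eq_true,
    Function.update_of_ne]
  constructor
  · rintro ⟨S, hS, y, hy, hyS, hR, hall⟩
    have e : V z = insert y S := by
      ext x
      constructor
      · intro hx
        rcases (hall x (hVz hx)).1 hx with hx | hx
        · exact Or.inr hx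
        · exact Or.inl hx
      · rintro (rfl | hx)
        · exact (hall _ hy).2 (Or.inr rfl)
        · exact (hall x (hS hx)).2 (Or.inl hx)
    exact ⟨S.ncard, by
      rw [e, Set.ncard_insert_of_notMem hyS (T.dom.finite_toSet.subset hS)], hR⟩
  · rintro ⟨n, hn, hR⟩
    obtain ⟨y, S, hyS, e, hc⟩ := Set.eq_insert_of_ncard_eq_succ hn
    refine ⟨S, fun x hx => hVz (e ▸ Or.inr hx), y, hVz (e ▸ Or.inl rfl), hyS, hc ▸ hR, ?_⟩
    intro x _
    rw [← e]
    exact or_comm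

theorem defMod_ncard_add {R : ℕ → Prop} (h : ∀ z, DefMod (A := A) fun _ _ V => R (V z).ncard)
    (c z : ℕ) : DefMod (A := A) fun _ _ V => ∃ n, (V z).ncard = n + c ∧ R n := by
  have hD := defClass_Mod (A := A)
  induction c generalizing z with
  | zero => exact hD.congr' (h z) fun T v V => by simp
  | succ c ih =>
    refine hD.congr' (defMod_succ (R := fun k => ∃ n, k = n + c ∧ R n) ih z) fun T v V => ?_
    constructor
    · rintro ⟨_, h1, n, rfl, hR⟩
      exact ⟨n, h1, hR⟩
    · rintro ⟨n, h1, hR⟩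
      exact ⟨n + c, h1, n, rfl, hR⟩

theorem defMod_ncard_zero (z : ℕ) : DefMod (A := A) fun _ _ V => (V z).ncard = 0 := by
  have hD := defClass_Mod (A := A)
  refine hD.congr (z + 1) (hD.allFO 0 (hD.not (hD.mem z 0))) fun T v V _ hV => ?_
  have hVz : V z ⊆ ↑T.dom := hV z (by omega)
  rw [Set.ncard_eq_zero (T.dom.finite_toSet.subset hVz), Set.eq_empty_iff_forall_notMem]
  simp only [Function.update_self]
  exact ⟨fun h x hx => h x (hVz hx) hx, fun h x _ => h x⟩

theorem defMod_ncard_dvd {p : ℕ} (hp : 0 < p) (z : ℕ) :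
    DefMod (A := A) fun _ _ V => ∃ t, (V z).ncard = p * t := by
  have hD := defClass_Mod (A := A)
  match p, hp with
  | 1, _ => exact hD.congr' hD.true fun T v V => by simp
  | p + 2, _ => exact hD.congr' (defMod_modq p z) fun T v V =>
      (Nat.dvd_iff_mod_eq_zero ..).symm

theorem defMod_Cg (N : ℕ) {p : ℕ} (hp : 0 < p) (c z : ℕ) :
    DefMod (A := A) fun _ _ V => Cg N p (V z).ncard c := by
  have hD := defClass_Mod (A := A)
  refine hD.congr' (hD.or (defMod_ncard_add (R := (· = 0)) defMod_ncard_zero c z)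
    (hD.and (hD.const (N ≤ c))
      (defMod_ncard_add (R := fun n => ∃ t, n = p * t) (defMod_ncard_dvd hp) c z)))
    fun T v V => or_congr (by simp) (and_congr_right fun _ => ?_)
  constructor
  · rintro ⟨_, h, t, rfl⟩
    exact ⟨t, by omega⟩
  · rintro ⟨t, h⟩
    exact ⟨_, by omega, t, rfl⟩

theorem childR_iff {T : UTree A} {x y : Node} : T.childR x y ↔
    T.descR x y ∧ x ≠ y ∧ ∀ z ∈ T.dom, T.descR x z ∧ T.descR z y → z = x ∨ z = y := by
  constructor
  · rintro ⟨hx, hy, i, rfl⟩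
    refine ⟨⟨hx, hy, List.prefix_append _ _⟩, by simp, ?_⟩
    rintro z - ⟨⟨-, -, h1⟩, ⟨-, -, h2⟩⟩
    have l1 := h1.length_le
    have l2 := h2.length_le
    simp only [List.length_append, List.length_singleton] at l2
    by_cases h : z.length = x.length
    · exact Or.inl (h1.eq_of_length h.symm).symm
    · exact Or.inr (h2.eq_of_length (by simp; omega))
  · rintro ⟨⟨hx, hy, r, rfl⟩, hne, h⟩
    cases r with
    | nil => simp at hne
    | cons i r =>
      have hp : x ++ [i] <+: x ++ i :: r := ⟨r, by simp⟩
      have hz := T.prefix_closed hy hp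
      rcases h _ hz ⟨⟨hx, hz, List.prefix_append _ _⟩, ⟨hz, hy, hp⟩⟩ with h | h
      · simp at h
      · exact ⟨hx, hy, i, h.symm⟩

theorem defMod_childR : DefMod (A := A) fun T v _ => T.childR (v 0) (v 1) := by
  have hD := defClass_Mod (A := A)
  refine hD.congr' (hD.and (hD.desc 0 1) (hD.and (hD.not (hD.eq 0 1))
    (hD.allFO 2 (hD.imp (hD.and (hD.desc 0 2) (hD.desc 2 1)) (hD.or (hD.eq 2 0) (hD.eq 2 1))))))
    fun T v V => ?_
  rw [childR_iff]
  simp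

/-- Definable constraints on the number of children of a node that belong to a given set. -/
theorem defMod_children {R : ℕ → Prop} (h : ∀ z, DefMod (A := A) fun _ _ V => R (V z).ncard)
    (k : ℕ) : DefMod (A := A) fun T v V => R {y | T.childR (v 0) y ∧ y ∈ V k}.ncard := by
  have hD := defClass_Mod (A := A)
  refine hD.congr' (hD.exSO (k + 1) (hD.and (h (k + 1)) (hD.allFO 1 (hD.iff (hD.mem (k + 1) 1)
    (hD.and defMod_childR (hD.mem k 1)))))) fun T v V => ?_
  have hk : ∀ S, Function.update V (k + 1) S k = V k := fun S =>
    Function.update_of_ne (by omega) _ _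
  simp only [Function.update_self, hk, ne_eq, zero_ne_one, not_false_eq_true,
    Function.update_of_ne]
  constructor
  · rintro ⟨S, hS, hR, hall⟩
    have e : {y | T.childR (v 0) y ∧ y ∈ V k} = S := by
      ext y
      exact ⟨fun hy => (hall y hy.1.2.1).2 hy, fun hy => (hall y (hS hy)).1 hy⟩
    rwa [e]
  · intro hR
    exact ⟨_, fun y hy => hy.1.2.1, hR, fun y _ => Iff.rfl⟩

/-! ### From invariant sentences to `MSOmod` -/

/-- The label of the node `v 0` is `a`, and for each behaviour `k` the number of its children in
the set `V (e k)` is represented by `c k`. -/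
def NodeType {κ : Type} (N p : ℕ) (e : κ → ℕ) (a : A) (c : κ → Fin (N + p)) : ValProp A :=
  fun T v V => (v 0 ∈ T.dom ∧ T.label (v 0) = a) ∧
    ∀ k, Cg N p {y | T.childR (v 0) y ∧ y ∈ V (e k)}.ncard (c k)

theorem defMod_nodeType {κ : Type} [Finite κ] (N : ℕ) {p : ℕ} (hp : 0 < p) (e : κ → ℕ) (a : A)
    (c : κ → Fin (N + p)) : DefMod (NodeType N p e a c) :=
  have hD := defClass_Mod (A := A)
  hD.and (hD.lab a 0) (hD.all fun k =>
    defMod_children (R := fun n => Cg N p n (c k)) (fun z => defMod_Cg N hp (c k) z) (e k))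

/-- An invariant sentence is equivalent to an `MSOmod` sentence, which guesses the behaviour of
every node and checks locally that the guess is correct and accepting. -/
theorem mod_of_invariant [Finite A] {φ : MSO A} {L : Set (UTree A)} (hinv : NsInvariant φ)
    (hφ : φ.DefinesB L) : ∃ ψ : MSOmod A, ψ.DefinesB L := by
  classical
  obtain ⟨Q, hQ, q0, δ, acc, ks, hL⟩ := exists_sorted_automaton hinv hφ
  obtain ⟨N, p, hp, hper⟩ := exists_period Q
  obtain ⟨m, ⟨e⟩⟩ := Finite.exists_equiv_fin (Q → Q)
  have hD := defClass_Mod (A := A)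
  let st : ((Q → Q) → Fin (N + p)) → Q := fun c => prodA ks q0 fun k => (c k : ℕ)
  let nt : A → ((Q → Q) → Fin (N + p)) → ValProp A := NodeType N p fun k => (e k : ℕ)
  have hnt : ∀ a c, DefMod (nt a c) := fun a c => defMod_nodeType N hp _ a c
  have hpart : DefMod (A := A) fun T v W => ∀ x ∈ T.dom, ∃ k, x ∈ W (e k) ∧
      ∀ k', x ∈ W (e k') → k' = k :=
    hD.congr' (hD.allFO 0 (hD.ex fun k => hD.and (hD.mem (e k) 0)
      (hD.all fun k' => hD.imp (hD.mem (e k') 0) (hD.const (k' = k))))) fun T v W => by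
        simp only [Function.update_self]
  have hloc : DefMod (A := A) fun T v W => ∀ x ∈ T.dom, ∀ a c,
      nt a c T (Function.update v 0 x) W → x ∈ W (e (δ a (st c))) :=
    hD.congr' (hD.allFO 0 (hD.all fun a => hD.all fun c => hD.imp (hnt a c)
      (hD.mem (e (δ a (st c))) 0))) fun T v W => by simp only [Function.update_self]
  have hroot : DefMod (A := A) fun T v W => ∃ x ∈ T.dom, (∀ y ∈ T.dom, T.descR x y) ∧
      ∃ a c, acc a (st c) ∧ nt a c T (Function.update v 0 x) W :=
    hD.congr' (hD.exFO 0 (hD.and (hD.allFO 1 (hD.desc 0 1)) (hD.ex fun a => hD.ex fun c =>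
      hD.and (hD.const (acc a (st c))) (hnt a c)))) fun T v W => by
        simp
  refine DefMod.definesB (hD.congr' (hD.exSOs 0 m (hD.and hpart (hD.and hloc hroot)))
    fun T v V => ?_)
  -- the meaning of `nt` when the sets `W (e k)` are the classes of a behaviour assignment `K`
  have hsem : ∀ (K : Node → Q → Q) (W : ℕ → Set Node),
      (∀ x ∈ T.dom, ∀ k, x ∈ W (e k) ↔ K x = k) → ∀ x ∈ T.dom, ∀ a c,
      (nt a c T (Function.update v 0 x) W ↔
        T.label x = a ∧ ∀ k, Cg N p (cnt T K x k) (c k)) := by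
    intro K W hKW x hx a c
    have : ∀ k, {y | T.childR x y ∧ y ∈ W (e k)} = {y | T.childR x y ∧ K y = k} := fun k => by
      ext y
      exact and_congr_right fun hy => hKW y hy.2.1 k
    simp only [nt, NodeType, Function.update_self, this, cnt, hx, true_and]
  have hst : ∀ {n : (Q → Q) → ℕ} {c : (Q → Q) → Fin (N + p)}, (∀ k, Cg N p (n k) (c k)) →
      prodA ks q0 n = st c := fun h => prodA_congr ks q0 fun k => iterate_Cg (hper k) (h k)
  constructor
  · rintro ⟨W, -, -, h1, h2, x, hx, hxr, a, c, hacc, hnode⟩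
    have h1' : ∀ x, ∃ k, x ∈ T.dom → x ∈ W (e k) ∧ ∀ k', x ∈ W (e k') → k' = k := fun x => by
      by_cases hx : x ∈ T.dom
      · obtain ⟨k, hk⟩ := h1 x hx
        exact ⟨k, fun _ => hk⟩
      · exact ⟨id, fun h => absurd h hx⟩
    choose K hK using h1'
    have hKW : ∀ x ∈ T.dom, ∀ k, x ∈ W (e k) ↔ K x = k := fun x hx k =>
      ⟨fun h => ((hK x hx).2 k h).symm, fun h => h ▸ (hK x hx).1⟩
    have hlocal : Local T ks q0 δ K := by
      intro x hx
      choose c hc using fun k => exists_Cg N hp (cnt T K x k)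
      rw [hst hc]
      exact (hKW x hx _).1 (h2 x hx (T.label x) c ((hsem K W hKW x hx _ _).2 ⟨rfl, hc⟩))
    obtain rfl : x = [] := List.prefix_nil.1 (hxr [] T.nil_mem).2.2
    obtain ⟨rfl, hc⟩ := (hsem K W hKW _ hx _ _).1 hnode
    rwa [hL T K hlocal, hst hc]
  · intro hT
    obtain ⟨K, hK⟩ := exists_local T ks q0 δ
    let W : ℕ → Set Node := fun i =>
      if h : i < m then {x | x ∈ T.dom ∧ K x = e.symm ⟨i, h⟩} else V i
    have hW : ∀ k, W (e k) = {x | x ∈ T.dom ∧ K x = k} := fun k => by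
      simp only [W, (e k).2, dif_pos, Fin.eta, Equiv.symm_apply_apply]
    have hKW : ∀ x ∈ T.dom, ∀ k, x ∈ W (e k) ↔ K x = k := fun x hx k => by
      rw [hW]; exact ⟨fun h => h.2, fun h => ⟨hx, h⟩⟩
    refine ⟨W, fun i _ hi => ?_, fun i hi => ?_, fun x hx => ?_, fun x hx a c hn => ?_, ?_⟩
    · have hi' : i < m := by omega
      simp only [W, hi', dif_pos]
      exact fun x hx => hx.1
    · have hi' : ¬ i < m := by omega
      simp only [W, hi', dif_neg, not_false_eq_true]
    · exact ⟨K x, (hKW x hx _).2 rfl, fun k' h => ((hKW x hx _).1 h).symm⟩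
    · obtain ⟨rfl, hc⟩ := (hsem K W hKW x hx _ _).1 hn
      rw [hKW x hx, ← hst hc]
      exact hK x hx
    · choose c hc using fun k => exists_Cg N hp (cnt T K [] k)
      refine ⟨[], T.nil_mem, fun y hy => ⟨T.nil_mem, hy, List.nil_prefix⟩, T.label [], c, ?_,
        (hsem K W hKW _ T.nil_mem _ _).2 ⟨rfl, hc⟩⟩
      rw [← hst hc]
      exact (hL T K hK).1 hT

end helpers

/-- Over unordered unranked Σ-trees, the `≺_ns`-invariant
Boolean queries (defined by order-invariant MSO sentences over ordered trees)
are precisely the Boolean queries definable in MSO_mod. -/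
theorem invariant_mso_iff_msomod (A : Type) [Fintype A] (L : Set (UTree A)) :
    (∃ φ : MSO A, NsInvariant φ ∧ φ.DefinesB L) ↔
      ∃ ψ : MSOmod A, ψ.DefinesB L := by
  exact ⟨fun ⟨_, hinv, hφ⟩ => mod_of_invariant hinv hφ,
    fun ⟨_, hψ⟩ => invariant_of_mod hψ⟩

end UnrankedTrees
end
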